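/- arXiv:2310.14473 — 3 statements merged into one kernel-verified Lean document; each statement's English description precedes it below -/
import Mathlib

section
/- Assume [A]. Suppose that for each x the map y ↦ c₂(x,y) is strictly convex, that c₁(x) ≠ c₂(x,x) for μ-a.e. x, and that ν is absolutely continuous with respect to Lebesgue measure. If P_c = P̄_c (where P̄_c is the relaxed value for the vector cost (c₁(x), c₂(x,y)) with L = 2), then every optimal pair (π, μ₁) for the primal problem P_c satisfies μ₁ ⊥ (μ − μ₁), i.e., the optimal exercise is nonrandomized. -/
open MeasureTheory ProbabilityTheory Set
open scoped ENNReal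

noncomputable section

/-- Convex order between finite-first-moment probability measures on `ℝ`:
`μ ≼_c ν` iff `μ(f) ≤ ν(f)` for every convex `f`. -/
def ConvexOrder (μ ν : Measure ℝ) : Prop :=
  ∀ f : ℝ → ℝ, ConvexOn ℝ Set.univ f → Integrable f ν →
    Integrable f μ ∧ ∫ x, f x ∂μ ≤ ∫ x, f x ∂ν

/-- `κ` is a disintegration kernel of a martingale transport from `μ` to `ν`;
the associated transport plan is `π = μ ⊗ₘ κ ∈ ℳ(μ,ν)`. -/
def MartKernel (μ ν : Measure ℝ) (κ : Kernel ℝ ℝ) : Prop :=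
  IsMarkovKernel κ ∧ (μ ⊗ₘ κ).map Prod.snd = ν ∧
    ∀ᵐ x ∂μ, Integrable id (κ x) ∧ ∫ y, y ∂(κ x) = x

/-- The set `ℳ(μ,ν)` of martingale transports from `μ` to `ν`. -/
def MT (μ ν : Measure ℝ) : Set (Measure (ℝ × ℝ)) :=
  {π | ∃ κ : Kernel ℝ ℝ, MartKernel μ ν κ ∧ π = μ ⊗ₘ κ}

/-- Membership in `ℳ̄`: `γ` is a nonnegative finite measure which is zero or a scalar
multiple of a martingale transport between its own marginals. -/
def IsSubMart (γ : Measure (ℝ × ℝ)) : Prop :=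
  IsFiniteMeasure γ ∧ (γ = 0 ∨ ∃ κ : Kernel ℝ ℝ, IsMarkovKernel κ ∧
    γ.map Prod.fst ⊗ₘ κ = γ ∧
    ∀ᵐ x ∂(γ.map Prod.fst), Integrable id (κ x) ∧ ∫ y, y ∂(κ x) = x)

/-- Membership in `ℳ_L(μ,ν)`. -/
def MLfeasible (μ ν : Measure ℝ) {L : ℕ} (γ : Fin L → Measure (ℝ × ℝ)) : Prop :=
  (∀ l, IsSubMart (γ l)) ∧ (∑ l, γ l) ∈ MT μ ν

/-- The relaxed value `P̄_c` for a vector cost `c = (c_1, …, c_L)`. -/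
def RelaxedValue (μ ν : Measure ℝ) {L : ℕ} (c : Fin L → ℝ × ℝ → ℝ) : ℝ :=
  sSup {r | ∃ γ : Fin L → Measure (ℝ × ℝ), MLfeasible μ ν γ ∧
    r = ∑ l, ∫ p, c l p ∂(γ l)}

/-- The primal value `P_c` for an American option payoff `(c₁(x), c₂(x,y))`. -/
def PrimalValue (μ ν : Measure ℝ) (c₁ : ℝ → ℝ) (c₂ : ℝ × ℝ → ℝ) : ℝ :=
  sSup {r | ∃ (κ : Kernel ℝ ℝ) (μ₁ : Measure ℝ), MartKernel μ ν κ ∧ μ₁ ≤ μ ∧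
    r = ∫ p, c₁ p.1 ∂(μ₁ ⊗ₘ κ) + ∫ p, c₂ p ∂((μ - μ₁) ⊗ₘ κ)}

/-- Dual feasibility: membership of `(φ, ψ, θ)` in `Ψ̄_c`. -/
def DualFeasible (μ ν : Measure ℝ) {L : ℕ} (c : Fin L → ℝ × ℝ → ℝ)
    (φ ψ : ℝ → ℝ) (θ : Fin L → ℝ → ℝ) : Prop :=
  Continuous φ ∧ Integrable φ μ ∧ Continuous ψ ∧ Integrable ψ ν ∧
    (∀ l, Continuous (θ l) ∧ ∃ M, ∀ x, |θ l x| ≤ M) ∧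
    ∀ l, ∀ x y : ℝ, c l (x, y) ≤ φ x + ψ y + θ l x * (y - x)

/-- The dual value `D̄_c`. -/
def DualValue (μ ν : Measure ℝ) {L : ℕ} (c : Fin L → ℝ × ℝ → ℝ) : ℝ :=
  sInf {r | ∃ φ ψ θ, DualFeasible μ ν c φ ψ θ ∧ r = ∫ x, φ x ∂μ + ∫ y, ψ y ∂ν}

/-- Assumption [A'] for a vector cost. -/
def AssumpA' (μ ν : Measure ℝ) {L : ℕ} (c : Fin L → ℝ × ℝ → ℝ) : Prop :=
  IsProbabilityMeasure μ ∧ IsProbabilityMeasure ν ∧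
  Integrable id μ ∧ Integrable id ν ∧
  (∀ l, Continuous (c l)) ∧ ConvexOrder μ ν ∧
  ∃ v w : ℝ → ℝ, Continuous v ∧ Continuous w ∧ Integrable v μ ∧ Integrable w ν ∧
    ∀ x y : ℝ, ∑ l, |c l (x, y)| ≤ v x + w y

/-- Assumption [A] for an American payoff `(c₁, c₂)`. -/
def AssumpA (μ ν : Measure ℝ) (c₁ : ℝ → ℝ) (c₂ : ℝ × ℝ → ℝ) : Prop :=
  IsProbabilityMeasure μ ∧ IsProbabilityMeasure ν ∧
  Integrable id μ ∧ Integrable id ν ∧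
  Continuous c₁ ∧ Continuous c₂ ∧ ConvexOrder μ ν ∧
  ∃ v w : ℝ → ℝ, Continuous v ∧ Continuous w ∧ Integrable v μ ∧ Integrable w ν ∧
    ∀ x y : ℝ, |c₁ x| + |c₂ (x, y)| ≤ v x + w y

/-- The potential function `u_ξ`. -/
def potential (ξ : Measure ℝ) (x : ℝ) : ℝ := ∫ y, |x - y| ∂ξ

/-- `(μ, ν)` is an irreducible pair. -/
def IrreduciblePair (μ ν : Measure ℝ) : Prop :=
  IsOpen {x | potential μ x < potential ν x} ∧
  IsConnected {x | potential μ x < potential ν x} ∧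
  μ {x | potential μ x < potential ν x} = μ Set.univ

/-!
Suppose `μ₁` and `μ₂ = μ - μ₁` have a common part `l`, and let `κ` be the kernel of an optimal plan.
Then `η = l ⊗ κ` lies below both `μ₁ ⊗ κ` and `μ₂ ⊗ κ`, so mass of `η` can be rearranged between
exercising early and waiting.

If from one starting point `κ` reaches `y₁ < y₂` and from some starting point it reaches
`y ∈ (y₁, y₂)`, let the early part go to `y` instead of `y₁, y₂`, and let the waiting part go to
`y₁, y₂` instead of `y`, with barycentric weights. Marginals and the martingale property persist,
the early payoff does not change, and the waiting payoff strictly increases by strict convexity.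
Hence by optimality the second marginal `ρ` of `η` does not charge the interval between two points
reached from the same `x`. As `ρ ≤ ν` has no atoms, almost every `y` satisfies `ρ (y, z) > 0` for
all `z > y`, so `κ x` is a point mass, at `x` by the martingale property. Finally, moving `η` over a
set of starting points from one part to the other shows that `c₁ x = c₂ (x, x)` for `l`-almost every
`x`; therefore `l = 0`.
-/

section SubCoupling

variable {α β : Type*} [MeasurableSpace α] [MeasurableSpace β]

/-- `γ` transports a part of `μ` to a part of `ν`; this is all that integrability of the payoffs
and of the displacement `y - x` needs. -/
structure SubCoupling (μ : Measure α) (ν : Measure β) (γ : Measure (α × β)) : Prop where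
  fst_le : γ.fst ≤ μ
  snd_le : γ.snd ≤ ν

namespace SubCoupling

variable {μ : Measure α} {ν : Measure β} {γ γ' : Measure (α × β)}

lemma mono (hγ : SubCoupling μ ν γ) (hle : γ' ≤ γ) : SubCoupling μ ν γ' :=
  ⟨(Measure.fst_mono hle).trans hγ.fst_le, (Measure.snd_mono hle).trans hγ.snd_le⟩

lemma isFiniteMeasure [IsFiniteMeasure μ] (hγ : SubCoupling μ ν γ) : IsFiniteMeasure γ :=
  ⟨by simpa only [Measure.fst_univ] using (hγ.fst_le univ).trans_lt (measure_lt_top μ univ)⟩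

lemma integrable_of_abs_le (hγ : SubCoupling μ ν γ) {v : α → ℝ} {w : β → ℝ} (hv : Integrable v μ)
    (hw : Integrable w ν) {f : α × β → ℝ} (hf : AEStronglyMeasurable f γ)
    (hfvw : ∀ x y, |f (x, y)| ≤ v x + w y) : Integrable f γ :=
  (((hv.mono_measure hγ.fst_le).comp_measurable measurable_fst).add
    ((hw.mono_measure hγ.snd_le).comp_measurable measurable_snd)).mono' hf
      (ae_of_all _ fun p => hfvw p.1 p.2)

lemma recombine {Ω : Type*} [MeasurableSpace Ω] {N : Measure Ω} {X X' : Ω → α} {Y Y' : Ω → β}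
    (hX : Measurable X) (hX' : Measurable X') (hY : Measurable Y) (hY' : Measurable Y')
    (h : SubCoupling μ ν (N.map fun ω => (X ω, Y ω)))
    (h' : SubCoupling μ ν (N.map fun ω => (X' ω, Y' ω))) :
    SubCoupling μ ν (N.map fun ω => (X ω, Y' ω)) where
  fst_le := by simpa only [Measure.fst_map_prodMk, hY, hY'] using h.fst_le
  snd_le := by simpa only [Measure.snd_map_prodMk, hX, hX'] using h'.snd_le

lemma integrable_displacement {μ ν : Measure ℝ} {γ : Measure (ℝ × ℝ)} (hγ : SubCoupling μ ν γ)
    (hμ : Integrable id μ) (hν : Integrable id ν) :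
    Integrable (fun p : ℝ × ℝ => p.2 - p.1) γ :=
  hγ.integrable_of_abs_le hμ.abs hν.abs (by fun_prop)
    fun x y => (abs_sub y x).trans_eq (add_comm _ _)

end SubCoupling

lemma integral_comp_fst {γ : Measure (α × β)} {f : α → ℝ} (hf : AEStronglyMeasurable f γ.fst) :
    ∫ p, f p.1 ∂γ = ∫ x, f x ∂γ.fst :=
  (integral_map measurable_fst.aemeasurable hf).symm

lemma integral_comp_snd {γ : Measure (α × β)} {f : β → ℝ} (hf : AEStronglyMeasurable f γ.snd) :
    ∫ p, f p.2 ∂γ = ∫ y, f y ∂γ.snd :=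
  (integral_map measurable_snd.aemeasurable hf).symm

lemma compProd_mono_left {μ₁ μ₂ : Measure α} [SFinite μ₁] [SFinite μ₂] (h : μ₁ ≤ μ₂)
    (κ : Kernel α β) [IsSFiniteKernel κ] : μ₁ ⊗ₘ κ ≤ μ₂ ⊗ₘ κ := by
  refine Measure.le_iff.2 fun s hs => ?_
  rw [Measure.compProd_apply hs, Measure.compProd_apply hs]
  exact lintegral_mono' h le_rfl

lemma map_comp_fst_prod_le {E : Type*} [MeasurableSpace E] {μ : Measure α} {ν : Measure β}
    [SFinite ν] (hν : ν univ ≤ 1) {f : α → E} (hf : Measurable f) :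
    (μ.prod ν).map (fun p => f p.1) ≤ μ.map f := by
  rw [← Function.comp_def f, ← Measure.map_map hf measurable_fst, Measure.map_fst_prod]
  exact Measure.map_mono (Measure.le_iff.2 fun s _ => mul_le_of_le_one_left' hν) hf

lemma map_comp_snd_prod_le {E : Type*} [MeasurableSpace E] {μ : Measure α} {ν : Measure β}
    [SFinite ν] (hμ : μ univ ≤ 1) {f : β → E} (hf : Measurable f) :
    (μ.prod ν).map (fun p => f p.2) ≤ ν.map f := by
  rw [← Function.comp_def f, ← Measure.map_map hf measurable_snd, Measure.map_snd_prod]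
  exact Measure.map_mono (Measure.le_iff.2 fun s _ => mul_le_of_le_one_left' hμ) hf

end SubCoupling

section Drift

/-- The displacement `y - x` accumulated by `γ` over the starting points in `B`. A disintegration
of `γ` is a martingale kernel exactly when this vanishes for all `B`, and, unlike the
disintegration, it is additive in `γ`. -/
def drift (γ : Measure (ℝ × ℝ)) (B : Set ℝ) : ℝ := ∫ p in Prod.fst ⁻¹' B, (p.2 - p.1) ∂γ

variable {μ : Measure ℝ} {γ γ' : Measure (ℝ × ℝ)} {B : Set ℝ}

@[simp]
lemma drift_zero : drift 0 B = 0 := by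
  simp only [drift, Measure.restrict_zero, integral_zero_measure]

lemma drift_add (hγ : Integrable (fun p : ℝ × ℝ => p.2 - p.1) γ)
    (hγ' : Integrable (fun p : ℝ × ℝ => p.2 - p.1) γ') :
    drift (γ + γ') B = drift γ B + drift γ' B := by
  simp only [drift, Measure.restrict_add]
  exact integral_add_measure hγ.restrict hγ'.restrict

lemma drift_eq_integral_indicator (hB : MeasurableSet B) :
    drift γ B = ∫ p, (Prod.fst ⁻¹' B).indicator (fun p : ℝ × ℝ => p.2 - p.1) p ∂γ :=
  (integral_indicator (measurable_fst hB)).symm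

lemma drift_sum {ι : Type*} {s : Finset ι} {γ : ι → Measure (ℝ × ℝ)}
    (hγ : ∀ i ∈ s, Integrable (fun p : ℝ × ℝ => p.2 - p.1) (γ i)) (hB : MeasurableSet B) :
    drift (∑ i ∈ s, γ i) B = ∑ i ∈ s, drift (γ i) B := by
  simp only [drift_eq_integral_indicator hB]
  exact integral_finsetSum_measure fun i hi => (hγ i hi).indicator (measurable_fst hB)

lemma ae_mean_eq_iff_drift_eq_zero [IsFiniteMeasure μ] {κ : Kernel ℝ ℝ} [IsMarkovKernel κ]
    (hint : Integrable (fun p : ℝ × ℝ => p.2 - p.1) (μ ⊗ₘ κ)) :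
    (∀ᵐ x ∂μ, Integrable id (κ x) ∧ ∫ y, y ∂(κ x) = x) ↔
      ∀ B, MeasurableSet B → drift (μ ⊗ₘ κ) B = 0 := by
  have hint_kernel : ∀ᵐ x ∂μ, Integrable id (κ x) := by
    filter_upwards [((Measure.integrable_compProd_iff hint.aestronglyMeasurable).1 hint).1]
      with x hx
    exact (hx.add (integrable_const x)).congr (ae_of_all _ fun y => sub_add_cancel y x)
  have hmean : ∀ᵐ x ∂μ, ∫ y, (y - x) ∂(κ x) = ∫ y, y ∂(κ x) - x := by
    filter_upwards [hint_kernel] with x hx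
    simpa using integral_sub hx (integrable_const x)
  have hdrift : ∀ B, MeasurableSet B →
      drift (μ ⊗ₘ κ) B = ∫ x in B, ∫ y, (y - x) ∂(κ x) ∂μ := fun B hB => by
    simpa [drift, prod_univ] using
      Measure.setIntegral_compProd hB MeasurableSet.univ hint.integrableOn
  constructor
  · intro hmart B hB
    rw [hdrift B hB]
    refine integral_eq_zero_of_ae (ae_restrict_of_ae ?_)
    filter_upwards [hmean, hmart] with x hx hx'
    rw [hx, hx'.2, sub_self, Pi.zero_apply]
  · intro hzero
    have hdisp_zero := hint.integral_compProd.ae_eq_zero_of_forall_setIntegral_eq_zero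
      fun B hB _ => (hdrift B hB).symm.trans (hzero B hB)
    filter_upwards [hdisp_zero, hint_kernel, hmean] with x hx hx_int hx_mean
    exact ⟨hx_int, sub_eq_zero.1 (hx_mean.symm.trans hx)⟩

lemma ae_mean_condKernel_eq [IsFiniteMeasure γ]
    (hint : Integrable (fun p : ℝ × ℝ => p.2 - p.1) γ)
    (hzero : ∀ B, MeasurableSet B → drift γ B = 0) :
    ∀ᵐ x ∂γ.fst, Integrable id (γ.condKernel x) ∧ ∫ y, y ∂(γ.condKernel x) = x := by
  have hγ : γ.fst ⊗ₘ γ.condKernel = γ := γ.disintegrate γ.condKernel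
  exact (ae_mean_eq_iff_drift_eq_zero (hγ.symm ▸ hint)).2 (hγ.symm ▸ hzero)

lemma isSubMart_iff_drift_eq_zero [IsFiniteMeasure γ]
    (hint : Integrable (fun p : ℝ × ℝ => p.2 - p.1) γ) :
    IsSubMart γ ↔ ∀ B, MeasurableSet B → drift γ B = 0 := by
  constructor
  · rintro ⟨-, rfl | ⟨κ, hκ, hγ, hmean⟩⟩
    · exact fun _ _ => drift_zero
    · rw [← hγ] at hint ⊢
      rw [ae_mean_eq_iff_drift_eq_zero hint] at hmean
      exact hmean
  · intro hzero
    exact ⟨inferInstance, .inr ⟨γ.condKernel, inferInstance, γ.disintegrate γ.condKernel,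
      ae_mean_condKernel_eq hint hzero⟩⟩

end Drift

section Feasible

variable {μ ν : Measure ℝ} {L : ℕ} {γ : Fin L → Measure (ℝ × ℝ)}

lemma subCoupling_of_sum_marginals {ι : Type*} [Fintype ι] {γ : ι → Measure (ℝ × ℝ)}
    (hfst : (∑ l, γ l).fst = μ) (hsnd : (∑ l, γ l).snd = ν) (l : ι) : SubCoupling μ ν (γ l) :=
  SubCoupling.mono ⟨hfst.le, hsnd.le⟩
    (Finset.single_le_sum (fun _ _ => Measure.zero_le _) (Finset.mem_univ l))

lemma MLfeasible.fst_sum [SFinite μ] (hγ : MLfeasible μ ν γ) : (∑ l, γ l).fst = μ := by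
  obtain ⟨-, κ, ⟨hκ, -, -⟩, hsum⟩ := hγ
  rw [hsum, Measure.fst_compProd]

lemma MLfeasible.snd_sum (hγ : MLfeasible μ ν γ) : (∑ l, γ l).snd = ν := by
  obtain ⟨-, κ, ⟨-, hsnd, -⟩, hsum⟩ := hγ
  rw [hsum]
  exact hsnd

lemma MLfeasible.subCoupling [SFinite μ] (hγ : MLfeasible μ ν γ) (l : Fin L) :
    SubCoupling μ ν (γ l) :=
  subCoupling_of_sum_marginals hγ.fst_sum hγ.snd_sum l

lemma mlFeasible_iff [IsFiniteMeasure μ] (hμ : Integrable id μ) (hν : Integrable id ν) :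
    MLfeasible μ ν γ ↔ (∑ l, γ l).fst = μ ∧ (∑ l, γ l).snd = ν ∧
      ∀ l B, MeasurableSet B → drift (γ l) B = 0 := by
  constructor
  · intro hγ
    refine ⟨hγ.fst_sum, hγ.snd_sum, fun l => ?_⟩
    have := (hγ.subCoupling l).isFiniteMeasure
    exact (isSubMart_iff_drift_eq_zero ((hγ.subCoupling l).integrable_displacement hμ hν)).1
      (hγ.1 l)
  · rintro ⟨hfst, hsnd, hdrift⟩
    have hsub := subCoupling_of_sum_marginals hfst hsnd
    have hdisp := fun l => (hsub l).integrable_displacement hμ hν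
    have hsum : SubCoupling μ ν (∑ l, γ l) := ⟨hfst.le, hsnd.le⟩
    have hfin := fun l => (hsub l).isFiniteMeasure
    have hfin_sum := hsum.isFiniteMeasure
    refine ⟨fun l => (isSubMart_iff_drift_eq_zero (hdisp l)).2 (hdrift l),
      (∑ l, γ l).condKernel, ⟨inferInstance, ?_, ?_⟩, ?_⟩
    · rw [← hfst, Measure.disintegrate]
      exact hsnd
    · rw [← hfst]
      refine ae_mean_condKernel_eq (hsum.integrable_displacement hμ hν) fun B hB => ?_
      rw [drift_sum (fun l _ => hdisp l) hB]
      exact Finset.sum_eq_zero fun l _ => hdrift l B hB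
    · rw [← hfst, Measure.disintegrate]

end Feasible

section Relaxed

variable {μ ν : Measure ℝ} {L : ℕ} {c : Fin L → ℝ × ℝ → ℝ} {γ R S : Fin L → Measure (ℝ × ℝ)}

/-- The objective of the relaxed problem. -/
def totalPayoff (c : Fin L → ℝ × ℝ → ℝ) (γ : Fin L → Measure (ℝ × ℝ)) : ℝ :=
  ∑ l, ∫ p, c l p ∂(γ l)

/-- The integrability content of Assumption [A'], with measurable instead of continuous payoffs. -/
structure IntegrableData (μ ν : Measure ℝ) (c : Fin L → ℝ × ℝ → ℝ) : Prop where
  integrable_id_fst : Integrable id μ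
  integrable_id_snd : Integrable id ν
  measurable : ∀ l, Measurable (c l)
  dominated : ∃ v w : ℝ → ℝ, Integrable v μ ∧ Integrable w ν ∧
    ∀ l x y, |c l (x, y)| ≤ v x + w y

namespace IntegrableData

lemma integrable_displacement (hc : IntegrableData μ ν c) {γ : Measure (ℝ × ℝ)}
    (hγ : SubCoupling μ ν γ) : Integrable (fun p : ℝ × ℝ => p.2 - p.1) γ :=
  hγ.integrable_displacement hc.integrable_id_fst hc.integrable_id_snd

lemma integrable_payoff (hc : IntegrableData μ ν c) {γ : Measure (ℝ × ℝ)}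
    (hγ : SubCoupling μ ν γ) (l : Fin L) : Integrable (c l) γ := by
  obtain ⟨v, w, hv, hw, hvw⟩ := hc.dominated
  exact hγ.integrable_of_abs_le hv hw (hc.measurable l).aestronglyMeasurable (hvw l)

lemma totalPayoff_add (hc : IntegrableData μ ν c) (hR : ∀ l, SubCoupling μ ν (R l))
    (hS : ∀ l, SubCoupling μ ν (S l)) :
    totalPayoff c (R + S) = totalPayoff c R + totalPayoff c S := by
  simp only [totalPayoff, ← Finset.sum_add_distrib, Pi.add_apply]
  exact Finset.sum_congr rfl fun l _ =>
    integral_add_measure (hc.integrable_payoff (hR l) l) (hc.integrable_payoff (hS l) l)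

lemma bddAbove_totalPayoff [SFinite μ] (hc : IntegrableData μ ν c) :
    BddAbove {r | ∃ γ : Fin L → Measure (ℝ × ℝ), MLfeasible μ ν γ ∧ r = totalPayoff c γ} := by
  obtain ⟨v, w, hv, hw, hvw⟩ := hc.dominated
  refine ⟨∫ x, v x ∂μ + ∫ y, w y ∂ν, ?_⟩
  rintro - ⟨γ, hγ, rfl⟩
  have hsum : SubCoupling μ ν (∑ l, γ l) := ⟨hγ.fst_sum.le, hγ.snd_sum.le⟩
  have hv_int : Integrable (fun p : ℝ × ℝ => v p.1) (∑ l, γ l) :=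
    (hv.mono_measure hsum.fst_le).comp_measurable measurable_fst
  have hw_int : Integrable (fun p : ℝ × ℝ => w p.2) (∑ l, γ l) :=
    (hw.mono_measure hsum.snd_le).comp_measurable measurable_snd
  have hle : ∀ l, γ l ≤ ∑ l, γ l := fun l =>
    Finset.single_le_sum (fun _ _ => Measure.zero_le _) (Finset.mem_univ l)
  have hint : ∀ l, Integrable (fun p : ℝ × ℝ => v p.1 + w p.2) (γ l) := fun l =>
    (hv_int.add hw_int).mono_measure (hle l)
  calc totalPayoff c γ
      ≤ ∑ l, ∫ p, (v p.1 + w p.2) ∂(γ l) :=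
        Finset.sum_le_sum fun l _ => integral_mono (hc.integrable_payoff (hsum.mono (hle l)) l)
          (hint l) fun p => (le_abs_self _).trans (hvw l p.1 p.2)
    _ = ∫ p, (v p.1 + w p.2) ∂(∑ l, γ l) := (integral_finsetSum_measure fun l _ => hint l).symm
    _ = ∫ p, v p.1 ∂(∑ l, γ l) + ∫ p, w p.2 ∂(∑ l, γ l) := integral_add hv_int hw_int
    _ = ∫ x, v x ∂(∑ l, γ l).fst + ∫ y, w y ∂(∑ l, γ l).snd := by
        rw [integral_comp_fst (hv.mono_measure hsum.fst_le).aestronglyMeasurable,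
          integral_comp_snd (hw.mono_measure hsum.snd_le).aestronglyMeasurable]
    _ = ∫ x, v x ∂μ + ∫ y, w y ∂ν := by rw [hγ.fst_sum, hγ.snd_sum]

end IntegrableData

/-- `γ` attains the relaxed value. -/
structure IsRelaxedOptimal (μ ν : Measure ℝ) (c : Fin L → ℝ × ℝ → ℝ)
    (γ : Fin L → Measure (ℝ × ℝ)) : Prop where
  feasible : MLfeasible μ ν γ
  totalPayoff_le : ∀ γ', MLfeasible μ ν γ' → totalPayoff c γ' ≤ totalPayoff c γ

lemma IntegrableData.isRelaxedOptimal [SFinite μ] (hc : IntegrableData μ ν c)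
    (hγ : MLfeasible μ ν γ) (hval : totalPayoff c γ = RelaxedValue μ ν c) :
    IsRelaxedOptimal μ ν c γ :=
  ⟨hγ, fun γ' hγ' => hval ▸ le_csSup hc.bddAbove_totalPayoff ⟨γ', hγ', rfl⟩⟩

/-- `S` can replace `R` inside a feasible family: the total marginals agree, and so do the
displacements of the individual components. This is the vectorial form of the competitors of
Beiglböck and Juillet. -/
structure IsCompetitor (S R : Fin L → Measure (ℝ × ℝ)) : Prop where
  fst_eq : (∑ l, S l).fst = (∑ l, R l).fst
  snd_eq : (∑ l, S l).snd = (∑ l, R l).snd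
  drift_eq : ∀ l B, MeasurableSet B → drift (S l) B = drift (R l) B

namespace IsCompetitor

lemma symm (h : IsCompetitor S R) : IsCompetitor R S :=
  ⟨h.fst_eq.symm, h.snd_eq.symm, fun l B hB => (h.drift_eq l B hB).symm⟩

lemma subCoupling_of_le (h : IsCompetitor S R) (hγ : SubCoupling μ ν (∑ l, γ l)) (hR : R ≤ γ)
    (l : Fin L) : SubCoupling μ ν (S l) := by
  have hle : ∑ l, R l ≤ ∑ l, γ l := Finset.sum_le_sum fun l _ => hR l
  refine SubCoupling.mono ⟨?_, ?_⟩
    (Finset.single_le_sum (fun _ _ => Measure.zero_le _) (Finset.mem_univ l))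
  · exact h.fst_eq.trans_le ((Measure.fst_mono hle).trans hγ.fst_le)
  · exact h.snd_eq.trans_le ((Measure.snd_mono hle).trans hγ.snd_le)

lemma mlFeasible_add [IsFiniteMeasure μ] (h : IsCompetitor S R) (hμ : Integrable id μ)
    (hν : Integrable id ν) {ξ : Fin L → Measure (ℝ × ℝ)} (hξ : MLfeasible μ ν (ξ + R)) :
    MLfeasible μ ν (ξ + S) := by
  obtain ⟨hfst, hsnd, hdrift⟩ := (mlFeasible_iff hμ hν).1 hξ
  have hsub := subCoupling_of_sum_marginals hfst hsnd
  have hR : R ≤ ξ + R := le_add_of_nonneg_left fun l => Measure.zero_le _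
  have hdisp_ξ := fun l => ((hsub l).mono
    (le_add_of_nonneg_right (Measure.zero_le (R l)))).integrable_displacement hμ hν
  have hdisp_R := fun l => ((hsub l).mono (hR l)).integrable_displacement hμ hν
  have hdisp_S := fun l =>
    (h.subCoupling_of_le ⟨hfst.le, hsnd.le⟩ hR l).integrable_displacement hμ hν
  simp only [Pi.add_apply, Finset.sum_add_distrib, Measure.fst_add, Measure.snd_add,
    mlFeasible_iff hμ hν] at hfst hsnd hdrift ⊢
  refine ⟨by rw [h.fst_eq, hfst], by rw [h.snd_eq, hsnd], fun l B hB => ?_⟩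
  rw [drift_add (hdisp_ξ l) (hdisp_S l), h.drift_eq l B hB, ← drift_add (hdisp_ξ l) (hdisp_R l),
    hdrift l B hB]

end IsCompetitor

lemma IsRelaxedOptimal.totalPayoff_competitor_le [IsFiniteMeasure μ]
    (hγ : IsRelaxedOptimal μ ν c γ) (hc : IntegrableData μ ν c) (hR : R ≤ γ)
    (hSR : IsCompetitor S R) : totalPayoff c S ≤ totalPayoff c R := by
  have hsub := hγ.feasible.subCoupling
  have hsub_R : ∀ l, SubCoupling μ ν (R l) := fun l => (hsub l).mono (hR l)
  have hsub_S := hSR.subCoupling_of_le ⟨hγ.feasible.fst_sum.le, hγ.feasible.snd_sum.le⟩ hR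
  have hsub_rest : ∀ l, SubCoupling μ ν ((γ - R) l) := fun l => (hsub l).mono Measure.sub_le
  have hrest : γ - R + R = γ := funext fun l => by
    have := (hsub_R l).isFiniteMeasure
    exact Measure.sub_add_cancel_of_le (hR l)
  have hfeas : MLfeasible μ ν (γ - R + S) :=
    hSR.mlFeasible_add hc.integrable_id_fst hc.integrable_id_snd (hrest.symm ▸ hγ.feasible)
  have hpayoff_R := hc.totalPayoff_add hsub_rest hsub_R
  rw [hrest] at hpayoff_R
  linarith only [hγ.totalPayoff_le _ hfeas, hc.totalPayoff_add hsub_rest hsub_S, hpayoff_R]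

lemma IsRelaxedOptimal.integral_eq_of_le [IsFiniteMeasure μ] {γ₁ γ₂ η : Measure (ℝ × ℝ)}
    {c : Fin 2 → ℝ × ℝ → ℝ} (hγ : IsRelaxedOptimal μ ν c ![γ₁, γ₂]) (hc : IntegrableData μ ν c)
    (hη₁ : η ≤ γ₁) (hη₂ : η ≤ γ₂) (hη : ∀ B, MeasurableSet B → drift η B = 0) :
    ∫ p, c 0 p ∂η = ∫ p, c 1 p ∂η := by
  have hcomp : IsCompetitor ![0, η] ![η, 0] :=
    ⟨by simp, by simp, fun l B hB => by fin_cases l <;> simp [hη B hB]⟩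
  have h₁₂ := hγ.totalPayoff_competitor_le hc (R := ![η, 0]) (S := ![0, η])
    (by simpa [Pi.le_def, Fin.forall_fin_two] using ⟨hη₁, Measure.zero_le _⟩) hcomp
  have h₂₁ := hγ.totalPayoff_competitor_le hc (R := ![0, η]) (S := ![η, 0])
    (by simpa [Pi.le_def, Fin.forall_fin_two] using ⟨Measure.zero_le _, hη₂⟩) hcomp.symm
  simp only [totalPayoff, Fin.sum_univ_two, Matrix.cons_val_zero, Matrix.cons_val_one,
    integral_zero_measure, add_zero, zero_add] at h₁₂ h₂₁
  exact le_antisymm h₂₁ h₁₂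

end Relaxed

section SplitLaw

open unitInterval

variable {Ω E F : Type*} [MeasurableSpace Ω] [MeasurableSpace E] [MeasurableSpace F]
  {N : Measure Ω} {w : Ω → I} {f f₁ f₂ : Ω → E}

/-- The law under `N` of a variable that, given `ω`, takes the value `f₁ ω` with probability `w ω`
and the value `f₂ ω` otherwise. -/
def splitLaw (N : Measure Ω) (w : Ω → I) (f₁ f₂ : Ω → E) : Measure E :=
  (N.withDensity fun ω => toNNReal (w ω)).map f₁ +
    (N.withDensity fun ω => toNNReal (σ (w ω))).map f₂

lemma splitLaw_self (hw : Measurable w) (hf : Measurable f) : splitLaw N w f f = N.map f := by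
  rw [splitLaw, ← Measure.map_add _ _ hf, ← withDensity_add_left (by fun_prop)]
  have hsum : ((fun ω => (toNNReal (w ω) : ℝ≥0∞)) + fun ω => (toNNReal (σ (w ω)) : ℝ≥0∞)) = 1 := by
    ext ω
    simp only [Pi.add_apply, ← ENNReal.coe_add, toNNReal_add_toNNReal_symm, ENNReal.coe_one,
      Pi.one_apply]
  rw [hsum, withDensity_one]

lemma map_splitLaw {g : E → F} (hg : Measurable g) (hf₁ : Measurable f₁) (hf₂ : Measurable f₂) :
    (splitLaw N w f₁ f₂).map g = splitLaw N w (g ∘ f₁) (g ∘ f₂) := by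
  rw [splitLaw, Measure.map_add _ _ hg, Measure.map_map hg hf₁, Measure.map_map hg hf₂, splitLaw]

lemma withDensity_toNNReal_le (w : Ω → I) : (N.withDensity fun ω => toNNReal (w ω)) ≤ N := by
  conv_rhs => rw [← withDensity_one (μ := N)]
  exact withDensity_mono (ae_of_all _ fun ω => ENNReal.coe_le_one_iff.2 (w ω).2.2)

lemma splitLaw_le (hf₁ : Measurable f₁) (hf₂ : Measurable f₂) :
    splitLaw N w f₁ f₂ ≤ N.map f₁ + N.map f₂ :=
  add_le_add (Measure.map_mono (withDensity_toNNReal_le w) hf₁)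
    (Measure.map_mono (withDensity_toNNReal_le fun ω => σ (w ω)) hf₂)

lemma integrable_unitInterval_mul (hw : Measurable w) (hf : Measurable f) {g : E → ℝ}
    (hg : Integrable g (N.map f)) : Integrable (fun ω => (w ω : ℝ) * g (f ω)) N :=
  (hg.comp_measurable hf).bdd_mul (c := 1) (by fun_prop) (ae_of_all _ fun ω => by
    simpa only [Real.norm_eq_abs, abs_of_nonneg (w ω).2.1] using (w ω).2.2)

lemma integral_map_withDensity_toNNReal (hw : Measurable w) (hf : Measurable f) {g : E → ℝ}
    (hg : Integrable g (N.map f)) :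
    ∫ e, g e ∂((N.withDensity fun ω => toNNReal (w ω)).map f) = ∫ ω, w ω * g (f ω) ∂N := by
  rw [integral_map hf.aemeasurable
      (hg.mono_measure (Measure.map_mono (withDensity_toNNReal_le w) hf)).aestronglyMeasurable,
    integral_withDensity_eq_integral_smul (by fun_prop)]
  rfl

lemma integrable_splitLaw_integrand (hw : Measurable w) (hf₁ : Measurable f₁)
    (hf₂ : Measurable f₂) {g : E → ℝ} (hg₁ : Integrable g (N.map f₁))
    (hg₂ : Integrable g (N.map f₂)) :
    Integrable (fun ω => w ω * g (f₁ ω) + (1 - w ω) * g (f₂ ω)) N := by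
  simp only [← coe_symm_eq]
  exact (integrable_unitInterval_mul hw hf₁ hg₁).add
    (integrable_unitInterval_mul (by fun_prop) hf₂ hg₂)

lemma integral_splitLaw (hw : Measurable w) (hf₁ : Measurable f₁) (hf₂ : Measurable f₂)
    {g : E → ℝ} (hg₁ : Integrable g (N.map f₁)) (hg₂ : Integrable g (N.map f₂)) :
    ∫ e, g e ∂(splitLaw N w f₁ f₂) = ∫ ω, (w ω * g (f₁ ω) + (1 - w ω) * g (f₂ ω)) ∂N := by
  have hσ : Measurable fun ω => σ (w ω) := by fun_prop
  simp only [splitLaw, ← coe_symm_eq]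
  rw [integral_add_measure
      (hg₁.mono_measure (Measure.map_mono (withDensity_toNNReal_le w) hf₁))
      (hg₂.mono_measure (Measure.map_mono (withDensity_toNNReal_le fun ω => σ (w ω)) hf₂)),
    integral_map_withDensity_toNNReal hw hf₁ hg₁, integral_map_withDensity_toNNReal hσ hf₂ hg₂,
    integral_add (integrable_unitInterval_mul hw hf₁ hg₁)
      (integrable_unitInterval_mul hσ hf₂ hg₂)]

end SplitLaw

section Swap

open unitInterval

variable {Ω : Type*} [MeasurableSpace Ω] {N : Measure Ω} {w : Ω → I} {X Z Y Y₁ Y₂ : Ω → ℝ}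

lemma fst_splitLaw (hw : Measurable w) (hX : Measurable X) (hY₁ : Measurable Y₁)
    (hY₂ : Measurable Y₂) :
    (splitLaw N w (fun ω => (X ω, Y₁ ω)) fun ω => (X ω, Y₂ ω)).fst = N.map X := by
  rw [Measure.fst, map_splitLaw measurable_fst (hX.prodMk hY₁) (hX.prodMk hY₂)]
  exact splitLaw_self hw hX

lemma integral_fst_splitLaw (hw : Measurable w) (hX : Measurable X) (hY : Measurable Y)
    (hY₁ : Measurable Y₁) (hY₂ : Measurable Y₂) {c : ℝ → ℝ} (hc : Measurable c) :
    ∫ p, c p.1 ∂(splitLaw N w (fun ω => (X ω, Y₁ ω)) fun ω => (X ω, Y₂ ω)) =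
      ∫ p, c p.1 ∂(N.map fun ω => (X ω, Y ω)) := by
  rw [integral_comp_fst hc.aestronglyMeasurable, integral_comp_fst hc.aestronglyMeasurable,
    fst_splitLaw hw hX hY₁ hY₂, Measure.fst_map_prodMk hY]

lemma snd_splitLaw (hX : Measurable X) (hY₁ : Measurable Y₁) (hY₂ : Measurable Y₂) :
    (splitLaw N w (fun ω => (X ω, Y₁ ω)) fun ω => (X ω, Y₂ ω)).snd = splitLaw N w Y₁ Y₂ :=
  map_splitLaw measurable_snd (hX.prodMk hY₁) (hX.prodMk hY₂)

lemma drift_splitLaw (hw : Measurable w) (hX : Measurable X) (hY : Measurable Y)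
    (hY₁ : Measurable Y₁) (hY₂ : Measurable Y₂)
    (hint₁ : Integrable (fun p : ℝ × ℝ => p.2 - p.1) (N.map fun ω => (X ω, Y₁ ω)))
    (hint₂ : Integrable (fun p : ℝ × ℝ => p.2 - p.1) (N.map fun ω => (X ω, Y₂ ω)))
    (hbary : ∀ᵐ ω ∂N, w ω * Y₁ ω + (1 - w ω) * Y₂ ω = Y ω) {B : Set ℝ} (hB : MeasurableSet B) :
    drift (splitLaw N w (fun ω => (X ω, Y₁ ω)) fun ω => (X ω, Y₂ ω)) B =
      drift (N.map fun ω => (X ω, Y ω)) B := by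
  have hB' : MeasurableSet ((Prod.fst : ℝ × ℝ → ℝ) ⁻¹' B) := measurable_fst hB
  rw [drift_eq_integral_indicator hB, drift_eq_integral_indicator hB,
    integral_splitLaw hw (hX.prodMk hY₁) (hX.prodMk hY₂) (hint₁.indicator hB')
      (hint₂.indicator hB'),
    integral_map (hX.prodMk hY).aemeasurable
      (AEStronglyMeasurable.indicator (by fun_prop) hB')]
  refine integral_congr_ae ?_
  filter_upwards [hbary] with ω hω
  by_cases hωB : X ω ∈ B
  · simp only [indicator, mem_preimage, hωB, if_true]
    linear_combination hω
  · simp only [indicator, mem_preimage, hωB, if_false, mul_zero, add_zero]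

lemma isCompetitor_swap (hw : Measurable w) (hX : Measurable X) (hZ : Measurable Z)
    (hY : Measurable Y) (hY₁ : Measurable Y₁) (hY₂ : Measurable Y₂)
    (hXY₁ : Integrable (fun p : ℝ × ℝ => p.2 - p.1) (N.map fun ω => (X ω, Y₁ ω)))
    (hXY₂ : Integrable (fun p : ℝ × ℝ => p.2 - p.1) (N.map fun ω => (X ω, Y₂ ω)))
    (hZY₁ : Integrable (fun p : ℝ × ℝ => p.2 - p.1) (N.map fun ω => (Z ω, Y₁ ω)))
    (hZY₂ : Integrable (fun p : ℝ × ℝ => p.2 - p.1) (N.map fun ω => (Z ω, Y₂ ω)))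
    (hbary : ∀ᵐ ω ∂N, w ω * Y₁ ω + (1 - w ω) * Y₂ ω = Y ω) :
    IsCompetitor
      ![N.map fun ω => (X ω, Y ω), splitLaw N w (fun ω => (Z ω, Y₁ ω)) fun ω => (Z ω, Y₂ ω)]
      ![splitLaw N w (fun ω => (X ω, Y₁ ω)) fun ω => (X ω, Y₂ ω), N.map fun ω => (Z ω, Y ω)] where
  fst_eq := by
    simp only [Fin.sum_univ_two, Matrix.cons_val_zero, Matrix.cons_val_one, Measure.fst_add,
      fst_splitLaw hw hX hY₁ hY₂, fst_splitLaw hw hZ hY₁ hY₂, Measure.fst_map_prodMk hY]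
  snd_eq := by
    simp only [Fin.sum_univ_two, Matrix.cons_val_zero, Matrix.cons_val_one, Measure.snd_add,
      snd_splitLaw hX hY₁ hY₂, snd_splitLaw hZ hY₁ hY₂, Measure.snd_map_prodMk hX,
      Measure.snd_map_prodMk hZ, add_comm]
  drift_eq l B hB := by
    fin_cases l
    · exact (drift_splitLaw hw hX hY hY₁ hY₂ hXY₁ hXY₂ hbary hB).symm
    · exact drift_splitLaw hw hZ hY hY₁ hY₂ hZY₁ hZY₂ hbary hB

lemma eq_zero_of_integral_splitLaw_le {c : ℝ × ℝ → ℝ} (hc : Measurable c) (hw : Measurable w)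
    (hZ : Measurable Z) (hY : Measurable Y) (hY₁ : Measurable Y₁) (hY₂ : Measurable Y₂)
    (hint : Integrable c (N.map fun ω => (Z ω, Y ω)))
    (hint₁ : Integrable c (N.map fun ω => (Z ω, Y₁ ω)))
    (hint₂ : Integrable c (N.map fun ω => (Z ω, Y₂ ω)))
    (hstrict : ∀ᵐ ω ∂N, c (Z ω, Y ω) < w ω * c (Z ω, Y₁ ω) + (1 - w ω) * c (Z ω, Y₂ ω))
    (hle : ∫ p, c p ∂(splitLaw N w (fun ω => (Z ω, Y₁ ω)) fun ω => (Z ω, Y₂ ω)) ≤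
      ∫ p, c p ∂(N.map fun ω => (Z ω, Y ω))) : N = 0 := by
  have hZY₁ := hZ.prodMk hY₁
  have hZY₂ := hZ.prodMk hY₂
  have hZY := hZ.prodMk hY
  have hint_split := integrable_splitLaw_integrand hw hZY₁ hZY₂ hint₁ hint₂
  rw [integral_splitLaw hw hZY₁ hZY₂ hint₁ hint₂,
    integral_map hZY.aemeasurable hc.aestronglyMeasurable] at hle
  have heq := (integral_eq_iff_of_ae_le (hint.comp_measurable hZY) hint_split
    (hstrict.mono fun ω hω => hω.le)).1
      (le_antisymm (integral_mono_ae (hint.comp_measurable hZY) hint_split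
        (hstrict.mono fun ω hω => hω.le)) hle)
  have hfalse : ∀ᵐ _ ∂N, False := by
    filter_upwards [heq, hstrict] with ω h₁ h₂ using h₂.ne h₁
  simpa only [Filter.eventually_false_iff_eq_bot, ae_eq_bot] using hfalse

end Swap

section Barycentric

open unitInterval

/-- The weight `t` with `t * y₁ + (1 - t) * y₂ = y` when `y₁ < y < y₂`; otherwise a junk value. -/
def barycentricWeight (y₁ y y₂ : ℝ) : I := projIcc 0 1 zero_le_one ((y₂ - y) / (y₂ - y₁))

@[fun_prop]
lemma measurable_barycentricWeight {Ω : Type*} [MeasurableSpace Ω] {Y₁ Y Y₂ : Ω → ℝ}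
    (hY₁ : Measurable Y₁) (hY : Measurable Y) (hY₂ : Measurable Y₂) :
    Measurable fun ω => barycentricWeight (Y₁ ω) (Y ω) (Y₂ ω) :=
  continuous_projIcc.measurable.comp (by fun_prop)

variable {y₁ y y₂ : ℝ}

lemma coe_barycentricWeight (h₁ : y₁ ≤ y) (h₂ : y ≤ y₂) :
    (barycentricWeight y₁ y y₂ : ℝ) = (y₂ - y) / (y₂ - y₁) := by
  rw [barycentricWeight, projIcc_of_mem _ ⟨div_nonneg (by linarith) (by linarith),
    div_le_one_of_le₀ (by linarith) (by linarith)⟩]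

lemma barycentricWeight_mem_Ioo (h₁ : y₁ < y) (h₂ : y < y₂) :
    (barycentricWeight y₁ y y₂ : ℝ) ∈ Ioo (0 : ℝ) 1 := by
  rw [coe_barycentricWeight h₁.le h₂.le]
  exact ⟨div_pos (by linarith) (by linarith), (div_lt_one (by linarith)).2 (by linarith)⟩

lemma barycentricWeight_combination (h₁ : y₁ < y) (h₂ : y < y₂) :
    barycentricWeight y₁ y y₂ * y₁ + (1 - barycentricWeight y₁ y y₂) * y₂ = y := by
  have hne : y₂ - y₁ ≠ 0 := (sub_pos.2 (h₁.trans h₂)).ne'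
  rw [coe_barycentricWeight h₁.le h₂.le]
  field_simp
  ring

lemma lt_barycentricWeight_combination {f : ℝ → ℝ} (hf : StrictConvexOn ℝ univ f) (h₁ : y₁ < y)
    (h₂ : y < y₂) :
    f y < barycentricWeight y₁ y y₂ * f y₁ + (1 - barycentricWeight y₁ y y₂) * f y₂ := by
  obtain ⟨hpos, hlt_one⟩ := barycentricWeight_mem_Ioo h₁ h₂
  simpa only [smul_eq_mul, barycentricWeight_combination h₁ h₂] using
    hf.2 (mem_univ y₁) (mem_univ y₂) (h₁.trans h₂).ne hpos (sub_pos.2 hlt_one)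
      (add_sub_cancel _ _)

end Barycentric

section ThreePointLaw

/-- Two independent samples `y₁, y₂` of the kernel from the same point `x`, together with an
independent sample `(z, y)` of the plan, encoded as `((x, y₁, y₂), (z, y))`. -/
def threePointLaw (l : Measure ℝ) (κ : Kernel ℝ ℝ) : Measure ((ℝ × ℝ × ℝ) × ℝ × ℝ) :=
  (l ⊗ₘ (κ ×ₖ κ)).prod (l ⊗ₘ κ)

variable {l : Measure ℝ} [SFinite l] {κ : Kernel ℝ ℝ} [IsMarkovKernel κ]

lemma threePointLaw_map_left_le (hl : l univ ≤ 1) :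
    (threePointLaw l κ).map (fun ω => (ω.1.1, ω.1.2.1)) ≤ l ⊗ₘ κ := by
  refine (map_comp_fst_prod_le (by rwa [Measure.compProd_apply_univ])
    (f := Prod.map id Prod.fst) (by fun_prop)).trans_eq ?_
  rw [← Measure.compProd_map measurable_fst, ← Kernel.fst_eq, Kernel.fst_prod]

lemma threePointLaw_map_right_le (hl : l univ ≤ 1) :
    (threePointLaw l κ).map (fun ω => (ω.1.1, ω.1.2.2)) ≤ l ⊗ₘ κ := by
  refine (map_comp_fst_prod_le (by rwa [Measure.compProd_apply_univ])
    (f := Prod.map id Prod.snd) (by fun_prop)).trans_eq ?_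
  rw [← Measure.compProd_map measurable_snd, ← Kernel.snd_eq, Kernel.snd_prod]

lemma threePointLaw_map_middle_le (hl : l univ ≤ 1) :
    (threePointLaw l κ).map (fun ω => (ω.2.1, ω.2.2)) ≤ l ⊗ₘ κ :=
  (map_comp_snd_prod_le (by rwa [Measure.compProd_apply_univ]) measurable_id).trans_eq
    Measure.map_id

lemma ae_ae_ae_of_ae_threePointLaw {p : ℝ → ℝ → ℝ → Prop}
    (h : ∀ᵐ ω ∂(threePointLaw l κ), p ω.1.2.1 ω.2.2 ω.1.2.2) :
    ∀ᵐ x ∂l, ∀ᵐ y₁ ∂(κ x), ∀ᵐ y₂ ∂(κ x), ∀ᵐ q ∂(l ⊗ₘ κ), p y₁ q.2 y₂ := by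
  filter_upwards [Measure.ae_ae_of_ae_compProd (Measure.ae_ae_of_ae_prod h)] with x hx
  rw [Kernel.prod_apply] at hx
  exact Measure.ae_ae_of_ae_prod hx

end ThreePointLaw

section NoCrossing

variable {μ ν : Measure ℝ} [IsFiniteMeasure μ] {c₁ : ℝ → ℝ} {c₂ : ℝ × ℝ → ℝ}
  {γ₁ γ₂ : Measure (ℝ × ℝ)}

/-- In a crossing, the first component moves mass from `X` to both `Y₁` and `Y₂` while the second
moves mass from `Z` to a point `Y` between them. Exchanging the targets would increase the strictly
convex payoff of the second component and leave that of the first unchanged. -/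
lemma IsRelaxedOptimal.eq_zero_of_crossing
    (hγ : IsRelaxedOptimal μ ν ![fun p => c₁ p.1, c₂] ![γ₁, γ₂])
    (hc : IntegrableData μ ν ![fun p => c₁ p.1, c₂])
    (hstrict : ∀ᵐ x ∂μ, StrictConvexOn ℝ univ fun y => c₂ (x, y))
    {Ω : Type*} [MeasurableSpace Ω] {N : Measure Ω} {X Z Y Y₁ Y₂ : Ω → ℝ}
    (hX : Measurable X) (hZ : Measurable Z) (hY : Measurable Y) (hY₁ : Measurable Y₁)
    (hY₂ : Measurable Y₂)
    (hle₁ : (N.map fun ω => (X ω, Y₁ ω)) + (N.map fun ω => (X ω, Y₂ ω)) ≤ γ₁)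
    (hle₂ : (N.map fun ω => (Z ω, Y ω)) ≤ γ₂) (hlt : ∀ᵐ ω ∂N, Y₁ ω < Y ω ∧ Y ω < Y₂ ω) :
    N = 0 := by
  have hc₁ : Measurable c₁ := (hc.measurable 0).comp (measurable_prodMk_right (y := (0 : ℝ)))
  have hsub₁ : SubCoupling μ ν γ₁ := hγ.feasible.subCoupling 0
  have hsub₂ : SubCoupling μ ν γ₂ := hγ.feasible.subCoupling 1
  have hXY₁ := hsub₁.mono ((Measure.le_add_right le_rfl).trans hle₁)
  have hXY₂ := hsub₁.mono ((Measure.le_add_left le_rfl).trans hle₁)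
  have hZY := hsub₂.mono hle₂
  have hZY₁ := hZY.recombine hZ hX hY hY₁ hXY₁
  have hZY₂ := hZY.recombine hZ hX hY hY₂ hXY₂
  set w : Ω → unitInterval := fun ω => barycentricWeight (Y₁ ω) (Y ω) (Y₂ ω)
  have hw : Measurable w := by fun_prop
  have hbary : ∀ᵐ ω ∂N, w ω * Y₁ ω + (1 - w ω) * Y₂ ω = Y ω :=
    hlt.mono fun ω hω => barycentricWeight_combination hω.1 hω.2
  have hcomp := isCompetitor_swap hw hX hZ hY hY₁ hY₂ (hc.integrable_displacement hXY₁)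
    (hc.integrable_displacement hXY₂) (hc.integrable_displacement hZY₁)
    (hc.integrable_displacement hZY₂) hbary
  have hpayoff := hγ.totalPayoff_competitor_le hc
    (by simpa only [Pi.le_def, Fin.forall_fin_two] using!
      ⟨(splitLaw_le (hX.prodMk hY₁) (hX.prodMk hY₂)).trans hle₁, hle₂⟩) hcomp
  simp only [totalPayoff, Fin.sum_univ_two, Matrix.cons_val_zero, Matrix.cons_val_one,
    integral_fst_splitLaw hw hX hY hY₁ hY₂ hc₁, add_le_add_iff_left] at hpayoff
  have hZμ : N.map Z ≤ μ := (Measure.fst_map_prodMk hY).ge.trans hZY.fst_le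
  have hstrict_Z : ∀ᵐ ω ∂N, StrictConvexOn ℝ univ fun y => c₂ (Z ω, y) :=
    ae_of_ae_map hZ.aemeasurable (ae_mono hZμ hstrict)
  refine eq_zero_of_integral_splitLaw_le (hc.measurable 1) hw hZ hY hY₁ hY₂
    (hc.integrable_payoff hZY 1) (hc.integrable_payoff hZY₁ 1) (hc.integrable_payoff hZY₂ 1)
    ?_ hpayoff
  filter_upwards [hstrict_Z, hlt] with ω hconv hω
  exact lt_barycentricWeight_combination hconv hω.1 hω.2

lemma IsRelaxedOptimal.ae_threePointLaw_not_mem_Ioo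
    (hγ : IsRelaxedOptimal μ ν ![fun p => c₁ p.1, c₂] ![γ₁, γ₂])
    (hc : IntegrableData μ ν ![fun p => c₁ p.1, c₂])
    (hstrict : ∀ᵐ x ∂μ, StrictConvexOn ℝ univ fun y => c₂ (x, y))
    {l : Measure ℝ} [SFinite l] {κ : Kernel ℝ ℝ} [IsMarkovKernel κ] (hl : l univ ≤ 1)
    (hη₁ : l ⊗ₘ κ ≤ γ₁) (hη₂ : l ⊗ₘ κ ≤ γ₂) :
    ∀ᵐ ω ∂(threePointLaw l κ), ω.2.2 ∉ Ioo ω.1.2.1 ω.1.2.2 := by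
  set η := l ⊗ₘ κ
  set M := threePointLaw l κ
  set D : Set ((ℝ × ℝ × ℝ) × ℝ × ℝ) := {ω | ω.1.2.1 < ω.2.2} ∩ {ω | ω.2.2 < ω.1.2.2}
  -- The factor `2⁻¹` makes room for both targets `y₁` and `y₂` inside `η`.
  set N := (2⁻¹ : ℝ≥0∞) • M.restrict D
  have hD : MeasurableSet D := (measurableSet_lt (by fun_prop) (by fun_prop)).inter
    (measurableSet_lt (by fun_prop) (by fun_prop))
  have hmap_le : ∀ {f : (ℝ × ℝ × ℝ) × ℝ × ℝ → ℝ × ℝ}, Measurable f → M.map f ≤ η →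
      N.map f ≤ (2⁻¹ : ℝ≥0∞) • η := fun hf hle => by
    rw [Measure.map_smul]
    gcongr
    exact (Measure.map_mono Measure.restrict_le_self hf).trans hle
  have hhalf : (2⁻¹ : ℝ≥0∞) • η + (2⁻¹ : ℝ≥0∞) • η = η := by
    rw [← add_smul, ENNReal.inv_two_add_inv_two, one_smul]
  have hleft := hmap_le (by fun_prop) (threePointLaw_map_left_le hl)
  have hright := hmap_le (by fun_prop) (threePointLaw_map_right_le hl)
  have hmiddle := hmap_le (by fun_prop) (threePointLaw_map_middle_le hl)
  have hN : N = 0 := hγ.eq_zero_of_crossing hc hstrict (by fun_prop) (by fun_prop) (by fun_prop)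
    (by fun_prop) (by fun_prop) ((add_le_add hleft hright).trans (hhalf.trans_le hη₁))
    (hmiddle.trans ((Measure.le_add_right le_rfl).trans (hhalf.trans_le hη₂)))
    (Measure.ae_smul_measure (ae_restrict_mem hD) _)
  have hMD : 2⁻¹ * M D = 0 := by
    simpa only [N, Measure.smul_apply, Measure.restrict_apply_self, smul_eq_mul,
      Measure.coe_zero, Pi.zero_apply] using DFunLike.congr_fun hN D
  exact measure_eq_zero_iff_ae_notMem.1 ((mul_eq_zero.1 hMD).resolve_left (by simp))

lemma IsRelaxedOptimal.ae_measure_Ioo_eq_zero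
    (hγ : IsRelaxedOptimal μ ν ![fun p => c₁ p.1, c₂] ![γ₁, γ₂])
    (hc : IntegrableData μ ν ![fun p => c₁ p.1, c₂])
    (hstrict : ∀ᵐ x ∂μ, StrictConvexOn ℝ univ fun y => c₂ (x, y))
    {l : Measure ℝ} [SFinite l] {κ : Kernel ℝ ℝ} [IsMarkovKernel κ] (hl : l univ ≤ 1)
    (hη₁ : l ⊗ₘ κ ≤ γ₁) (hη₂ : l ⊗ₘ κ ≤ γ₂) :
    ∀ᵐ x ∂l, ∀ᵐ y₁ ∂(κ x), ∀ᵐ y₂ ∂(κ x), (l ⊗ₘ κ).snd (Ioo y₁ y₂) = 0 := by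
  filter_upwards [ae_ae_ae_of_ae_threePointLaw (p := fun y₁ y y₂ => y ∉ Ioo y₁ y₂)
    (hγ.ae_threePointLaw_not_mem_Ioo hc hstrict hl hη₁ hη₂)] with x hx
  filter_upwards [hx] with y₁ hy₁
  filter_upwards [hy₁] with y₂ hy₂
  rw [Measure.snd_apply measurableSet_Ioo]
  exact measure_eq_zero_iff_ae_notMem.2 hy₂

end NoCrossing

section Atomless

open scoped Topology

lemma ae_forall_lt_measure_Ioo_pos {α : Type*} [TopologicalSpace α] [LinearOrder α]
    [OrderTopology α] [SecondCountableTopology α] [MeasurableSpace α]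
    (ρ : Measure α) [NullSingletonClass ρ] :
    ∀ᵐ y ∂ρ, ∀ z, y < z → 0 < ρ (Ioo y z) := by
  have hisolated : ∀ᵐ y ∂ρ, y ∉ {y ∈ ρ.support | 𝓝[ρ.support ∩ Ioi y] y = ⊥} :=
    measure_eq_zero_iff_ae_notMem.1 (countable_setOfPred_isolated_right_within.measure_zero ρ)
  filter_upwards [hisolated, Measure.support_mem_ae] with y hy hy_supp z hyz
  have hne : (𝓝[ρ.support ∩ Ioi y] y).NeBot := ⟨fun h => hy ⟨hy_supp, h⟩⟩
  obtain ⟨u, ⟨hu_supp, hyu⟩, huz⟩ := hne.nonempty_of_mem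
    (Filter.inter_mem self_mem_nhdsWithin (mem_nhdsWithin_of_mem_nhds (Iio_mem_nhds hyz)))
  exact (Measure.mem_support_iff_forall u).1 hu_supp _ (Ioo_mem_nhds hyu huz)

lemma ae_ae_le_of_ae_ae_measure_Ioo_eq_zero {α : Type*} [LinearOrder α] [MeasurableSpace α]
    {P ρ : Measure α}
    (hpos : ∀ᵐ y ∂P, ∀ z, y < z → 0 < ρ (Ioo y z))
    (hzero : ∀ᵐ y₁ ∂P, ∀ᵐ y₂ ∂P, ρ (Ioo y₁ y₂) = 0) : ∀ᵐ y₁ ∂P, ∀ᵐ y₂ ∂P, y₂ ≤ y₁ := by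
  filter_upwards [hpos, hzero] with y₁ hy₁ hnull
  filter_upwards [hnull] with y₂ hy₂
  exact not_lt.1 fun hlt => (hy₁ y₂ hlt).ne' hy₂

lemma ae_eq_integral_of_ae_ae_le {P : Measure ℝ} [IsProbabilityMeasure P] (hP : Integrable id P)
    (hle : ∀ᵐ y₁ ∂P, ∀ᵐ y₂ ∂P, y₂ ≤ y₁) : ∀ᵐ y ∂P, y = ∫ z, z ∂P := by
  have hmean_le : ∀ᵐ y ∂P, ∫ z, z ∂P ≤ y := by
    filter_upwards [hle] with y hy
    simpa using integral_mono_ae hP (integrable_const y) hy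
  have heq := (integral_eq_iff_of_ae_le (integrable_const _) hP hmean_le).1 (by simp)
  filter_upwards [heq] with y hy using hy.symm

end Atomless

section Nonrandomized

variable {μ ν : Measure ℝ} {c₁ : ℝ → ℝ} {c₂ : ℝ × ℝ → ℝ}

lemma AssumpA.integrableData (hA : AssumpA μ ν c₁ c₂) :
    IntegrableData μ ν ![fun p => c₁ p.1, c₂] := by
  obtain ⟨-, -, hμ, hν, hc₁, hc₂, -, v, w, -, -, hv, hw, hvw⟩ := hA
  refine ⟨hμ, hν, Fin.forall_fin_two.2 ⟨?_, hc₂.measurable⟩,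
    v, w, hv, hw, Fin.forall_fin_two.2 ⟨fun x y => ?_, fun x y => ?_⟩⟩
  · exact hc₁.measurable.comp measurable_fst
  · exact (le_add_of_nonneg_right (abs_nonneg _)).trans (hvw x y)
  · exact (le_add_of_nonneg_left (abs_nonneg _)).trans (hvw x y)

lemma MartKernel.mlFeasible [IsFiniteMeasure μ] {κ : Kernel ℝ ℝ} (hκ : MartKernel μ ν κ)
    {μ₁ : Measure ℝ} (hμ₁ : μ₁ ≤ μ) : MLfeasible μ ν ![μ₁ ⊗ₘ κ, (μ - μ₁) ⊗ₘ κ] := by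
  have hMarkov := hκ.1
  have hfin : IsFiniteMeasure μ₁ := isFiniteMeasure_of_le μ hμ₁
  have hsubmart : ∀ m ≤ μ, IsSubMart (m ⊗ₘ κ) := fun m hm => by
    have := isFiniteMeasure_of_le μ hm
    have hfst : (m ⊗ₘ κ).map Prod.fst = m := Measure.fst_compProd m κ
    exact ⟨inferInstance, .inr ⟨κ, hMarkov, by rw [hfst], hfst.symm ▸ ae_mono hm hκ.2.2⟩⟩
  refine ⟨Fin.forall_fin_two.2 ⟨hsubmart μ₁ hμ₁, hsubmart _ Measure.sub_le⟩, κ, hκ, ?_⟩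
  simp only [Fin.sum_univ_two, Matrix.cons_val_zero, Matrix.cons_val_one]
  rw [← Measure.compProd_add_left, add_comm, Measure.sub_add_cancel_of_le hμ₁]

lemma ae_eq_of_forall_integral_restrict_compProd_eq {l : Measure ℝ} [IsFiniteMeasure l]
    {κ : Kernel ℝ ℝ} [IsMarkovKernel κ] {f : ℝ → ℝ} {g : ℝ × ℝ → ℝ}
    (hf : Integrable (fun p : ℝ × ℝ => f p.1) (l ⊗ₘ κ)) (hg : Integrable g (l ⊗ₘ κ))
    (hκ : ∀ᵐ x ∂l, ∀ᵐ y ∂(κ x), y = x)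
    (heq : ∀ B, MeasurableSet B →
      ∫ p, f p.1 ∂(l.restrict B ⊗ₘ κ) = ∫ p, g p ∂(l.restrict B ⊗ₘ κ)) :
    ∀ᵐ x ∂l, f x = g (x, x) := by
  have hdiag : (fun x => ∫ y, g (x, y) ∂(κ x)) =ᵐ[l] fun x => g (x, x) := by
    filter_upwards [hκ] with x hx
    simpa using integral_congr_ae (hx.mono fun y hy => congr_arg (fun y => g (x, y)) hy)
  have hf' : Integrable f l := by simpa using hf.integral_compProd
  refine (hf'.ae_eq_of_forall_setIntegral_eq _ _ hg.integral_compProd fun B hB _ => ?_).trans hdiag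
  have hle : l.restrict B ⊗ₘ κ ≤ l ⊗ₘ κ := compProd_mono_left Measure.restrict_le_self κ
  simpa [Measure.integral_compProd (hf.mono_measure hle),
    Measure.integral_compProd (hg.mono_measure hle)] using heq B hB

variable {γ₁ γ₂ : Measure (ℝ × ℝ)} {l : Measure ℝ} {κ : Kernel ℝ ℝ}

lemma IsRelaxedOptimal.ae_kernel_eq_self [IsFiniteMeasure μ] [NullSingletonClass ν]
    [SFinite l] [IsMarkovKernel κ] (hγ : IsRelaxedOptimal μ ν ![fun p => c₁ p.1, c₂] ![γ₁, γ₂])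
    (hc : IntegrableData μ ν ![fun p => c₁ p.1, c₂])
    (hstrict : ∀ᵐ x ∂μ, StrictConvexOn ℝ univ fun y => c₂ (x, y)) (hl : l univ ≤ 1)
    (hmean : ∀ᵐ x ∂l, Integrable id (κ x) ∧ ∫ y, y ∂(κ x) = x)
    (hη₁ : l ⊗ₘ κ ≤ γ₁) (hη₂ : l ⊗ₘ κ ≤ γ₂) : ∀ᵐ x ∂l, ∀ᵐ y ∂(κ x), y = x := by
  set ρ := (l ⊗ₘ κ).snd
  have hρν : ρ ≤ ν := ((hγ.feasible.subCoupling 0).mono hη₁).snd_le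
  have hρ : NullSingletonClass ρ := ⟨fun y => hρν.absolutelyContinuous (measure_singleton y)⟩
  have hpos : ∀ᵐ x ∂l, ∀ᵐ y ∂(κ x), ∀ z, y < z → 0 < ρ (Ioo y z) :=
    Measure.ae_ae_of_ae_compProd
      (ae_of_ae_map measurable_snd.aemeasurable (ae_forall_lt_measure_Ioo_pos ρ))
  filter_upwards [hpos, hγ.ae_measure_Ioo_eq_zero hc hstrict hl hη₁ hη₂, hmean]
    with x hx_pos hx_zero ⟨hx_int, hx_mean⟩
  simpa only [hx_mean] using
    ae_eq_integral_of_ae_ae_le hx_int (ae_ae_le_of_ae_ae_measure_Ioo_eq_zero hx_pos hx_zero)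

lemma IsRelaxedOptimal.ae_payoff_eq [IsFiniteMeasure μ] [NullSingletonClass ν]
    [IsFiniteMeasure l] [IsMarkovKernel κ]
    (hγ : IsRelaxedOptimal μ ν ![fun p => c₁ p.1, c₂] ![γ₁, γ₂])
    (hc : IntegrableData μ ν ![fun p => c₁ p.1, c₂])
    (hstrict : ∀ᵐ x ∂μ, StrictConvexOn ℝ univ fun y => c₂ (x, y)) (hl : l univ ≤ 1)
    (hmean : ∀ᵐ x ∂l, Integrable id (κ x) ∧ ∫ y, y ∂(κ x) = x)
    (hη₁ : l ⊗ₘ κ ≤ γ₁) (hη₂ : l ⊗ₘ κ ≤ γ₂) : ∀ᵐ x ∂l, c₁ x = c₂ (x, x) := by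
  have hsub : SubCoupling μ ν (l ⊗ₘ κ) := (hγ.feasible.subCoupling 0).mono hη₁
  refine ae_eq_of_forall_integral_restrict_compProd_eq (hc.integrable_payoff hsub 0)
    (hc.integrable_payoff hsub 1) (hγ.ae_kernel_eq_self hc hstrict hl hmean hη₁ hη₂) fun B _ => ?_
  have hle : l.restrict B ⊗ₘ κ ≤ l ⊗ₘ κ := compProd_mono_left Measure.restrict_le_self κ
  exact hγ.integral_eq_of_le hc (hle.trans hη₁) (hle.trans hη₂)
    ((ae_mean_eq_iff_drift_eq_zero (hc.integrable_displacement (hsub.mono hle))).1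
      (ae_restrict_of_ae hmean))

end Nonrandomized

theorem nonrandomized_optimal_exercise_general
    (μ ν : Measure ℝ) [IsProbabilityMeasure μ] [NullSingletonClass ν]
    (c₁ : ℝ → ℝ) (c₂ : ℝ × ℝ → ℝ) (hc : IntegrableData μ ν ![fun p => c₁ p.1, c₂])
    (hstrict : ∀ᵐ x ∂μ, StrictConvexOn ℝ univ fun y => c₂ (x, y))
    (hne : ∀ᵐ x ∂μ, c₁ x ≠ c₂ (x, x))
    (κ : Kernel ℝ ℝ) (μ₁ : Measure ℝ) (hκ : MartKernel μ ν κ) (hμ₁ : μ₁ ≤ μ)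
    (hval : ∫ p, c₁ p.1 ∂(μ₁ ⊗ₘ κ) + ∫ p, c₂ p ∂((μ - μ₁) ⊗ₘ κ) =
      RelaxedValue μ ν ![fun p => c₁ p.1, c₂]) :
    μ₁ ⟂ₘ (μ - μ₁) := by
  have hγ := hc.isRelaxedOptimal (hκ.mlFeasible hμ₁) (by simpa [totalPayoff] using hval)
  have hMarkov := hκ.1
  have hfin := isFiniteMeasure_of_le μ hμ₁
  rw [Measure.mutuallySingular_iff_disjoint]
  intro l hl₁ hl₂
  have hlμ : l ≤ μ := hl₁.trans hμ₁
  have hl := isFiniteMeasure_of_le μ hlμ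
  have hpayoff := hγ.ae_payoff_eq hc hstrict ((hlμ univ).trans_eq measure_univ)
    (ae_mono hlμ hκ.2.2) (compProd_mono_left hl₁ κ) (compProd_mono_left hl₂ κ)
  have hfalse : ∀ᵐ _ ∂l, False := by
    filter_upwards [hpayoff, ae_mono hlμ hne] with x heq hne using hne heq
  exact (ae_eq_bot.1 (Filter.eventually_false_iff_eq_bot.1 hfalse)).le

/-- Theorem (main): under [A], strict convexity of `y ↦ c₂(x,y)`, `c₁(x) ≠ c₂(x,x)` μ-a.e.,
absolute continuity of `ν`, and `P_c = P̄_c`, every optimal pair `(π, μ₁)` for the primal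
problem satisfies `μ₁ ⊥ (μ - μ₁)`. -/
theorem nonrandomized_optimal_exercise
    (μ ν : Measure ℝ) (c₁ : ℝ → ℝ) (c₂ : ℝ × ℝ → ℝ)
    (hA : AssumpA μ ν c₁ c₂)
    (hstrict : ∀ x : ℝ, StrictConvexOn ℝ Set.univ fun y => c₂ (x, y))
    (hne : ∀ᵐ x ∂μ, c₁ x ≠ c₂ (x, x))
    (hac : ν ≪ (volume : Measure ℝ))
    (heq : PrimalValue μ ν c₁ c₂ = RelaxedValue μ ν ![fun p => c₁ p.1, c₂]) :
    ∀ (κ : Kernel ℝ ℝ) (μ₁ : Measure ℝ), MartKernel μ ν κ → μ₁ ≤ μ →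
      ∫ p, c₁ p.1 ∂(μ₁ ⊗ₘ κ) + ∫ p, c₂ p ∂((μ - μ₁) ⊗ₘ κ) = PrimalValue μ ν c₁ c₂ →
      μ₁ ⟂ₘ (μ - μ₁) := by
  intro κ μ₁ hκ hμ₁ hval
  have : IsProbabilityMeasure μ := hA.1
  have : NullSingletonClass ν := ⟨fun y => hac (measure_singleton y)⟩
  exact nonrandomized_optimal_exercise_general μ ν c₁ c₂ hA.integrableData (ae_of_all _ hstrict)
    hne κ μ₁ hκ hμ₁ (hval.trans heq)

end
end

section
/- Assume [A], that y ↦ c₂(x,y) is strictly convex for each x, that c₁(x) ≠ c₂(x,x) for μ-a.e. x, that ν is absolutely continuous with respect to Lebesgue measure, and that P_c = P̄_c. Then for any fixed π ∈ ℳ(μ,ν), if (π, μ₁) and (π, μ₁′) are both optimal for the primal problem P_c, then μ₁ = μ₁′; that is, given any optimal model π, the optimal exercise measure μ₁ is unique. -/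
open MeasureTheory ProbabilityTheory Set
open scoped ENNReal

noncomputable section

/-!
Suppose two exercise measures `μ₁ ≠ μ₁'` are optimal for the kernel `κ`. By linearity their midpoint
is optimal as well, and under it a nonzero measure `τ` (half of `μ₁ - μ₁'`, say) of starting points
is both stopped and continued.

Since optimality holds in the relaxed problem, the stopped and the continued parts may be modified
separately. Moving any part of `τ ⊗ₘ κ` from one to the other gives
`c₁ x = ∫ y, c₂ (x, y) ∂κ x` for `τ`-a.e. `x`. Further, a stopped path `(x, z)` and a continued path
`(x', y)` may trade endpoints, provided that the traded `z` have mean `y`, so that both parts stay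
martingales. The stopped payoff does not see the endpoint, while by strict convexity of `c₂ (x', ·)`
the continued payoff increases as soon as `κ x` charges both sides of `y`. Hence almost no `κ x`
charges both sides of almost any `y`. As the endpoints `y` have an atomless law, `κ x` then charges
both sides of no point at all, not even of its mean, so `κ x = δ_x`. The first identity now reads
`c₁ x = c₂ (x, x)`, contrary to assumption.
-/

theorem exists_strict_subgradient {S : Set ℝ} {f : ℝ → ℝ} {y : ℝ} (hf : StrictConvexOn ℝ S f)
    (hy : y ∈ interior S) : ∃ a, ∀ z ∈ S, z ≠ y → f y + a * (z - y) < f z := by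
  have hyS := interior_subset hy
  refine ⟨derivWithin f (Ioi y) y, fun z hz hzy => ?_⟩
  rcases hzy.lt_or_gt with hlt | hgt
  · have hslope := (hf.slope_lt_leftDeriv hz hyS hlt
      (hf.convexOn.differentiableWithinAt_Iio_of_mem_interior hy)).trans_le
      (hf.convexOn.leftDeriv_le_rightDeriv_of_mem_interior hy)
    rw [slope_def_field, div_lt_iff₀ (sub_pos.2 hlt)] at hslope
    linarith
  · have hslope := hf.rightDeriv_lt_slope hyS hz hgt
      (hf.convexOn.differentiableWithinAt_Ioi_of_mem_interior hy)
    rw [slope_def_field, lt_div_iff₀ (sub_pos.2 hgt)] at hslope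
    linarith

section RealMeasures

variable {m : Measure ℝ} {y : ℝ}

/-- `m` charges both sides of the point `y`. -/
def Straddles (m : Measure ℝ) (y : ℝ) : Prop := 0 < m (Iio y) ∧ 0 < m (Ioi y)

theorem Straddles.exists_rat (h : Straddles m y) : ∃ q : ℚ, Straddles m q := by
  by_contra! hq
  have hnull : ∀ q : {q : ℚ // (q : ℝ) < y}, m (Iio (q : ℝ)) = 0 := fun q => by
    by_contra h0
    exact hq q ⟨pos_iff_ne_zero.2 h0, h.2.trans_le (measure_mono (Ioi_subset_Ioi q.2.le))⟩
  refine h.1.ne' (measure_mono_null (fun z hz => ?_) (measure_iUnion_null hnull))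
  obtain ⟨q, hzq, hqy⟩ := exists_rat_btwn (mem_Iio.1 hz)
  exact mem_iUnion.2 ⟨⟨q, hqy⟩, hzq⟩

theorem eq_dirac_of_not_straddles [IsProbabilityMeasure m] (hid : Integrable id m)
    (h : ¬ Straddles m (∫ y, y ∂m)) : m = Measure.dirac (∫ y, y ∂m) := by
  have hconst : ∫ _, (∫ y, y ∂m) ∂m = ∫ y, id y ∂m := by simp
  have hae : ∀ᵐ y ∂m, y = ∫ y, y ∂m := by
    rcases not_and_or.1 h with hside | hside <;> rw [not_lt, nonpos_iff_eq_zero] at hside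
    · have hle : ∀ᵐ y ∂m, ∫ y, y ∂m ≤ y := by
        filter_upwards [measure_eq_zero_iff_ae_notMem.1 hside] with y hy using not_lt.1 hy
      exact ((integral_eq_iff_of_ae_le (integrable_const _) hid hle).1 hconst).symm
    · have hle : ∀ᵐ y ∂m, y ≤ ∫ y, y ∂m := by
        filter_upwards [measure_eq_zero_iff_ae_notMem.1 hside] with y hy using not_lt.1 hy
      exact (integral_eq_iff_of_ae_le hid (integrable_const _) hle).1 hconst.symm
  simpa using Measure.map_congr (f := id) hae

theorem exists_measure_Ioo_pos_measure_Ioi_pos [NullSingletonClass m] {r : ℝ} (h : 0 < m (Ioi r)) :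
    ∃ t, 0 < m (Ioo r t) ∧ 0 < m (Ioi t) := by
  have hsupp : 0 < m (Ioi r ∩ m.support) := by
    rwa [measure_inter_conull' (measure_mono_null inter_subset_right m.measure_compl_support)]
  obtain ⟨a, ha, b, hb, hab⟩ :=
    (not_subsingleton_iff.1 fun hs => hsupp.ne' (hs.measure_zero m)).exists_lt
  obtain ⟨t, hat, htb⟩ := exists_between hab
  exact ⟨t, (Measure.mem_support_iff_forall a).1 ha.2 _ (Ioo_mem_nhds ha.1 hat),
    (Measure.mem_support_iff_forall b).1 hb.2 _ (Ioi_mem_nhds htb)⟩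

end RealMeasures

theorem smul_measure_le_of_le_one {α : Type*} {mα : MeasurableSpace α} {μ : Measure α} {a : ℝ≥0∞}
    (ha : a ≤ 1) : a • μ ≤ μ :=
  Measure.le_iff'.2 fun s => by simpa using mul_le_of_le_one_left' ha

theorem compProd_mono_left_s1 {α β : Type*} {mα : MeasurableSpace α} {mβ : MeasurableSpace β}
    {σ μ : Measure α} [IsFiniteMeasure μ] (h : σ ≤ μ) (κ : Kernel α β) : σ ⊗ₘ κ ≤ μ ⊗ₘ κ := by
  have := isFiniteMeasure_of_le μ h
  have := isFiniteMeasure_of_le μ (Measure.sub_le (μ := μ) (ν := σ))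
  rw [← Measure.sub_add_cancel_of_le h, Measure.compProd_add_left]
  exact Measure.le_add_left le_rfl

theorem integrable_integral_of_integrable_compProd {α β : Type*} {_ : MeasurableSpace α}
    {_ : MeasurableSpace β} {μ : Measure α} {κ : Kernel α β} [SFinite μ] [IsSFiniteKernel κ]
    {f : α × β → ℝ} (hf : Integrable f (μ ⊗ₘ κ)) : Integrable (fun x => ∫ y, f (x, y) ∂κ x) μ :=
  hf.integral_compProd (κ := Kernel.const Unit μ) (η := Kernel.prodMkLeft Unit κ) (a := ())

section Kernels

variable {α : Type*} {mα : MeasurableSpace α} {τ : Measure α} {κ : Kernel α ℝ}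

theorem ae_not_straddles_const [SFinite τ] [IsSFiniteKernel κ] [NullSingletonClass (κ ∘ₘ τ)]
    (h : ∀ᵐ u ∂(τ ⊗ₘ κ), ∀ᵐ x ∂τ, ¬ Straddles (κ x) u.2) (r : ℝ) :
    ∀ᵐ x ∂τ, ¬ Straddles (κ x) r := by
  set A : Set α := {x | Straddles (κ x) r}
  have hA : MeasurableSet A :=
    (measurableSet_lt measurable_const (κ.measurable_coe measurableSet_Iio)).inter
      (measurableSet_lt measurable_const (κ.measurable_coe measurableSet_Ioi))
  set l : Measure ℝ := κ ∘ₘ τ.restrict A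
  have l_apply {B : Set ℝ} (hB : MeasurableSet B) : l B = ∫⁻ x in A, κ x B ∂τ :=
    Measure.bind_apply hB κ.aemeasurable
  have : NullSingletonClass l := ⟨fun y => by
    have hy : (κ ∘ₘ τ) {y} = 0 := measure_singleton y
    rw [Measure.bind_apply (measurableSet_singleton y) κ.aemeasurable] at hy
    rw [l_apply (measurableSet_singleton y)]
    exact le_antisymm ((setLIntegral_le_lintegral A _).trans hy.le) zero_le⟩
  by_contra hr
  have hAτ : τ A ≠ 0 := fun h0 => hr (measure_eq_zero_iff_ae_notMem.1 h0)
  have hl : 0 < l (Ioi r) := by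
    rw [l_apply measurableSet_Ioi, setLIntegral_pos_iff (κ.measurable_coe measurableSet_Ioi),
      inter_eq_right.2 fun x hx => hx.2.ne']
    exact pos_iff_ne_zero.2 hAτ
  obtain ⟨t, hrt, ht⟩ := exists_measure_Ioo_pos_measure_Ioi_pos hl
  have hpos : (τ ⊗ₘ κ) (A ×ˢ Ioo r t) ≠ 0 := by
    rw [Measure.compProd_apply_prod hA measurableSet_Ioo, ← l_apply measurableSet_Ioo]
    exact hrt.ne'
  obtain ⟨u, ⟨-, hru, hut⟩, hu⟩ := (frequently_ae_mem_iff.2 hpos).and_eventually h |>.exists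
  refine ht.ne' ?_
  rw [l_apply measurableSet_Ioi]
  refine (lintegral_eq_zero_iff (κ.measurable_coe measurableSet_Ioi)).2 ?_
  filter_upwards [ae_restrict_of_ae hu, ae_restrict_mem hA] with x hx hxA
  by_contra hxt
  exact hx ⟨hxA.1.trans_le (measure_mono (Iio_subset_Iio hru.le)),
    (pos_iff_ne_zero.2 hxt).trans_le (measure_mono (Ioi_subset_Ioi hut.le))⟩

theorem ae_forall_not_straddles [SFinite τ] [IsSFiniteKernel κ] [NullSingletonClass (κ ∘ₘ τ)]
    (h : ∀ᵐ u ∂(τ ⊗ₘ κ), ∀ᵐ x ∂τ, ¬ Straddles (κ x) u.2) :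
    ∀ᵐ x ∂τ, ∀ y, ¬ Straddles (κ x) y := by
  filter_upwards [ae_all_iff.2 fun q : ℚ => ae_not_straddles_const h q] with x hx y hy
  exact hy.exists_rat.elim hx

end Kernels

/-- The weight that centres `m` at `y`: points on either side of `y` are weighted by the first
absolute moment of the opposite side, normalised to take values in `[0, 1]`. -/
def balancingWeight (m : Measure ℝ) (y z : ℝ) : ℝ :=
  (if z < y then ∫ w, max (w - y) 0 ∂m else ∫ w, max (y - w) 0 ∂m) /
    (∫ w, max (w - y) 0 ∂m + ∫ w, max (y - w) 0 ∂m)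

section BalancingWeight

variable {m : Measure ℝ} {f : ℝ → ℝ} {y : ℝ}

theorem balancingWeight_nonneg (m : Measure ℝ) (y z : ℝ) : 0 ≤ balancingWeight m y z := by
  unfold balancingWeight
  have : 0 ≤ ∫ w, max (w - y) 0 ∂m := integral_nonneg fun _ => le_max_right _ _
  have : 0 ≤ ∫ w, max (y - w) 0 ∂m := integral_nonneg fun _ => le_max_right _ _
  split_ifs <;> positivity

theorem balancingWeight_le_one (m : Measure ℝ) (y z : ℝ) : balancingWeight m y z ≤ 1 := by
  have : 0 ≤ ∫ w, max (w - y) 0 ∂m := integral_nonneg fun _ => le_max_right _ _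
  have : 0 ≤ ∫ w, max (y - w) 0 ∂m := integral_nonneg fun _ => le_max_right _ _
  refine div_le_one_of_le₀ ?_ (by positivity)
  split_ifs <;> linarith

theorem integral_max_zero_pos {β : Type*} {mβ : MeasurableSpace β} {ρ : Measure β} {g : β → ℝ}
    (hg : Integrable g ρ) (hpos : 0 < ρ {w | 0 < g w}) : 0 < ∫ w, max (g w) 0 ∂ρ := by
  refine (integral_pos_iff_support_of_nonneg (fun _ => le_max_right _ _) hg.pos_part).2 ?_
  exact hpos.trans_le (measure_mono fun w hw => (lt_max_of_lt_left hw).ne')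

theorem balancingWeight_pos [IsFiniteMeasure m] (hid : Integrable id m) (h : Straddles m y)
    (z : ℝ) : 0 < balancingWeight m y z := by
  have hright : 0 < ∫ w, max (w - y) 0 ∂m :=
    integral_max_zero_pos (hid.sub (integrable_const y))
      (by simpa only [id, Pi.sub_apply, sub_pos] using! h.2)
  have hleft : 0 < ∫ w, max (y - w) 0 ∂m :=
    integral_max_zero_pos ((integrable_const y).sub hid)
      (by simpa only [id, Pi.sub_apply, sub_pos] using! h.1)
  unfold balancingWeight
  split_ifs <;> positivity

theorem integral_balancingWeight_mul_sub [IsFiniteMeasure m] (hid : Integrable id m) (y : ℝ) :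
    ∫ z, balancingWeight m y z * (z - y) ∂m = 0 := by
  set a := ∫ w, max (w - y) 0 ∂m with ha
  set b := ∫ w, max (y - w) 0 ∂m with hb
  have hsplit (z : ℝ) :
      balancingWeight m y z * (z - y) = (b * max (z - y) 0 - a * max (y - z) 0) / (a + b) := by
    rw [balancingWeight, ← ha, ← hb]
    split_ifs with hzy
    · rw [max_eq_right (by linarith), max_eq_left (by linarith)]; ring
    · rw [max_eq_left (by linarith), max_eq_right (by linarith)]; ring
  have hright : Integrable (fun z => max (z - y) 0) m := (hid.sub (integrable_const y)).pos_part
  have hleft : Integrable (fun z => max (y - z) 0) m := ((integrable_const y).sub hid).pos_part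
  simp_rw [hsplit]
  rw [integral_div, integral_sub (hright.const_mul b) (hleft.const_mul a), integral_const_mul,
    integral_const_mul, ← ha, ← hb, mul_comm b a, sub_self, zero_div]

theorem measurable_balancingWeight_apply (m : Measure ℝ) (y : ℝ) :
    Measurable (balancingWeight m y) :=
  (Measurable.ite measurableSet_Iio measurable_const measurable_const).div_const _

theorem integrable_balancingWeight_mul {β : Type*} {mβ : MeasurableSpace β} {ρ : Measure β}
    {m : β → Measure ℝ} {y z g : β → ℝ}
    (hw : Measurable fun b => balancingWeight (m b) (y b) (z b)) (hg : Integrable g ρ) :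
    Integrable (fun b => balancingWeight (m b) (y b) (z b) * g b) ρ :=
  hg.bdd_mul hw.aestronglyMeasurable (c := 1) (.of_forall fun b => by
    rw [Real.norm_of_nonneg (balancingWeight_nonneg _ _ _)]
    exact balancingWeight_le_one _ _ _)

theorem exists_pos_off_integral_balancingWeight_mul_eq [IsFiniteMeasure m] (hid : Integrable id m)
    (hconv : StrictConvexOn ℝ univ f)
    (hf : Integrable (fun z => balancingWeight m y z * (f z - f y)) m) :
    ∃ g : ℝ → ℝ, 0 ≤ g ∧ (∀ z ≠ y, 0 < g z) ∧
      Integrable (fun z => balancingWeight m y z * g z) m ∧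
      ∫ z, balancingWeight m y z * g z ∂m = ∫ z, balancingWeight m y z * (f z - f y) ∂m := by
  obtain ⟨a, ha⟩ := exists_strict_subgradient hconv (y := y) (by simp)
  have hpos : ∀ z ≠ y, 0 < f z - f y - a * (z - y) := fun z hz => by
    linarith [ha z (mem_univ z) hz]
  have hlin : Integrable (fun z => a * (balancingWeight m y z * (z - y))) m :=
    (integrable_balancingWeight_mul (measurable_balancingWeight_apply m y)
      (hid.sub (integrable_const y))).const_mul a
  have hexpand : (fun z => balancingWeight m y z * (f z - f y - a * (z - y))) =
      fun z => balancingWeight m y z * (f z - f y) - a * (balancingWeight m y z * (z - y)) := by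
    ext z; ring
  refine ⟨fun z => f z - f y - a * (z - y), fun z => ?_, hpos, ?_, ?_⟩
  · rcases eq_or_ne z y with rfl | hz
    · simp
    · exact (hpos z hz).le
  · exact hexpand ▸ hf.sub hlin
  · rw [hexpand, integral_sub hf hlin, integral_const_mul, integral_balancingWeight_mul_sub hid,
      mul_zero, sub_zero]

theorem integral_balancingWeight_mul_nonneg [IsFiniteMeasure m] (hid : Integrable id m)
    (hconv : StrictConvexOn ℝ univ f)
    (hf : Integrable (fun z => balancingWeight m y z * (f z - f y)) m) :
    0 ≤ ∫ z, balancingWeight m y z * (f z - f y) ∂m := by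
  obtain ⟨g, hg, -, -, heq⟩ := exists_pos_off_integral_balancingWeight_mul_eq hid hconv hf
  exact heq ▸ integral_nonneg fun z => mul_nonneg (balancingWeight_nonneg m y z) (hg z)

theorem integral_balancingWeight_mul_pos [IsFiniteMeasure m] (hid : Integrable id m)
    (hconv : StrictConvexOn ℝ univ f)
    (hf : Integrable (fun z => balancingWeight m y z * (f z - f y)) m) (h : Straddles m y) :
    0 < ∫ z, balancingWeight m y z * (f z - f y) ∂m := by
  obtain ⟨g, hg, hpos, hint, heq⟩ := exists_pos_off_integral_balancingWeight_mul_eq hid hconv hf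
  rw [← heq, integral_pos_iff_support_of_nonneg
    (fun z => mul_nonneg (balancingWeight_nonneg m y z) (hg z)) hint]
  exact h.2.trans_le (measure_mono fun z hz =>
    (mul_pos (balancingWeight_pos hid h z) (hpos z (ne_of_gt hz))).ne')

end BalancingWeight

section BalancedExchange

variable {α : Type*} {mα : MeasurableSpace α} {τ : Measure α} {κ : Kernel α ℝ}

theorem measurable_balancingWeight (κ : Kernel α ℝ) [IsSFiniteKernel κ] :
    Measurable fun p : (α × ℝ) × ℝ => balancingWeight (κ p.1.1) p.1.2 p.2 := by
  have hright : Measurable fun p : α × ℝ => ∫ w, max (w - p.2) 0 ∂κ p.1 :=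
    (StronglyMeasurable.integral_kernel_prod_right' (κ := κ.comap Prod.fst measurable_fst)
      (f := fun p : (α × ℝ) × ℝ => max (p.2 - p.1.2) 0)
      (by fun_prop : Measurable _).stronglyMeasurable).measurable
  have hleft : Measurable fun p : α × ℝ => ∫ w, max (p.2 - w) 0 ∂κ p.1 :=
    (StronglyMeasurable.integral_kernel_prod_right' (κ := κ.comap Prod.fst measurable_fst)
      (f := fun p : (α × ℝ) × ℝ => max (p.1.2 - p.2) 0)
      (by fun_prop : Measurable _).stronglyMeasurable).measurable
  exact (Measurable.ite (measurableSet_lt measurable_snd (measurable_snd.comp measurable_fst))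
    (hright.comp measurable_fst) (hleft.comp measurable_fst)).div
      ((hright.add hleft).comp measurable_fst)

/-- The pairs of paths `((x, z), (x', y))` whose endpoints `z` and `y` are to be traded: two
independent draws from `τ ⊗ₘ κ`, thinned so that, given `x` and `(x', y)`, the endpoint `z` has
mean `y`. -/
def balancedExchange (τ : Measure α) (κ : Kernel α ℝ) : Measure ((α × ℝ) × (α × ℝ)) :=
  ((τ ⊗ₘ κ).prod (τ ⊗ₘ κ)).withDensity fun q =>
    ENNReal.ofReal (balancingWeight (κ q.1.1) q.2.2 q.1.2)

theorem balancedExchange_le (τ : Measure α) (κ : Kernel α ℝ) :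
    balancedExchange τ κ ≤ (τ ⊗ₘ κ).prod (τ ⊗ₘ κ) :=
  (withDensity_mono (.of_forall fun _ =>
    ENNReal.ofReal_le_one.2 (balancingWeight_le_one _ _ _))).trans withDensity_one.le

theorem measurable_balancedExchange_density (κ : Kernel α ℝ) [IsSFiniteKernel κ] :
    Measurable fun q : (α × ℝ) × (α × ℝ) => balancingWeight (κ q.1.1) q.2.2 q.1.2 :=
  (measurable_balancingWeight κ).comp
    (by fun_prop : Measurable fun q : (α × ℝ) × (α × ℝ) => ((q.1.1, q.2.2), q.1.2))

variable [IsFiniteMeasure τ] [IsMarkovKernel κ]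

theorem fst_balancedExchange_le (hτ : τ univ ≤ 1) : (balancedExchange τ κ).fst ≤ τ ⊗ₘ κ := by
  refine (Measure.fst_mono (balancedExchange_le τ κ)).trans ?_
  rw [Measure.fst, Measure.map_fst_prod, Measure.compProd_apply_univ]
  exact smul_measure_le_of_le_one hτ

theorem snd_balancedExchange_le (hτ : τ univ ≤ 1) : (balancedExchange τ κ).snd ≤ τ ⊗ₘ κ := by
  refine (Measure.snd_mono (balancedExchange_le τ κ)).trans ?_
  rw [Measure.snd, Measure.map_snd_prod, Measure.compProd_apply_univ]
  exact smul_measure_le_of_le_one hτ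

theorem integral_balancedExchange {F : (α × ℝ) × (α × ℝ) → ℝ}
    (hF : Integrable F ((τ ⊗ₘ κ).prod (τ ⊗ₘ κ))) :
    ∫ q, F q ∂(balancedExchange τ κ) = ∫ u, (∫ x, (∫ z,
      balancingWeight (κ x) u.2 z * F ((x, z), u) ∂(κ x)) ∂τ) ∂(τ ⊗ₘ κ) := by
  have hmeas := measurable_balancedExchange_density κ
  have hint := integrable_balancingWeight_mul hmeas hF
  calc ∫ q, F q ∂(balancedExchange τ κ)
      = ∫ q, balancingWeight (κ q.1.1) q.2.2 q.1.2 * F q ∂((τ ⊗ₘ κ).prod (τ ⊗ₘ κ)) := by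
        rw [balancedExchange, integral_withDensity_eq_integral_toReal_smul
          hmeas.ennreal_ofReal (.of_forall fun _ => ENNReal.ofReal_lt_top)]
        simp only [ENNReal.toReal_ofReal (balancingWeight_nonneg _ _ _), smul_eq_mul]
    _ = ∫ u, (∫ p, balancingWeight (κ p.1) u.2 p.2 * F (p, u) ∂(τ ⊗ₘ κ)) ∂(τ ⊗ₘ κ) :=
        integral_prod_symm _ hint
    _ = _ := by
        refine integral_congr_ae ?_
        filter_upwards [hint.prod_left_ae] with u hu using Measure.integral_compProd hu

theorem setIntegral_balancedExchange_snd_sub_snd (hκ : ∀ᵐ x ∂τ, Integrable id (κ x))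
    (hsnd : Integrable (fun p : α × ℝ => p.2) (τ ⊗ₘ κ)) {A : Set (α × α)} (hA : MeasurableSet A) :
    ∫ q in (fun q : (α × ℝ) × (α × ℝ) => (q.1.1, q.2.1)) ⁻¹' A, (q.1.2 - q.2.2)
      ∂(balancedExchange τ κ) = 0 := by
  have hpre : MeasurableSet ((fun q : (α × ℝ) × (α × ℝ) => (q.1.1, q.2.1)) ⁻¹' A) :=
    hA.preimage (by fun_prop)
  have hint : Integrable (fun q : (α × ℝ) × (α × ℝ) => q.1.2 - q.2.2)
      ((τ ⊗ₘ κ).prod (τ ⊗ₘ κ)) := (hsnd.comp_fst _).sub (hsnd.comp_snd _)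
  rw [← integral_indicator hpre, integral_balancedExchange (hint.indicator hpre)]
  refine integral_eq_zero_of_ae (.of_forall fun u => integral_eq_zero_of_ae ?_)
  filter_upwards [hκ] with x hx
  by_cases hxu : (x, u.1) ∈ A
  · simpa [indicator, hxu] using integral_balancingWeight_mul_sub hx u.2
  · simp [indicator, hxu]

theorem ae_not_straddles_of_integral_balancedExchange_nonpos {c : α × ℝ → ℝ}
    (hconv : ∀ x, StrictConvexOn ℝ univ fun y => c (x, y)) (hκ : ∀ᵐ x ∂τ, Integrable id (κ x))
    (hc : Integrable (fun q : (α × ℝ) × (α × ℝ) => c (q.2.1, q.1.2) - c q.2)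
      ((τ ⊗ₘ κ).prod (τ ⊗ₘ κ)))
    (hgain : ∫ q, (c (q.2.1, q.1.2) - c q.2) ∂(balancedExchange τ κ) ≤ 0) :
    ∀ᵐ u ∂(τ ⊗ₘ κ), ∀ᵐ x ∂τ, ¬ Straddles (κ x) u.2 := by
  set fibreGain : α × ℝ → α → ℝ := fun u x =>
    ∫ z, balancingWeight (κ x) u.2 z * (c (u.1, z) - c u) ∂(κ x)
  have hint := integrable_balancingWeight_mul (measurable_balancedExchange_density κ) hc
  have hfibre : ∀ᵐ u ∂(τ ⊗ₘ κ), ∀ᵐ x ∂τ, Integrable id (κ x) ∧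
      Integrable (fun z => balancingWeight (κ x) u.2 z * (c (u.1, z) - c u)) (κ x) := by
    filter_upwards [hint.prod_left_ae] with u hu
    filter_upwards [hκ, ((Measure.integrable_compProd_iff hu.1).1 hu).1] with x hx hxu
    exact ⟨hx, hxu⟩
  have hnonneg : ∀ᵐ u ∂(τ ⊗ₘ κ), 0 ≤ᵐ[τ] fibreGain u := by
    filter_upwards [hfibre] with u hu
    filter_upwards [hu] with x hx
    exact integral_balancingWeight_mul_nonneg hx.1 (hconv u.1) hx.2
  have hint_inner : ∀ᵐ u ∂(τ ⊗ₘ κ), Integrable (fibreGain u) τ := by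
    filter_upwards [hint.prod_left_ae] with u hu using
      integrable_integral_of_integrable_compProd hu
  have hzero : ∀ᵐ u ∂(τ ⊗ₘ κ), ∫ x, fibreGain u x ∂τ = 0 := by
    have hint_outer : Integrable (fun u => ∫ x, fibreGain u x ∂τ) (τ ⊗ₘ κ) := by
      refine hint.integral_prod_right.congr ?_
      filter_upwards [hint.prod_left_ae] with u hu using Measure.integral_compProd hu
    have hnonneg_outer : 0 ≤ᵐ[τ ⊗ₘ κ] fun u => ∫ x, fibreGain u x ∂τ :=
      hnonneg.mono fun u => integral_nonneg_of_ae
    rw [integral_balancedExchange hc] at hgain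
    exact (integral_eq_zero_iff_of_nonneg_ae hnonneg_outer hint_outer).1
      (hgain.antisymm (integral_nonneg_of_ae hnonneg_outer))
  filter_upwards [hfibre, hnonneg, hint_inner, hzero] with u hu hnn hi h0
  filter_upwards [hu, (integral_eq_zero_iff_of_nonneg_ae hnn hi).1 h0] with x hx hx0 hstr
  exact (integral_balancingWeight_mul_pos hx.1 (hconv u.1) hx.2 hstr).ne' hx0

end BalancedExchange

/-- A finite measure on `ℝ × ℝ` with integrable coordinates under which the second coordinate has
conditional mean equal to the first; unlike a disintegration, this form of the martingale
property is visibly stable under sums and exchanges of mass. -/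
structure IsMartingaleMeasure (γ : Measure (ℝ × ℝ)) : Prop where
  isFiniteMeasure : IsFiniteMeasure γ
  integrable_fst : Integrable (fun p : ℝ × ℝ => p.1) γ
  integrable_snd : Integrable (fun p : ℝ × ℝ => p.2) γ
  setIntegral_snd_sub_fst : ∀ B : Set ℝ, MeasurableSet B →
    ∫ p in Prod.fst ⁻¹' B, (p.2 - p.1) ∂γ = 0

theorem setIntegral_compProd_preimage_fst {α β : Type*} {mα : MeasurableSpace α}
    {mβ : MeasurableSpace β} {μ : Measure α} {κ : Kernel α β} [SFinite μ] [IsSFiniteKernel κ]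
    {f : α × β → ℝ} (hf : Integrable f (μ ⊗ₘ κ)) {B : Set α} (hB : MeasurableSet B) :
    ∫ p in Prod.fst ⁻¹' B, f p ∂(μ ⊗ₘ κ) = ∫ x in B, ∫ y, f (x, y) ∂κ x ∂μ := by
  rw [← prod_univ, Measure.setIntegral_compProd hB MeasurableSet.univ hf.integrableOn]
  simp only [Measure.restrict_univ]

theorem integral_sub_const_eq_zero_iff {m : Measure ℝ} [IsProbabilityMeasure m]
    (hid : Integrable id m) (x : ℝ) : ∫ y, (y - x) ∂m = 0 ↔ ∫ y, y ∂m = x := by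
  rw [integral_sub (f := fun y => y) hid (integrable_const x)]
  simp [sub_eq_zero]

namespace IsMartingaleMeasure

variable {γ γ' : Measure (ℝ × ℝ)}

theorem integrable_snd_sub_fst (h : IsMartingaleMeasure γ) :
    Integrable (fun p : ℝ × ℝ => p.2 - p.1) γ :=
  h.integrable_snd.sub h.integrable_fst

theorem add (h : IsMartingaleMeasure γ) (h' : IsMartingaleMeasure γ') :
    IsMartingaleMeasure (γ + γ') where
  isFiniteMeasure := by
    have := h.isFiniteMeasure
    have := h'.isFiniteMeasure
    infer_instance
  integrable_fst := h.integrable_fst.add_measure h'.integrable_fst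
  integrable_snd := h.integrable_snd.add_measure h'.integrable_snd
  setIntegral_snd_sub_fst B hB := by
    rw [Measure.restrict_add, integral_add_measure h.integrable_snd_sub_fst.integrableOn
      h'.integrable_snd_sub_fst.integrableOn, h.setIntegral_snd_sub_fst B hB,
      h'.setIntegral_snd_sub_fst B hB, add_zero]

theorem replace_endpoint {Ω : Type*} {mΩ : MeasurableSpace Ω} {Q : Measure Ω} [IsFiniteMeasure Q]
    {X Y Y' : Ω → ℝ} {R : Measure (ℝ × ℝ)} (hX : Measurable X) (hY : Measurable Y)
    (hY' : Measurable Y') (hint : Integrable Y' Q)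
    (hmean : ∀ B : Set ℝ, MeasurableSet B → ∫ ω in X ⁻¹' B, (Y ω - Y' ω) ∂Q = 0)
    (h : IsMartingaleMeasure (R + Q.map fun ω => (X ω, Y ω))) :
    IsMartingaleMeasure (R + Q.map fun ω => (X ω, Y' ω)) := by
  have hXY := (hX.prodMk hY).aemeasurable (μ := Q)
  have hXY' := (hX.prodMk hY').aemeasurable (μ := Q)
  have hR : IsFiniteMeasure R := by
    have := h.isFiniteMeasure
    exact isFiniteMeasure_of_le (R + Q.map fun ω => (X ω, Y ω)) (Measure.le_add_right le_rfl)
  have hXint : Integrable X Q := h.integrable_fst.right_of_add_measure.comp_aemeasurable hXY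
  have hYint : Integrable Y Q := h.integrable_snd.right_of_add_measure.comp_aemeasurable hXY
  have hfst : Integrable (fun p : ℝ × ℝ => p.1) (Q.map fun ω => (X ω, Y' ω)) :=
    (integrable_map_measure measurable_fst.aestronglyMeasurable hXY').2 hXint
  have hsnd : Integrable (fun p : ℝ × ℝ => p.2) (Q.map fun ω => (X ω, Y' ω)) :=
    (integrable_map_measure measurable_snd.aestronglyMeasurable hXY').2 hint
  refine ⟨inferInstance, h.integrable_fst.left_of_add_measure.add_measure hfst,
    h.integrable_snd.left_of_add_measure.add_measure hsnd, fun B hB => ?_⟩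
  have hmap {Z : Ω → ℝ} (hZ : Measurable Z) :
      ∫ p in Prod.fst ⁻¹' B, (p.2 - p.1) ∂(Q.map fun ω => (X ω, Z ω)) =
        ∫ ω in X ⁻¹' B, (Z ω - X ω) ∂Q :=
    setIntegral_map (measurable_fst hB) (by fun_prop) (hX.prodMk hZ).aemeasurable
  have hRint := h.integrable_snd_sub_fst.left_of_add_measure.integrableOn (s := Prod.fst ⁻¹' B)
  have hsame : ∫ ω in X ⁻¹' B, (Y' ω - X ω) ∂Q = ∫ ω in X ⁻¹' B, (Y ω - X ω) ∂Q := by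
    have hdiff := integral_sub (f := fun ω => Y ω - X ω) (g := fun ω => Y' ω - X ω)
      (hYint.sub hXint).integrableOn (hint.sub hXint).integrableOn (μ := Q.restrict (X ⁻¹' B))
    simp only [sub_sub_sub_cancel_right, hmean B hB] at hdiff
    linarith
  rw [Measure.restrict_add, integral_add_measure hRint (hsnd.sub hfst).integrableOn, hmap hY',
    hsame, ← hmap hY, ← integral_add_measure hRint
      h.integrable_snd_sub_fst.right_of_add_measure.integrableOn, ← Measure.restrict_add,
    h.setIntegral_snd_sub_fst B hB]

theorem exists_kernel (h : IsMartingaleMeasure γ) :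
    ∃ κ : Kernel ℝ ℝ, IsMarkovKernel κ ∧ γ.fst ⊗ₘ κ = γ ∧
      ∀ᵐ x ∂γ.fst, Integrable id (κ x) ∧ ∫ y, y ∂(κ x) = x := by
  have := h.isFiniteMeasure
  set κ := γ.condKernel
  have hγ : γ.fst ⊗ₘ κ = γ := γ.disintegrate κ
  have hsnd : Integrable (fun p : ℝ × ℝ => p.2) (γ.fst ⊗ₘ κ) := by rw [hγ]; exact h.integrable_snd
  have hsub : Integrable (fun p : ℝ × ℝ => p.2 - p.1) (γ.fst ⊗ₘ κ) := by
    rw [hγ]; exact h.integrable_snd_sub_fst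
  have hcentred : (fun x => ∫ y, (y - x) ∂κ x) =ᵐ[γ.fst] 0 := by
    have hint := integrable_integral_of_integrable_compProd hsub
    refine hint.ae_eq_zero_of_forall_setIntegral_eq_zero fun B hB _ => ?_
    rw [← setIntegral_compProd_preimage_fst hsub hB, hγ, h.setIntegral_snd_sub_fst B hB]
  refine ⟨κ, inferInstance, hγ, ?_⟩
  filter_upwards [((Measure.integrable_compProd_iff hsnd.1).1 hsnd).1, hcentred] with x hx hx0
  exact ⟨hx, (integral_sub_const_eq_zero_iff hx x).1 hx0⟩

theorem isSubMart (h : IsMartingaleMeasure γ) : IsSubMart γ :=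
  ⟨h.isFiniteMeasure, .inr h.exists_kernel⟩

theorem mem_MT (h : IsMartingaleMeasure γ) : γ ∈ MT γ.fst γ.snd := by
  obtain ⟨κ, hmarkov, hγ, hκ⟩ := h.exists_kernel
  exact ⟨κ, ⟨hmarkov, by rw [hγ]; rfl, hκ⟩, hγ.symm⟩

end IsMartingaleMeasure

/-- The payoff of stopping at time one under `γ₁` and at time two under `γ₂`. -/
def splitPayoff (c₁ : ℝ → ℝ) (c₂ : ℝ × ℝ → ℝ) (γ₁ γ₂ : Measure (ℝ × ℝ)) : ℝ :=
  ∫ p, c₁ p.1 ∂γ₁ + ∫ p, c₂ p ∂γ₂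

/-- `(γ₁, γ₂)` is a competitor in the relaxed problem: a martingale transport from `μ` to `ν`
split into two martingale measures, the stopped part `γ₁` and the continued part `γ₂`. -/
structure IsRelaxedModel (μ ν : Measure ℝ) (γ₁ γ₂ : Measure (ℝ × ℝ)) : Prop where
  left : IsMartingaleMeasure γ₁
  right : IsMartingaleMeasure γ₂
  fst_add : (γ₁ + γ₂).fst = μ
  snd_add : (γ₁ + γ₂).snd = ν

/-- `(γ₁, γ₂)` attains the relaxed value for the American payoff `(c₁, c₂)`. -/
structure IsOptimalModel (μ ν : Measure ℝ) (c₁ : ℝ → ℝ) (c₂ : ℝ × ℝ → ℝ)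
    (γ₁ γ₂ : Measure (ℝ × ℝ)) : Prop extends IsRelaxedModel μ ν γ₁ γ₂ where
  splitPayoff_le : ∀ ⦃γ₁' γ₂' : Measure (ℝ × ℝ)⦄, IsRelaxedModel μ ν γ₁' γ₂' →
    splitPayoff c₁ c₂ γ₁' γ₂' ≤ splitPayoff c₁ c₂ γ₁ γ₂

/-- The payoffs are measurable and dominated by a separable integrable function, as in
Assumption [A] but without any continuity. -/
structure DominatedPayoff (μ ν : Measure ℝ) (c₁ : ℝ → ℝ) (c₂ : ℝ × ℝ → ℝ) : Prop where
  measurable_left : Measurable c₁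
  measurable_right : Measurable c₂
  exists_bound : ∃ v w : ℝ → ℝ, Integrable v μ ∧ Integrable w ν ∧
    ∀ x y : ℝ, |c₁ x| + |c₂ (x, y)| ≤ v x + w y

theorem AssumpA.dominatedPayoff {μ ν : Measure ℝ} {c₁ : ℝ → ℝ} {c₂ : ℝ × ℝ → ℝ}
    (h : AssumpA μ ν c₁ c₂) : DominatedPayoff μ ν c₁ c₂ := by
  obtain ⟨-, -, -, -, hc₁, hc₂, -, v, w, -, -, hv, hw, hvw⟩ := h
  exact ⟨hc₁.measurable, hc₂.measurable, v, w, hv, hw, hvw⟩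

theorem integrable_add_of_marginals_le {μ ν : Measure ℝ} {v w : ℝ → ℝ} {γ : Measure (ℝ × ℝ)}
    (hv : Integrable v μ) (hw : Integrable w ν) (hfst : γ.fst ≤ μ) (hsnd : γ.snd ≤ ν) :
    Integrable (fun p : ℝ × ℝ => v p.1 + w p.2) γ :=
  ((hv.mono_measure hfst).comp_measurable measurable_fst).add
    ((hw.mono_measure hsnd).comp_measurable measurable_snd)

namespace DominatedPayoff

variable {μ ν : Measure ℝ} {c₁ : ℝ → ℝ} {c₂ : ℝ × ℝ → ℝ} {γ γ₁ γ₂ : Measure (ℝ × ℝ)}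

theorem integrable_left (hc : DominatedPayoff μ ν c₁ c₂) (hfst : γ.fst ≤ μ) (hsnd : γ.snd ≤ ν) :
    Integrable (fun p => c₁ p.1) γ := by
  obtain ⟨v, w, hv, hw, hvw⟩ := hc.exists_bound
  refine (integrable_add_of_marginals_le hv hw hfst hsnd).mono'
    (hc.measurable_left.comp measurable_fst).aestronglyMeasurable (.of_forall fun p => ?_)
  linarith [hvw p.1 p.2, abs_nonneg (c₂ (p.1, p.2)), Real.norm_eq_abs (c₁ p.1)]

theorem integrable_right (hc : DominatedPayoff μ ν c₁ c₂) (hfst : γ.fst ≤ μ) (hsnd : γ.snd ≤ ν) :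
    Integrable c₂ γ := by
  obtain ⟨v, w, hv, hw, hvw⟩ := hc.exists_bound
  refine (integrable_add_of_marginals_le hv hw hfst hsnd).mono'
    hc.measurable_right.aestronglyMeasurable (.of_forall fun p => ?_)
  linarith [hvw p.1 p.2, abs_nonneg (c₁ p.1), Real.norm_eq_abs (c₂ (p.1, p.2))]

theorem integrable_prod [IsFiniteMeasure γ] (hc : DominatedPayoff μ ν c₁ c₂) (hfst : γ.fst ≤ μ)
    (hsnd : γ.snd ≤ ν) :
    Integrable (fun q : (ℝ × ℝ) × (ℝ × ℝ) => c₂ (q.2.1, q.1.2)) (γ.prod γ) := by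
  obtain ⟨v, w, hv, hw, hvw⟩ := hc.exists_bound
  have hv' : Integrable (fun p => v p.1) γ := (hv.mono_measure hfst).comp_measurable measurable_fst
  have hw' : Integrable (fun p => w p.2) γ := (hw.mono_measure hsnd).comp_measurable measurable_snd
  have hc₂ := hc.measurable_right
  refine ((hv'.comp_snd γ).add (hw'.comp_fst γ)).mono'
    (by fun_prop : Measurable _).aestronglyMeasurable (.of_forall fun q => ?_)
  simp only [Pi.add_apply]
  linarith [hvw q.2.1 q.1.2, abs_nonneg (c₁ q.2.1), Real.norm_eq_abs (c₂ (q.2.1, q.1.2))]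

theorem exists_splitPayoff_le (hc : DominatedPayoff μ ν c₁ c₂) :
    ∃ C, ∀ γ₁ γ₂ : Measure (ℝ × ℝ), (γ₁ + γ₂).fst = μ → (γ₁ + γ₂).snd = ν →
      splitPayoff c₁ c₂ γ₁ γ₂ ≤ C := by
  obtain ⟨v, w, hv, hw, hvw⟩ := hc.exists_bound
  refine ⟨∫ x, v x ∂μ + ∫ y, w y ∂ν, ?_⟩
  rintro γ₁ γ₂ rfl rfl
  have hle₁ : γ₁ ≤ γ₁ + γ₂ := Measure.le_add_right le_rfl
  have hle₂ : γ₂ ≤ γ₁ + γ₂ := Measure.le_add_left le_rfl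
  have hint := integrable_add_of_marginals_le hv hw le_rfl le_rfl
  calc splitPayoff c₁ c₂ γ₁ γ₂
      ≤ ∫ p, (v p.1 + w p.2) ∂γ₁ + ∫ p, (v p.1 + w p.2) ∂γ₂ := by
        refine add_le_add
          (integral_mono (hc.integrable_left (Measure.fst_mono hle₁) (Measure.snd_mono hle₁))
            (hint.mono_measure hle₁) fun p => ?_)
          (integral_mono (hc.integrable_right (Measure.fst_mono hle₂) (Measure.snd_mono hle₂))
            (hint.mono_measure hle₂) fun p => ?_)
        · linarith [hvw p.1 p.2, abs_nonneg (c₂ (p.1, p.2)), le_abs_self (c₁ p.1)]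
        · linarith [hvw p.1 p.2, abs_nonneg (c₁ p.1), le_abs_self (c₂ (p.1, p.2))]
    _ = ∫ p, (v p.1 + w p.2) ∂(γ₁ + γ₂) :=
        (integral_add_measure (hint.mono_measure hle₁) (hint.mono_measure hle₂)).symm
    _ = ∫ x, v x ∂(γ₁ + γ₂).fst + ∫ y, w y ∂(γ₁ + γ₂).snd := by
        rw [integral_add (f := fun p : ℝ × ℝ => v p.1) (g := fun p : ℝ × ℝ => w p.2)
          (hv.comp_measurable measurable_fst) (hw.comp_measurable measurable_snd),
          Measure.fst, Measure.snd, integral_map measurable_fst.aemeasurable hv.1,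
          integral_map measurable_snd.aemeasurable hw.1]

theorem splitPayoff_le_relaxedValue [IsFiniteMeasure μ] (hc : DominatedPayoff μ ν c₁ c₂)
    (h : IsRelaxedModel μ ν γ₁ γ₂) :
    splitPayoff c₁ c₂ γ₁ γ₂ ≤ RelaxedValue μ ν ![fun p => c₁ p.1, c₂] := by
  obtain ⟨C, hC⟩ := hc.exists_splitPayoff_le
  refine le_csSup ⟨C, ?_⟩ ⟨![γ₁, γ₂], ⟨?_, ?_⟩, ?_⟩
  · rintro _ ⟨γ, ⟨-, κ, ⟨_, hsnd, -⟩, hγ⟩, rfl⟩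
    simp only [Fin.sum_univ_two] at hγ ⊢
    exact hC _ _ (by rw [hγ, Measure.fst_compProd]) (by rw [hγ]; exact hsnd)
  · exact Fin.forall_fin_two.2 ⟨h.left.isSubMart, h.right.isSubMart⟩
  · simpa [Fin.sum_univ_two, h.fst_add, h.snd_add] using (h.left.add h.right).mem_MT
  · simp [Fin.sum_univ_two, splitPayoff]

end DominatedPayoff

namespace MartKernel

variable {μ ν σ σ₁ σ₂ : Measure ℝ} {κ : Kernel ℝ ℝ}

theorem compProd_snd_le [IsFiniteMeasure μ] (hκ : MartKernel μ ν κ) (hσ : σ ≤ μ) :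
    (σ ⊗ₘ κ).snd ≤ ν :=
  (Measure.snd_mono (compProd_mono_left_s1 hσ κ)).trans hκ.2.1.le

theorem isMartingaleMeasure [IsFiniteMeasure μ] (hμ : Integrable id μ) (hν : Integrable id ν)
    (hκ : MartKernel μ ν κ) (hσ : σ ≤ μ) : IsMartingaleMeasure (σ ⊗ₘ κ) := by
  have := hκ.1
  have := isFiniteMeasure_of_le μ hσ
  have hfst : Integrable (fun p : ℝ × ℝ => p.1) (σ ⊗ₘ κ) := by
    have hle : (σ ⊗ₘ κ).fst ≤ μ := (Measure.fst_compProd σ κ).trans_le hσ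
    exact (hμ.mono_measure hle).comp_measurable measurable_fst
  have hsnd : Integrable (fun p : ℝ × ℝ => p.2) (σ ⊗ₘ κ) :=
    (hν.mono_measure (hκ.compProd_snd_le hσ)).comp_measurable measurable_snd
  refine ⟨inferInstance, hfst, hsnd, fun B hB => ?_⟩
  rw [setIntegral_compProd_preimage_fst (f := fun p => p.2 - p.1) (hsnd.sub hfst) hB]
  refine integral_eq_zero_of_ae (ae_restrict_of_ae (ae_mono hσ ?_))
  filter_upwards [hκ.2.2] with x hx using (integral_sub_const_eq_zero_iff hx.1 x).2 hx.2

theorem isRelaxedModel [IsFiniteMeasure μ] (hμ : Integrable id μ) (hν : Integrable id ν)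
    (hκ : MartKernel μ ν κ) (h : σ₁ + σ₂ = μ) :
    IsRelaxedModel μ ν (σ₁ ⊗ₘ κ) (σ₂ ⊗ₘ κ) := by
  have := hκ.1
  have hσ₁ : σ₁ ≤ μ := h ▸ Measure.le_add_right le_rfl
  have hσ₂ : σ₂ ≤ μ := h ▸ Measure.le_add_left le_rfl
  have := isFiniteMeasure_of_le μ hσ₁
  have := isFiniteMeasure_of_le μ hσ₂
  have hadd : σ₁ ⊗ₘ κ + σ₂ ⊗ₘ κ = μ ⊗ₘ κ := by rw [← Measure.compProd_add_left, h]
  exact ⟨hκ.isMartingaleMeasure hμ hν hσ₁, hκ.isMartingaleMeasure hμ hν hσ₂,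
    hadd ▸ Measure.fst_compProd μ κ, hadd ▸ hκ.2.1⟩

end MartKernel

section Competitors

variable {μ ν : Measure ℝ} {c₁ : ℝ → ℝ} {c₂ : ℝ × ℝ → ℝ} {γ₁ γ₂ R₁ R₂ B : Measure (ℝ × ℝ)}

theorem IsRelaxedModel.fst_left_le (h : IsRelaxedModel μ ν γ₁ γ₂) : γ₁.fst ≤ μ :=
  (Measure.fst_mono (Measure.le_add_right le_rfl)).trans h.fst_add.le

theorem IsRelaxedModel.snd_left_le (h : IsRelaxedModel μ ν γ₁ γ₂) : γ₁.snd ≤ ν :=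
  (Measure.snd_mono (Measure.le_add_right le_rfl)).trans h.snd_add.le

theorem IsRelaxedModel.fst_right_le (h : IsRelaxedModel μ ν γ₁ γ₂) : γ₂.fst ≤ μ :=
  (Measure.fst_mono (Measure.le_add_left le_rfl)).trans h.fst_add.le

theorem IsRelaxedModel.snd_right_le (h : IsRelaxedModel μ ν γ₁ γ₂) : γ₂.snd ≤ ν :=
  (Measure.snd_mono (Measure.le_add_left le_rfl)).trans h.snd_add.le

theorem DominatedPayoff.splitPayoff_add (hc : DominatedPayoff μ ν c₁ c₂)
    (h : IsRelaxedModel μ ν (R₁ + γ₁) (R₂ + γ₂)) :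
    splitPayoff c₁ c₂ (R₁ + γ₁) (R₂ + γ₂) = splitPayoff c₁ c₂ R₁ R₂ + splitPayoff c₁ c₂ γ₁ γ₂ := by
  have hleft := hc.integrable_left h.fst_left_le h.snd_left_le
  have hright := hc.integrable_right h.fst_right_le h.snd_right_le
  simp only [splitPayoff]
  rw [integral_add_measure hleft.left_of_add_measure hleft.right_of_add_measure,
    integral_add_measure hright.left_of_add_measure hright.right_of_add_measure]
  ring

theorem IsOptimalModel.splitPayoff_le_of_replace {γ₁' γ₂' : Measure (ℝ × ℝ)}
    (hc : DominatedPayoff μ ν c₁ c₂) (h : IsOptimalModel μ ν c₁ c₂ (R₁ + γ₁) (R₂ + γ₂))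
    (h' : IsRelaxedModel μ ν (R₁ + γ₁') (R₂ + γ₂')) :
    splitPayoff c₁ c₂ γ₁' γ₂' ≤ splitPayoff c₁ c₂ γ₁ γ₂ := by
  have hle := h.splitPayoff_le h'
  rw [hc.splitPayoff_add h', hc.splitPayoff_add h.toIsRelaxedModel] at hle
  linarith

theorem IsOptimalModel.integral_common_eq (hc : DominatedPayoff μ ν c₁ c₂)
    (hR₁ : IsMartingaleMeasure R₁) (hR₂ : IsMartingaleMeasure R₂) (hB : IsMartingaleMeasure B)
    (h : IsOptimalModel μ ν c₁ c₂ (R₁ + B) (R₂ + B)) : ∫ p, c₁ p.1 ∂B = ∫ p, c₂ p ∂B := by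
  have hsum_left : R₁ + (B + B) + (R₂ + 0) = R₁ + B + (R₂ + B) := by rw [add_zero]; abel
  have hsum_right : R₁ + 0 + (R₂ + (B + B)) = R₁ + B + (R₂ + B) := by rw [add_zero]; abel
  have hgain_left := h.splitPayoff_le_of_replace hc (γ₁' := B + B) (γ₂' := 0)
    ⟨hR₁.add (hB.add hB), by rwa [add_zero], hsum_left ▸ h.fst_add, hsum_left ▸ h.snd_add⟩
  have hgain_right := h.splitPayoff_le_of_replace hc (γ₁' := 0) (γ₂' := B + B)
    ⟨by rwa [add_zero], hR₂.add (hB.add hB), hsum_right ▸ h.fst_add, hsum_right ▸ h.snd_add⟩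
  have hleft := (hc.integrable_left h.fst_left_le h.snd_left_le).right_of_add_measure
  have hright := (hc.integrable_right h.fst_right_le h.snd_right_le).right_of_add_measure
  simp only [splitPayoff, integral_add_measure hleft hleft, integral_add_measure hright hright,
    integral_zero_measure] at hgain_left hgain_right
  linarith

theorem IsRelaxedModel.exchange_endpoints {Ω : Type*} {mΩ : MeasurableSpace Ω} {Q : Measure Ω}
    [IsFiniteMeasure Q] {X Y X' Y' : Ω → ℝ} (hX : Measurable X) (hY : Measurable Y)
    (hX' : Measurable X') (hY' : Measurable Y')
    (hmean : ∀ A : Set ℝ, MeasurableSet A → ∫ ω in X ⁻¹' A, (Y ω - Y' ω) ∂Q = 0)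
    (hmean' : ∀ A : Set ℝ, MeasurableSet A → ∫ ω in X' ⁻¹' A, (Y ω - Y' ω) ∂Q = 0)
    (h : IsRelaxedModel μ ν (R₁ + Q.map fun ω => (X ω, Y ω)) (R₂ + Q.map fun ω => (X' ω, Y' ω))) :
    IsRelaxedModel μ ν (R₁ + Q.map fun ω => (X ω, Y' ω))
      (R₂ + Q.map fun ω => (X' ω, Y ω)) where
  left := h.left.replace_endpoint hX hY hY'
    (h.right.integrable_snd.right_of_add_measure.comp_aemeasurable (hX'.prodMk hY').aemeasurable)
    hmean
  right := h.right.replace_endpoint hX' hY' hY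
    (h.left.integrable_snd.right_of_add_measure.comp_aemeasurable (hX.prodMk hY).aemeasurable)
    fun A hA => by
      simpa only [← integral_neg, neg_sub, neg_zero] using congrArg Neg.neg (hmean' A hA)
  fst_add := by
    rw [← h.fst_add]
    simp only [Measure.fst_add, Measure.fst_map_prodMk, hY, hY']
  snd_add := by
    rw [← h.snd_add]
    simp only [Measure.snd_add, Measure.snd_map_prodMk, hX, hX']
    abel

theorem IsOptimalModel.integral_exchange_endpoints_nonpos {Ω : Type*} {mΩ : MeasurableSpace Ω}
    {Q : Measure Ω} [IsFiniteMeasure Q] {X Y X' Y' : Ω → ℝ} (hc : DominatedPayoff μ ν c₁ c₂)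
    (hX : Measurable X) (hY : Measurable Y) (hX' : Measurable X') (hY' : Measurable Y')
    (hmean : ∀ A : Set ℝ, MeasurableSet A → ∫ ω in X ⁻¹' A, (Y ω - Y' ω) ∂Q = 0)
    (hmean' : ∀ A : Set ℝ, MeasurableSet A → ∫ ω in X' ⁻¹' A, (Y ω - Y' ω) ∂Q = 0)
    (h : IsOptimalModel μ ν c₁ c₂ (R₁ + Q.map fun ω => (X ω, Y ω))
      (R₂ + Q.map fun ω => (X' ω, Y' ω))) :
    ∫ ω, (c₂ (X' ω, Y ω) - c₂ (X' ω, Y' ω)) ∂Q ≤ 0 := by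
  have hexch := h.exchange_endpoints hX hY hX' hY' hmean hmean'
  have hle := h.splitPayoff_le_of_replace hc hexch
  have hnew := (hc.integrable_right hexch.fst_right_le hexch.snd_right_le).right_of_add_measure
  have hold := (hc.integrable_right h.fst_right_le h.snd_right_le).right_of_add_measure
  have hm₁ {ρ : Measure (ℝ × ℝ)} : AEStronglyMeasurable (fun p => c₁ p.1) ρ :=
    (hc.measurable_left.comp measurable_fst).aestronglyMeasurable
  have hm₂ {ρ : Measure (ℝ × ℝ)} : AEStronglyMeasurable c₂ ρ :=
    hc.measurable_right.aestronglyMeasurable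
  simp only [splitPayoff] at hle
  rw [integral_map (by fun_prop) hm₁, integral_map (by fun_prop) hm₂,
    integral_map (by fun_prop) hm₁, integral_map (by fun_prop) hm₂] at hle
  rw [integral_sub (f := fun ω => c₂ (X' ω, Y ω)) (g := fun ω => c₂ (X' ω, Y' ω))
    (hnew.comp_aemeasurable (by fun_prop)) (hold.comp_aemeasurable (by fun_prop))]
  linarith

end Competitors

theorem compProd_sub_add_cancel {α β : Type*} {mα : MeasurableSpace α} {mβ : MeasurableSpace β}
    {τ σ : Measure α} [IsFiniteMeasure σ] (h : τ ≤ σ) (κ : Kernel α β) :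
    (σ - τ) ⊗ₘ κ + τ ⊗ₘ κ = σ ⊗ₘ κ := by
  have := isFiniteMeasure_of_le σ h
  rw [← Measure.compProd_add_left, Measure.sub_add_cancel_of_le h]

section CommonMass

variable {μ ν σ₁ σ₂ τ : Measure ℝ} {κ : Kernel ℝ ℝ} {c₁ : ℝ → ℝ} {c₂ : ℝ × ℝ → ℝ}

theorem IsOptimalModel.integral_compProd_eq [IsFiniteMeasure μ] (hμ : Integrable id μ)
    (hν : Integrable id ν) (hc : DominatedPayoff μ ν c₁ c₂) (hκ : MartKernel μ ν κ)
    (hsum : σ₁ + σ₂ = μ) (hopt : IsOptimalModel μ ν c₁ c₂ (σ₁ ⊗ₘ κ) (σ₂ ⊗ₘ κ))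
    (hτ₁ : τ ≤ σ₁) (hτ₂ : τ ≤ σ₂) : ∫ p, c₁ p.1 ∂(τ ⊗ₘ κ) = ∫ p, c₂ p ∂(τ ⊗ₘ κ) := by
  have hσ₁ : σ₁ ≤ μ := hsum ▸ Measure.le_add_right le_rfl
  have hσ₂ : σ₂ ≤ μ := hsum ▸ Measure.le_add_left le_rfl
  have := isFiniteMeasure_of_le μ hσ₁
  have := isFiniteMeasure_of_le μ hσ₂
  rw [← compProd_sub_add_cancel hτ₁, ← compProd_sub_add_cancel hτ₂] at hopt
  exact hopt.integral_common_eq hc (hκ.isMartingaleMeasure hμ hν (Measure.sub_le.trans hσ₁))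
    (hκ.isMartingaleMeasure hμ hν (Measure.sub_le.trans hσ₂))
    (hκ.isMartingaleMeasure hμ hν (hτ₁.trans hσ₁))

theorem IsOptimalModel.ae_eq_integral_kernel [IsFiniteMeasure μ] (hμ : Integrable id μ)
    (hν : Integrable id ν) (hc : DominatedPayoff μ ν c₁ c₂) (hκ : MartKernel μ ν κ)
    (hsum : σ₁ + σ₂ = μ) (hopt : IsOptimalModel μ ν c₁ c₂ (σ₁ ⊗ₘ κ) (σ₂ ⊗ₘ κ))
    (hτ₁ : τ ≤ σ₁) (hτ₂ : τ ≤ σ₂) : ∀ᵐ x ∂τ, c₁ x = ∫ y, c₂ (x, y) ∂κ x := by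
  have := hκ.1
  have hτ : τ ≤ μ := hτ₁.trans (hsum ▸ Measure.le_add_right le_rfl)
  have := isFiniteMeasure_of_le μ hτ
  have hfst : (τ ⊗ₘ κ).fst ≤ μ := (Measure.fst_compProd τ κ).trans_le hτ
  have hint₁ := hc.integrable_left hfst (hκ.compProd_snd_le hτ)
  have hint₂ := hc.integrable_right hfst (hκ.compProd_snd_le hτ)
  have hint₁' : Integrable c₁ τ := by
    rw [← Measure.fst_compProd τ κ]
    exact (integrable_map_measure hc.measurable_left.aestronglyMeasurable
      measurable_fst.aemeasurable).2 hint₁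
  refine hint₁'.ae_eq_of_forall_setIntegral_eq _ _
    (integrable_integral_of_integrable_compProd hint₂) fun A _ _ => ?_
  have hcommon := hopt.integral_compProd_eq hμ hν hc hκ hsum
    (Measure.restrict_le_self.trans hτ₁) (Measure.restrict_le_self.trans hτ₂) (τ := τ.restrict A)
  have hle := compProd_mono_left_s1 (Measure.restrict_le_self (μ := τ) (s := A)) κ
  rw [Measure.integral_compProd (hint₁.mono_measure hle),
    Measure.integral_compProd (hint₂.mono_measure hle)] at hcommon
  simpa using hcommon

theorem IsOptimalModel.ae_not_straddles [IsProbabilityMeasure μ] (hμ : Integrable id μ)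
    (hν : Integrable id ν) (hc : DominatedPayoff μ ν c₁ c₂)
    (hconv : ∀ x, StrictConvexOn ℝ univ fun y => c₂ (x, y)) (hκ : MartKernel μ ν κ)
    (hsum : σ₁ + σ₂ = μ) (hopt : IsOptimalModel μ ν c₁ c₂ (σ₁ ⊗ₘ κ) (σ₂ ⊗ₘ κ))
    (hτ₁ : τ ≤ σ₁) (hτ₂ : τ ≤ σ₂) : ∀ᵐ u ∂(τ ⊗ₘ κ), ∀ᵐ x ∂τ, ¬ Straddles (κ x) u.2 := by
  have := hκ.1
  have hσ₁ : σ₁ ≤ μ := hsum ▸ Measure.le_add_right le_rfl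
  have hσ₂ : σ₂ ≤ μ := hsum ▸ Measure.le_add_left le_rfl
  have hτ : τ ≤ μ := hτ₁.trans hσ₁
  have := isFiniteMeasure_of_le μ hσ₁
  have := isFiniteMeasure_of_le μ hσ₂
  have := isFiniteMeasure_of_le μ hτ
  have hmass : τ univ ≤ 1 := (hτ univ).trans_eq measure_univ
  have hκ_int : ∀ᵐ x ∂τ, Integrable id (κ x) := ae_mono hτ (hκ.2.2.mono fun _ => And.left)
  set Q := balancedExchange τ κ
  have : IsFiniteMeasure Q := isFiniteMeasure_of_le _ (balancedExchange_le τ κ)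
  have hmean {A : Set (ℝ × ℝ)} (hA : MeasurableSet A) :=
    setIntegral_balancedExchange_snd_sub_snd hκ_int
      (hκ.isMartingaleMeasure hμ hν hτ).integrable_snd hA
  have hQ₁ := (fst_balancedExchange_le (κ := κ) hmass).trans (compProd_mono_left_s1 hτ₁ κ)
  have hQ₂ := (snd_balancedExchange_le (κ := κ) hmass).trans (compProd_mono_left_s1 hτ₂ κ)
  have hfst : (τ ⊗ₘ κ).fst ≤ μ := (Measure.fst_compProd τ κ).trans_le hτ
  have hsnd := hκ.compProd_snd_le hτ
  refine ae_not_straddles_of_integral_balancedExchange_nonpos hconv hκ_int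
    ((hc.integrable_prod hfst hsnd).sub ((hc.integrable_right hfst hsnd).comp_snd _)) ?_
  rw [← Measure.sub_add_cancel_of_le hQ₁, ← Measure.sub_add_cancel_of_le hQ₂] at hopt
  exact IsOptimalModel.integral_exchange_endpoints_nonpos (Q := Q) (X := fun q => q.1.1)
    (Y := fun q => q.1.2) (X' := fun q => q.2.1) (Y' := fun q => q.2.2) hc (by fun_prop)
    (by fun_prop) (by fun_prop) (by fun_prop) (fun A hA => hmean (measurable_fst hA))
    (fun A hA => hmean (measurable_snd hA)) hopt

theorem IsOptimalModel.eq_zero_of_le_of_le [IsProbabilityMeasure μ] [NullSingletonClass ν]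
    (hμ : Integrable id μ) (hν : Integrable id ν) (hc : DominatedPayoff μ ν c₁ c₂)
    (hconv : ∀ x, StrictConvexOn ℝ univ fun y => c₂ (x, y))
    (hne : ∀ᵐ x ∂μ, c₁ x ≠ c₂ (x, x)) (hκ : MartKernel μ ν κ) (hsum : σ₁ + σ₂ = μ)
    (hopt : IsOptimalModel μ ν c₁ c₂ (σ₁ ⊗ₘ κ) (σ₂ ⊗ₘ κ)) (hτ₁ : τ ≤ σ₁) (hτ₂ : τ ≤ σ₂) :
    τ = 0 := by
  have := hκ.1
  have hτ : τ ≤ μ := hτ₁.trans (hsum ▸ Measure.le_add_right le_rfl)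
  have := isFiniteMeasure_of_le μ hτ
  have : NullSingletonClass (κ ∘ₘ τ) := ⟨fun y => by
    have hle := hκ.compProd_snd_le hτ
    rw [Measure.snd_compProd] at hle
    exact Measure.absolutelyContinuous_of_le hle (measure_singleton y)⟩
  have hside := ae_forall_not_straddles
    (hopt.ae_not_straddles hμ hν hc hconv hκ hsum hτ₁ hτ₂)
  refine ae_eq_bot.1 (Filter.eventually_false_iff_eq_bot.1 ?_)
  filter_upwards [hopt.ae_eq_integral_kernel hμ hν hc hκ hsum hτ₁ hτ₂, hside, ae_mono hτ hκ.2.2,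
    ae_mono hτ hne] with x hindiff hx hmart hxne
  have hdirac := eq_dirac_of_not_straddles hmart.1 (hx _)
  rw [hmart.2] at hdirac
  rw [hdirac, integral_dirac] at hindiff
  exact hxne hindiff

end CommonMass

section Uniqueness

variable {μ ν μ₁ μ₁' : Measure ℝ} {κ : Kernel ℝ ℝ} {c₁ : ℝ → ℝ} {c₂ : ℝ × ℝ → ℝ}
  {γ₁ γ₂ γ₁' γ₂' : Measure (ℝ × ℝ)}

theorem DominatedPayoff.splitPayoff_midpoint (hc : DominatedPayoff μ ν c₁ c₂)
    (h : IsRelaxedModel μ ν γ₁ γ₂) (h' : IsRelaxedModel μ ν γ₁' γ₂') :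
    splitPayoff c₁ c₂ ((2⁻¹ : ℝ≥0∞) • (γ₁ + γ₁')) ((2⁻¹ : ℝ≥0∞) • (γ₂ + γ₂')) =
      (splitPayoff c₁ c₂ γ₁ γ₂ + splitPayoff c₁ c₂ γ₁' γ₂') / 2 := by
  simp only [splitPayoff, integral_smul_measure]
  rw [integral_add_measure (hc.integrable_left h.fst_left_le h.snd_left_le)
      (hc.integrable_left h'.fst_left_le h'.snd_left_le),
    integral_add_measure (hc.integrable_right h.fst_right_le h.snd_right_le)
      (hc.integrable_right h'.fst_right_le h'.snd_right_le)]
  simp only [ENNReal.toReal_inv, ENNReal.toReal_ofNat, smul_eq_mul]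
  ring

theorem inv_two_smul_add_inv_two_smul_sub {α : Type*} {mα : MeasurableSpace α}
    {μ μ₁ μ₁' : Measure α} [IsFiniteMeasure μ] (h : μ₁ ≤ μ) (h' : μ₁' ≤ μ) :
    (2⁻¹ : ℝ≥0∞) • (μ₁ + μ₁') + (2⁻¹ : ℝ≥0∞) • ((μ - μ₁) + (μ - μ₁')) = μ := by
  have := isFiniteMeasure_of_le μ h
  have := isFiniteMeasure_of_le μ h'
  calc (2⁻¹ : ℝ≥0∞) • (μ₁ + μ₁') + (2⁻¹ : ℝ≥0∞) • ((μ - μ₁) + (μ - μ₁'))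
      = (2⁻¹ : ℝ≥0∞) • ((μ - μ₁ + μ₁) + (μ - μ₁' + μ₁')) := by
        rw [← smul_add, add_comm (μ₁ + μ₁'), add_add_add_comm]
    _ = μ := by
        rw [Measure.sub_add_cancel_of_le h, Measure.sub_add_cancel_of_le h', smul_add, ← add_smul,
          ENNReal.inv_two_add_inv_two, one_smul]

theorem IsOptimalModel.midpoint [IsFiniteMeasure μ] (hμ : Integrable id μ) (hν : Integrable id ν)
    (hc : DominatedPayoff μ ν c₁ c₂) (hκ : MartKernel μ ν κ) (hμ₁ : μ₁ ≤ μ) (hμ₁' : μ₁' ≤ μ)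
    (h : IsOptimalModel μ ν c₁ c₂ (μ₁ ⊗ₘ κ) ((μ - μ₁) ⊗ₘ κ))
    (h' : IsOptimalModel μ ν c₁ c₂ (μ₁' ⊗ₘ κ) ((μ - μ₁') ⊗ₘ κ)) :
    IsOptimalModel μ ν c₁ c₂ (((2⁻¹ : ℝ≥0∞) • (μ₁ + μ₁')) ⊗ₘ κ)
      (((2⁻¹ : ℝ≥0∞) • ((μ - μ₁) + (μ - μ₁'))) ⊗ₘ κ) := by
  have := hκ.1
  have := isFiniteMeasure_of_le μ hμ₁
  have := isFiniteMeasure_of_le μ hμ₁'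
  refine ⟨hκ.isRelaxedModel hμ hν (inv_two_smul_add_inv_two_smul_sub hμ₁ hμ₁'),
    fun γ₁ γ₂ hγ => ?_⟩
  rw [Measure.compProd_smul_left, Measure.compProd_smul_left, Measure.compProd_add_left,
    Measure.compProd_add_left, hc.splitPayoff_midpoint h.toIsRelaxedModel h'.toIsRelaxedModel]
  linarith [h.splitPayoff_le hγ, h'.splitPayoff_le hγ]

theorem IsOptimalModel.exercise_le [IsProbabilityMeasure μ] [NullSingletonClass ν]
    (hμ : Integrable id μ) (hν : Integrable id ν) (hc : DominatedPayoff μ ν c₁ c₂)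
    (hconv : ∀ x, StrictConvexOn ℝ univ fun y => c₂ (x, y))
    (hne : ∀ᵐ x ∂μ, c₁ x ≠ c₂ (x, x)) (hκ : MartKernel μ ν κ) (hμ₁ : μ₁ ≤ μ) (hμ₁' : μ₁' ≤ μ)
    (h : IsOptimalModel μ ν c₁ c₂ (μ₁ ⊗ₘ κ) ((μ - μ₁) ⊗ₘ κ))
    (h' : IsOptimalModel μ ν c₁ c₂ (μ₁' ⊗ₘ κ) ((μ - μ₁') ⊗ₘ κ)) : μ₁ ≤ μ₁' := by
  have := isFiniteMeasure_of_le μ hμ₁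
  have := isFiniteMeasure_of_le μ hμ₁'
  have hsub_left : μ₁ - μ₁' ≤ μ₁ + μ₁' := Measure.sub_le.trans (Measure.le_add_right le_rfl)
  have hsub_right : μ₁ - μ₁' ≤ (μ - μ₁) + (μ - μ₁') := by
    refine (Measure.sub_le_iff_le_add.2 ?_).trans (Measure.le_add_left le_rfl)
    rwa [Measure.sub_add_cancel_of_le hμ₁']
  have hzero : (2⁻¹ : ℝ≥0∞) • (μ₁ - μ₁') = 0 :=
    (h.midpoint hμ hν hc hκ hμ₁ hμ₁' h').eq_zero_of_le_of_le hμ hν hc hconv hne hκ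
      (inv_two_smul_add_inv_two_smul_sub hμ₁ hμ₁') (smul_mono_right _ hsub_left)
      (smul_mono_right _ hsub_right)
  have hzero' : μ₁ - μ₁' = 0 := by simpa using hzero
  simpa using Measure.sub_le_iff_le_add.1 hzero'.le

theorem optimal_exercise_unique_general [IsProbabilityMeasure μ] [NullSingletonClass ν]
    (hμ : Integrable id μ) (hν : Integrable id ν) (hc : DominatedPayoff μ ν c₁ c₂)
    (hstrict : ∀ x, StrictConvexOn ℝ univ fun y => c₂ (x, y))
    (hne : ∀ᵐ x ∂μ, c₁ x ≠ c₂ (x, x)) (hκ : MartKernel μ ν κ) (hμ₁ : μ₁ ≤ μ) (hμ₁' : μ₁' ≤ μ)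
    (hopt : splitPayoff c₁ c₂ (μ₁ ⊗ₘ κ) ((μ - μ₁) ⊗ₘ κ) =
      RelaxedValue μ ν ![fun p => c₁ p.1, c₂])
    (hopt' : splitPayoff c₁ c₂ (μ₁' ⊗ₘ κ) ((μ - μ₁') ⊗ₘ κ) =
      RelaxedValue μ ν ![fun p => c₁ p.1, c₂]) :
    μ₁ = μ₁' := by
  have isOptimalModel_of_attains {σ : Measure ℝ} (hσ : σ ≤ μ)
      (h : splitPayoff c₁ c₂ (σ ⊗ₘ κ) ((μ - σ) ⊗ₘ κ) = RelaxedValue μ ν ![fun p => c₁ p.1, c₂]) :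
      IsOptimalModel μ ν c₁ c₂ (σ ⊗ₘ κ) ((μ - σ) ⊗ₘ κ) := by
    have := isFiniteMeasure_of_le μ hσ
    exact ⟨hκ.isRelaxedModel hμ hν (by rw [add_comm, Measure.sub_add_cancel_of_le hσ]),
      fun _ _ hγ => (hc.splitPayoff_le_relaxedValue hγ).trans_eq h.symm⟩
  have h := isOptimalModel_of_attains hμ₁ hopt
  have h' := isOptimalModel_of_attains hμ₁' hopt'
  exact le_antisymm (h.exercise_le hμ hν hc hstrict hne hκ hμ₁ hμ₁' h')
    (h'.exercise_le hμ hν hc hstrict hne hκ hμ₁' hμ₁ h)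

end Uniqueness

/-- Given a fixed optimal model `π` (presented through its disintegration kernel `κ`),
the optimal exercise measure `μ₁` is unique. -/
theorem optimal_exercise_unique
    (μ ν : Measure ℝ) (c₁ : ℝ → ℝ) (c₂ : ℝ × ℝ → ℝ)
    (hA : AssumpA μ ν c₁ c₂)
    (hstrict : ∀ x : ℝ, StrictConvexOn ℝ Set.univ fun y => c₂ (x, y))
    (hne : ∀ᵐ x ∂μ, c₁ x ≠ c₂ (x, x))
    (hac : ν ≪ (volume : Measure ℝ))
    (heq : PrimalValue μ ν c₁ c₂ = RelaxedValue μ ν ![fun p => c₁ p.1, c₂]) :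
    ∀ (κ : Kernel ℝ ℝ) (μ₁ μ₁' : Measure ℝ), MartKernel μ ν κ → μ₁ ≤ μ → μ₁' ≤ μ →
      ∫ p, c₁ p.1 ∂(μ₁ ⊗ₘ κ) + ∫ p, c₂ p ∂((μ - μ₁) ⊗ₘ κ) = PrimalValue μ ν c₁ c₂ →
      ∫ p, c₁ p.1 ∂(μ₁' ⊗ₘ κ) + ∫ p, c₂ p ∂((μ - μ₁') ⊗ₘ κ) = PrimalValue μ ν c₁ c₂ →
      μ₁ = μ₁' := by
  intro κ μ₁ μ₁' hκ hμ₁ hμ₁' hopt hopt'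
  have hc := hA.dominatedPayoff
  obtain ⟨_, -, hμ, hν, -⟩ := hA
  have : NullSingletonClass ν := ⟨fun y => hac (measure_singleton y)⟩
  exact optimal_exercise_unique_general hμ hν hc hstrict hne hκ hμ₁ hμ₁' (hopt.trans heq)
    (hopt'.trans heq)

end
end

section
/- (Duality) Assume [A']. Then P̄_c = D̄_c: the supremum of Σ_{l=1}^L ∫c_l dγ_l over (γ₁,…,γ_L) ∈ ℳ_L(μ,ν) equals the infimum of ∫φ dμ + ∫ψ dν over (φ, ψ, θ₁,…,θ_L) ∈ Ψ̄_c. -/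
open MeasureTheory ProbabilityTheory Set
open scoped ENNReal

noncomputable section

/-!
Integrating a superhedging inequality against a feasible family of martingale measures gives
`P̄_c ≤ D̄_c`, since the trading terms `θ_l(x)(y - x)` vanish. For the converse, `c ↦ D̄_c` is a
sublinear functional on the vector costs of growth at most `V(x) + W(y)`. It is finite because, when
`φ(x) + θ(x)(y - x) ≤ ψ(y)` for all `x` and `y`, the convex function
`y ↦ sup_x (φ(x) + θ(x)(y - x))` lies between `φ` and `ψ`, and the convex order gives
`∫ φ dμ ≤ ∫ ψ dν`. By Hahn–Banach some linear functional `Λ ≤ D̄` touches `D̄` at the given cost.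
Domination by `D̄` makes each component of `Λ` positive and tight, hence, by Riesz–Markov–Kakutani,
integration against a measure `γ_l`. A payoff `φ(x) + ψ(y) + θ_l(x)(y - x)` and its negative are
both superhedged by themselves, so `Λ` prices it at exactly `∫ φ dμ + ∫ ψ dν`; this forces the
marginals of `∑ γ_l` and the martingale property of each `γ_l`, and `(γ_l)` is an optimiser.
-/

open Filter Topology Asymptotics
open scoped BoundedContinuousFunction CompactlySupported Pointwise

/-! ### Positive functionals on spaces of functions of controlled growth -/

lemma integrable_of_tendsto_of_integral_norm_le {α E : Type*} [MeasurableSpace α]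
    [NormedAddCommGroup E] {m : Measure α} {F : ℕ → α → E} {f : α → E} {C : ℝ}
    (hF : ∀ n, Integrable (F n) m) (hC : ∀ n, ∫ x, ‖F n x‖ ∂m ≤ C)
    (hlim : ∀ᵐ x ∂m, Tendsto (fun n => F n x) atTop (𝓝 (f x))) : Integrable f m := by
  have hFm : ∀ n, AEStronglyMeasurable (F n) m := fun n => (hF n).aestronglyMeasurable
  refine memLp_one_iff_integrable.1 ⟨aestronglyMeasurable_of_tendsto_ae atTop hFm hlim, ?_⟩
  calc eLpNorm f 1 m
      ≤ liminf (fun n => eLpNorm (F n) 1 m) atTop := Lp.eLpNorm_lim_le_liminf_eLpNorm hFm f hlim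
    _ ≤ ENNReal.ofReal C := liminf_le_of_frequently_le' <| .of_forall fun n => by
        rw [eLpNorm_one_eq_lintegral_enorm, ← ofReal_integral_norm_eq_lintegral_enorm (hF n)]
        exact ENNReal.ofReal_le_ofReal (hC n)
    _ < ∞ := ENNReal.ofReal_lt_top

section Growth

variable {X : Type*} [TopologicalSpace X] {G : C(X, ℝ)}

/-- The space of continuous functions dominated by a multiple of the weight `G`. -/
def growthSpace (G : C(X, ℝ)) : Submodule ℝ C(X, ℝ) where
  carrier := {f | f =O[⊤] G}
  add_mem' := IsBigO.add
  zero_mem' := isBigO_zero _ _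
  smul_mem' t _ hf := hf.const_smul_left t

lemma mem_growthSpace_of_abs_le {f : C(X, ℝ)} {K : ℝ} (h : ∀ x, |f x| ≤ K * G x) :
    f ∈ growthSpace G :=
  isBigO_top.2 ⟨|K|, fun x => (h x).trans ((le_abs_self _).trans (abs_mul K (G x)).le)⟩

lemma exists_abs_le_mul_of_mem_growthSpace (hG : 0 ≤ G) {f : C(X, ℝ)} (hf : f ∈ growthSpace G) :
    ∃ K, 0 ≤ K ∧ ∀ x, |f x| ≤ K * G x := by
  obtain ⟨K, hK, hfK⟩ := IsBigO.exists_nonneg hf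
  refine ⟨K, hK, fun x => ?_⟩
  have hGx : 0 ≤ G x := hG x
  simpa only [Real.norm_eq_abs, abs_of_nonneg hGx] using isBigOWith_top.1 hfK x

lemma exists_forall_abs_le_mul {ι : Type*} [Finite ι] (hG : 0 ≤ G) (f : ι → growthSpace G) :
    ∃ K, ∀ i x, |(f i).1 x| ≤ K * G x := by
  choose K _ hfK using fun i => exists_abs_le_mul_of_mem_growthSpace hG (f i).2
  obtain ⟨M, hM⟩ := (finite_range K).bddAbove
  exact ⟨M, fun i x => (hfK i x).trans (mul_le_mul_of_nonneg_right (hM ⟨i, rfl⟩) (hG x))⟩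

lemma compactlySupported_mem_growthSpace (hG : ∀ x, 0 < G x) (f : C_c(X, ℝ)) :
    f.toContinuousMap ∈ growthSpace G := by
  have hcont : Continuous fun x => f x * (G x)⁻¹ :=
    f.continuous.mul (G.continuous.inv₀ fun x => (hG x).ne')
  obtain ⟨K, hK⟩ := f.hasCompactSupport.mul_right.exists_bound_of_continuous hcont
  refine mem_growthSpace_of_abs_le (K := K) fun x => (div_le_iff₀ (hG x)).1 ?_
  have hKx : |f x * (G x)⁻¹| ≤ K := hK x
  rwa [abs_mul, abs_inv, abs_of_pos (hG x), ← div_eq_mul_inv] at hKx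

/-- The inclusion of the compactly supported functions into the functions of growth at most `G`,
through which a functional on `growthSpace G` is restricted to apply the Riesz–Markov–Kakutani
theorem. -/
def compactlySupportedInclusion (hG : ∀ x, 0 < G x) : C_c(X, ℝ) →ₚ[ℝ] growthSpace G where
  toFun f := ⟨f.toContinuousMap, compactlySupported_mem_growthSpace hG f⟩
  map_add' _ _ := rfl
  map_smul' _ _ := rfl
  monotone' _ _ h := h

/-- The excess `(G - n)⁺` of the weight `G` over the level `n`. A positive functional on
`growthSpace G` is tight when its values on these functions tend to `0`. -/
def excess (G : C(X, ℝ)) (n : ℕ) : growthSpace G :=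
  ⟨(G - (n : C(X, ℝ))) ⊔ 0, isBigO_top.2 ⟨1, fun x => by
    have hle : max (G x - n) 0 ≤ |G x| :=
      max_le (by linarith [le_abs_self (G x), n.cast_nonneg (α := ℝ)]) (abs_nonneg _)
    simpa [abs_of_nonneg (le_max_right (G x - n) 0)] using hle⟩⟩

lemma excess_apply (n : ℕ) (x : X) : (excess G n).1 x = max (G x - n) 0 := rfl

lemma excess_nonneg (n : ℕ) : 0 ≤ excess G n := fun _ => le_max_right _ _

/-- A continuous cutoff, equal to `1` on `{G ≤ 2n}` and to `0` on `{2n + 1 ≤ G}`. The level is `2n`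
rather than `n` so that the part of `G` cut off is at most `2 (G - n)⁺`. -/
def cutoff (G : C(X, ℝ)) (n : ℕ) : C(X, ℝ) := 1 - 1 ⊓ (excess G (2 * n)).1

lemma cutoff_apply (n : ℕ) (x : X) : cutoff G n x = 1 - min 1 (max (G x - 2 * n) 0) := by
  simp [cutoff, excess_apply]

lemma cutoff_nonneg (n : ℕ) (x : X) : 0 ≤ cutoff G n x := by
  simp [cutoff_apply]

lemma cutoff_le_one (n : ℕ) (x : X) : cutoff G n x ≤ 1 := by
  simp [cutoff_apply]

lemma cutoff_eq_one {n : ℕ} {x : X} (h : G x ≤ 2 * n) : cutoff G n x = 1 := by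
  simp [cutoff_apply, h]

lemma cutoff_eq_zero {n : ℕ} {x : X} (h : 2 * n + 1 ≤ G x) : cutoff G n x = 0 := by
  rw [cutoff_apply, max_eq_left (by linarith), min_eq_left (by linarith), sub_self]

lemma tendsto_cutoff (x : X) : Tendsto (fun n => cutoff G n x) atTop (𝓝 1) := by
  obtain ⟨N, hN⟩ := exists_nat_ge (G x)
  refine tendsto_const_nhds.congr' ?_
  filter_upwards [eventually_ge_atTop N] with n hn
  have hNn : (N : ℝ) ≤ n := Nat.cast_le.2 hn
  exact (cutoff_eq_one (by linarith [N.cast_nonneg (α := ℝ)])).symm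

lemma one_sub_cutoff_mul_le (n : ℕ) (x : X) : (1 - cutoff G n x) * G x ≤ 2 * (excess G n).1 x := by
  rw [excess_apply]
  rcases le_total (G x) (2 * n) with h | h
  · rw [cutoff_eq_one h, sub_self, zero_mul]
    positivity
  · have hGx : 0 ≤ G x := (by positivity : (0 : ℝ) ≤ 2 * n).trans h
    calc (1 - cutoff G n x) * G x
        ≤ G x := mul_le_of_le_one_left hGx (by linarith [cutoff_nonneg (G := G) n x])
      _ ≤ 2 * max (G x - n) 0 := by linarith [le_max_left (G x - n) 0]

lemma hasCompactSupport_cutoff [R1Space X] (hG : Tendsto G (cocompact X) atTop) (n : ℕ) :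
    HasCompactSupport (cutoff G n) := by
  obtain ⟨s, hs, hsG⟩ := mem_cocompact.1 (hG (eventually_ge_atTop (2 * n + 1 : ℝ)))
  exact HasCompactSupport.intro hs fun x hx => cutoff_eq_zero (hsG hx)

/-- The product of `f` with the cutoff at level `n`. -/
def truncate (f : growthSpace G) (n : ℕ) : growthSpace G :=
  ⟨cutoff G n * f.1, (IsBigO.of_bound' <| .of_forall fun x => by
    rw [ContinuousMap.mul_apply, norm_mul, Real.norm_of_nonneg (cutoff_nonneg n x)]
    exact mul_le_of_le_one_left (norm_nonneg _) (cutoff_le_one n x)).trans f.2⟩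

lemma truncate_apply (f : growthSpace G) (n : ℕ) (x : X) :
    (truncate f n).1 x = cutoff G n x * f.1 x := rfl

lemma tendsto_truncate (f : growthSpace G) (x : X) :
    Tendsto (fun n => (truncate f n).1 x) atTop (𝓝 (f.1 x)) := by
  simpa only [truncate_apply, one_mul] using (tendsto_cutoff x).mul_const (f.1 x)

lemma abs_truncate_le (f : growthSpace G) (n : ℕ) (x : X) : |(truncate f n).1 x| ≤ |f.1 x| := by
  rw [truncate_apply, abs_mul, abs_of_nonneg (cutoff_nonneg n x)]
  exact mul_le_of_le_one_left (abs_nonneg _) (cutoff_le_one n x)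

lemma hasCompactSupport_truncate [R1Space X] (hG : Tendsto G (cocompact X) atTop)
    (f : growthSpace G) (n : ℕ) : HasCompactSupport (truncate f n).1 :=
  (hasCompactSupport_cutoff hG n).mul_right

lemma abs_map_le_of_abs_le (Λ : growthSpace G →ₚ[ℝ] ℝ) {f g : growthSpace G}
    (h : ∀ x, |f.1 x| ≤ g.1 x) : |Λ f| ≤ Λ g := by
  have hle : Λ f ≤ Λ g := OrderHomClass.mono Λ fun x => (le_abs_self _).trans (h x)
  have hge : Λ (-f) ≤ Λ g := OrderHomClass.mono Λ fun x => (neg_le_abs _).trans (h x)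
  rw [map_neg] at hge
  exact abs_le'.2 ⟨hle, hge⟩

lemma tendsto_map_truncate (hG : 0 ≤ G) (Λ : growthSpace G →ₚ[ℝ] ℝ)
    (hΛ : Tendsto (fun n => Λ (excess G n)) atTop (𝓝 0)) (f : growthSpace G) :
    Tendsto (fun n => Λ (truncate f n)) atTop (𝓝 (Λ f)) := by
  obtain ⟨K, hK, hfK⟩ := exists_abs_le_mul_of_mem_growthSpace hG f.2
  have htail : ∀ n x, |(f - truncate f n).1 x| ≤ (2 * K) * (excess G n).1 x := fun n x => by
    calc |f.1 x - cutoff G n x * f.1 x|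
        = (1 - cutoff G n x) * |f.1 x| := by
          rw [← one_sub_mul, abs_mul, abs_of_nonneg (sub_nonneg.2 (cutoff_le_one n x))]
      _ ≤ (1 - cutoff G n x) * (K * G x) :=
          mul_le_mul_of_nonneg_left (hfK x) (sub_nonneg.2 (cutoff_le_one n x))
      _ = K * ((1 - cutoff G n x) * G x) := by ring
      _ ≤ K * (2 * (excess G n).1 x) := mul_le_mul_of_nonneg_left (one_sub_cutoff_mul_le n x) hK
      _ = (2 * K) * (excess G n).1 x := by ring
  have hbound : ∀ n, ‖Λ f - Λ (truncate f n)‖ ≤ (2 * K) * Λ (excess G n) := fun n => by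
    rw [← map_sub, ← smul_eq_mul, ← map_smul]
    exact abs_map_le_of_abs_le Λ (htail n)
  have hzero := squeeze_zero_norm hbound (by simpa only [mul_zero] using hΛ.const_mul (2 * K))
  simpa only [sub_sub_cancel, sub_zero] using (tendsto_const_nhds (x := Λ f)).sub hzero

theorem exists_measure_integral_eq_of_tendsto_excess [T2Space X] [LocallyCompactSpace X]
    [MeasurableSpace X] [BorelSpace X] (hpos : ∀ x, 0 < G x) (hG : Tendsto G (cocompact X) atTop)
    (Λ : growthSpace G →ₚ[ℝ] ℝ) (hΛ : Tendsto (fun n => Λ (excess G n)) atTop (𝓝 0)) :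
    ∃ γ : Measure X, ∀ f : growthSpace G, Integrable f.1 γ ∧ ∫ x, f.1 x ∂γ = Λ f := by
  have hnonneg : 0 ≤ G := fun x => (hpos x).le
  let γ := RealRMK.rieszMeasure (Λ.comp (compactlySupportedInclusion hpos))
  have hint : ∀ f n, Integrable (truncate f n).1 γ := fun f n =>
    (truncate f n).1.continuous.integrable_of_hasCompactSupport (hasCompactSupport_truncate hG f n)
  have heq : ∀ f n, ∫ x, (truncate f n).1 x ∂γ = Λ (truncate f n) := fun f n =>
    RealRMK.integral_rieszMeasure _ ⟨(truncate f n).1, hasCompactSupport_truncate hG f n⟩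
  have hGγ : Integrable G γ := by
    let g : growthSpace G := ⟨G, isBigO_refl _ _⟩
    refine integrable_of_tendsto_of_integral_norm_le (hint g) (C := Λ g) (fun n => ?_)
      (.of_forall (tendsto_truncate g))
    have htrunc : ∀ x, ‖(truncate g n).1 x‖ = (truncate g n).1 x := fun x =>
      Real.norm_of_nonneg (mul_nonneg (cutoff_nonneg n x) (hnonneg x))
    simp only [htrunc, heq]
    exact OrderHomClass.mono Λ fun x => mul_le_of_le_one_left (hnonneg x) (cutoff_le_one n x)
  refine ⟨γ, fun f => ?_⟩
  obtain ⟨K, -, hfK⟩ := exists_abs_le_mul_of_mem_growthSpace hnonneg f.2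
  have hf : Integrable f.1 γ :=
    (hGγ.const_mul K).mono' f.1.continuous.aestronglyMeasurable (.of_forall hfK)
  have hlim : Tendsto (fun n => ∫ x, (truncate f n).1 x ∂γ) atTop (𝓝 (∫ x, f.1 x ∂γ)) :=
    tendsto_integral_of_dominated_convergence (fun x => |f.1 x|) (fun n => (hint f n).1) hf.abs
      (fun n => .of_forall (abs_truncate_le f n)) (.of_forall (tendsto_truncate f))
  simp only [heq] at hlim
  exact ⟨hf, tendsto_nhds_unique hlim (tendsto_map_truncate hnonneg Λ hΛ f)⟩

end Growth

/-! ### Sublinear functionals and the convex order -/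

theorem exists_linearMap_eq_of_sublinear {E : Type*} [AddCommGroup E] [Module ℝ E] {N : E → ℝ}
    (hsmul : ∀ t : ℝ, 0 < t → ∀ x, N (t • x) = t * N x) (hadd : ∀ x y, N (x + y) ≤ N x + N y)
    (x₀ : E) : ∃ Λ : E →ₗ[ℝ] ℝ, Λ x₀ = N x₀ ∧ ∀ x, Λ x ≤ N x := by
  have hzero : N 0 = 0 := by
    have h := hsmul 2 two_pos 0
    rw [smul_zero] at h
    linarith
  have hspan : ∀ t : ℝ, t • x₀ = 0 → t • N x₀ = 0 := by
    intro t ht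
    rcases smul_eq_zero.1 ht with rfl | rfl
    · rw [zero_smul]
    · rw [hzero, smul_zero]
  have hline : ∀ t : ℝ, t * N x₀ ≤ N (t • x₀) := by
    intro t
    rcases lt_trichotomy t 0 with ht | rfl | ht
    · have h := hadd (t • x₀) ((-t) • x₀)
      rw [← add_smul, add_neg_cancel, zero_smul, hzero, hsmul (-t) (neg_pos.2 ht)] at h
      linarith
    · rw [zero_smul, hzero, zero_mul]
    · exact (hsmul t ht x₀).ge
  obtain ⟨Λ, hΛ, hΛN⟩ := exists_extension_of_le_sublinear
    (LinearPMap.mkSpanSingleton' x₀ (N x₀) hspan) N hsmul hadd (by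
      rintro ⟨x, hx⟩
      obtain ⟨t, rfl⟩ := Submodule.mem_span_singleton.1 hx
      exact (LinearPMap.mkSpanSingleton'_apply x₀ (N x₀) hspan t hx).trans_le (hline t))
  exact ⟨Λ, (hΛ ⟨x₀, Submodule.mem_span_singleton_self x₀⟩).trans
    (LinearPMap.mkSpanSingleton'_apply_self x₀ (N x₀) hspan _), hΛN⟩

lemma convexOn_ciSup {ι E : Type*} [Nonempty ι] [AddCommMonoid E] [SMul ℝ E] {s : Set E}
    {f : ι → E → ℝ} (hs : Convex ℝ s) (hf : ∀ i, ConvexOn ℝ s (f i))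
    (hbdd : ∀ x ∈ s, BddAbove (range fun i => f i x)) : ConvexOn ℝ s fun x => ⨆ i, f i x := by
  refine ⟨hs, fun x hx y hy a b ha hb hab => ciSup_le fun i => ?_⟩
  exact ((hf i).2 hx hy ha hb hab).trans <| add_le_add
    (smul_le_smul_of_nonneg_left (le_ciSup (hbdd x hx) i) ha)
    (smul_le_smul_of_nonneg_left (le_ciSup (hbdd y hy) i) hb)

lemma ConvexOrder.integral_le_of_forall_add_mul_le {μ ν : Measure ℝ} [IsFiniteMeasure ν]
    (h : ConvexOrder μ ν) (hν : Integrable id ν) {φ ψ θ : ℝ → ℝ} (hφ : Integrable φ μ)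
    (hψ : Integrable ψ ν) (hle : ∀ x y, φ x + θ x * (y - x) ≤ ψ y) :
    ∫ x, φ x ∂μ ≤ ∫ y, ψ y ∂ν := by
  let u : ℝ → ℝ → ℝ := fun x y => φ x + θ x * (y - x)
  let g : ℝ → ℝ := fun y => ⨆ x, u x y
  have hbdd : ∀ y, BddAbove (range fun x => u x y) := fun y =>
    ⟨ψ y, forall_mem_range.2 fun x => hle x y⟩
  have hug : ∀ x y, u x y ≤ g y := fun x y => le_ciSup (hbdd y) x
  have hgψ : ∀ y, g y ≤ ψ y := fun y => ciSup_le fun x => hle x y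
  have hconv : ConvexOn ℝ univ g := by
    refine convexOn_ciSup convex_univ (fun x => ⟨convex_univ, ?_⟩) fun y _ => hbdd y
    intro y _ z _ a b _ _ hab
    refine le_of_eq ?_
    simp only [u, smul_eq_mul]
    linear_combination (φ x - θ x * x) * (-hab)
  have hgν : Integrable g ν := by
    have hgc : Continuous g := continuousOn_univ.1 (hconv.continuousOn isOpen_univ)
    have hu : Integrable (u 0) ν :=
      (integrable_const _).add ((hν.sub (integrable_const 0)).const_mul _)
    exact integrable_of_le_of_le hgc.aestronglyMeasurable (.of_forall (hug 0)) (.of_forall hgψ)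
      hu hψ
  obtain ⟨hgμ, hg⟩ := h g hconv hgν
  calc ∫ x, φ x ∂μ ≤ ∫ x, g x ∂μ := integral_mono hφ hgμ fun x => by simpa [u] using hug x x
    _ ≤ ∫ y, g y ∂ν := hg
    _ ≤ ∫ y, ψ y ∂ν := integral_mono hgν hψ hgψ

/-! ### Martingale measures -/

section Martingale

variable {γ : Measure (ℝ × ℝ)}

lemma integrable_comp_fst_mul_sub (hγ : Integrable (fun p : ℝ × ℝ => p.2 - p.1) γ) (θ : ℝ →ᵇ ℝ) :
    Integrable (fun p : ℝ × ℝ => θ p.1 * (p.2 - p.1)) γ :=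
  hγ.bdd_mul (by fun_prop) (.of_forall fun p => θ.norm_coe_le_norm p.1)

lemma IsSubMart.integral_mul_sub_eq_zero (hγ : IsSubMart γ)
    (hint : Integrable (fun p : ℝ × ℝ => p.2 - p.1) γ) (θ : ℝ →ᵇ ℝ) :
    ∫ p, θ p.1 * (p.2 - p.1) ∂γ = 0 := by
  obtain ⟨hfin, rfl | ⟨κ, hκ, hdis, hmart⟩⟩ := hγ
  · exact integral_zero_measure _
  · have hθ := integrable_comp_fst_mul_sub hint θ
    rw [← hdis] at hθ ⊢
    rw [Measure.integral_compProd hθ]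
    refine integral_eq_zero_of_ae ?_
    filter_upwards [hmart] with x ⟨hx, hmean⟩
    have hx' : Integrable (fun y : ℝ => y) (κ x) := hx
    simp [integral_const_mul, integral_sub hx' (integrable_const x), hmean]

theorem isSubMart_of_forall_integral_mul_sub_eq_zero [IsFiniteMeasure γ]
    (hx : Integrable Prod.fst γ) (hy : Integrable Prod.snd γ)
    (h : ∀ θ : ℝ →ᵇ ℝ, ∫ p, θ p.1 * (p.2 - p.1) ∂γ = 0) : IsSubMart γ := by
  have hdis : γ.fst ⊗ₘ γ.condKernel = γ := γ.disintegrate γ.condKernel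
  have hy' : Integrable Prod.snd (γ.fst ⊗ₘ γ.condKernel) := by rwa [hdis]
  have hd : Integrable (fun p : ℝ × ℝ => p.2 - p.1) (γ.fst ⊗ₘ γ.condKernel) := by
    rw [hdis]
    exact hy.sub hx
  have hmean : ∀ᵐ x ∂γ.fst, ∫ y, (y - x) ∂γ.condKernel x = 0 := by
    refine ae_eq_zero_of_integral_contDiff_smul_eq_zero hd.integral_compProd.locallyIntegrable ?_
    intro g hg hgs
    obtain ⟨K, hK⟩ := hgs.exists_bound_of_continuous hg.continuous
    let θ : ℝ →ᵇ ℝ := .ofNormedAddCommGroup g hg.continuous K hK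
    have hθ : ∫ p, θ p.1 * (p.2 - p.1) ∂(γ.fst ⊗ₘ γ.condKernel) = 0 := by rw [hdis, h θ]
    rw [Measure.integral_compProd (integrable_comp_fst_mul_sub hd θ)] at hθ
    simp only [integral_const_mul] at hθ
    exact hθ
  refine ⟨inferInstance, .inr ⟨γ.condKernel, inferInstance, hdis, ?_⟩⟩
  filter_upwards [((Measure.integrable_compProd_iff hy'.1).1 hy').1, hmean] with x hint hx0
  refine ⟨hint, ?_⟩
  rw [integral_sub hint (integrable_const x)] at hx0
  simpa [sub_eq_zero] using hx0

lemma IsSubMart.mem_MT (hγ : IsSubMart γ) : γ ∈ MT (γ.map Prod.fst) (γ.map Prod.snd) := by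
  obtain ⟨hfin, rfl | ⟨κ, hκ, hdis, hmart⟩⟩ := hγ
  · exact ⟨Kernel.id, ⟨inferInstance, by simp, by simp⟩, by simp⟩
  · exact ⟨κ, ⟨hκ, by rw [hdis], hmart⟩, hdis.symm⟩

lemma IsSubMart.sum {ι : Type*} {s : Finset ι} {γ : ι → Measure (ℝ × ℝ)}
    (hγ : ∀ i ∈ s, IsSubMart (γ i)) (hx : ∀ i ∈ s, Integrable Prod.fst (γ i))
    (hy : ∀ i ∈ s, Integrable Prod.snd (γ i)) : IsSubMart (∑ i ∈ s, γ i) := by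
  have hd : ∀ i ∈ s, Integrable (fun p : ℝ × ℝ => p.2 - p.1) (γ i) := fun i hi =>
    (hy i hi).sub (hx i hi)
  have : IsFiniteMeasure (∑ i ∈ s, γ i) :=
    ⟨by simpa using ENNReal.sum_lt_top.2 fun i hi => (hγ i hi).1.measure_univ_lt_top⟩
  refine isSubMart_of_forall_integral_mul_sub_eq_zero (integrable_finsetSum_measure.2 hx)
    (integrable_finsetSum_measure.2 hy) fun θ => ?_
  rw [integral_finsetSum_measure fun i hi => integrable_comp_fst_mul_sub (hd i hi) θ]
  exact Finset.sum_eq_zero fun i hi => (hγ i hi).integral_mul_sub_eq_zero (hd i hi) θ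

end Martingale

/-! ### Superhedging -/

section Superhedging

variable {μ ν : Measure ℝ} {L : ℕ} {c c' : Fin L → ℝ × ℝ → ℝ} {φ ψ φ' ψ' : ℝ → ℝ}
  {θ θ' : Fin L → ℝ → ℝ}

/-- The costs `∫ φ dμ + ∫ ψ dν` of the tuples `(φ, ψ, θ) ∈ Ψ̄_c`, which superhedge `c`. Their
infimum is `DualValue μ ν c`. -/
def superhedgingCosts (μ ν : Measure ℝ) {L : ℕ} (c : Fin L → ℝ × ℝ → ℝ) : Set ℝ :=
  {r | ∃ φ ψ θ, DualFeasible μ ν c φ ψ θ ∧ r = ∫ x, φ x ∂μ + ∫ y, ψ y ∂ν}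

lemma DualFeasible.add (h : DualFeasible μ ν c φ ψ θ) (h' : DualFeasible μ ν c' φ' ψ' θ') :
    DualFeasible μ ν (c + c') (φ + φ') (ψ + ψ') (θ + θ') := by
  obtain ⟨hφ, hφi, hψ, hψi, hθ, hle⟩ := h
  obtain ⟨hφ', hφi', hψ', hψi', hθ', hle'⟩ := h'
  refine ⟨hφ.add hφ', hφi.add hφi', hψ.add hψ', hψi.add hψi',
    fun l => ⟨(hθ l).1.add (hθ' l).1, ?_⟩, fun l x y => ?_⟩
  · obtain ⟨M, hM⟩ := (hθ l).2
    obtain ⟨M', hM'⟩ := (hθ' l).2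
    exact ⟨M + M', fun x => (abs_add_le _ _).trans (add_le_add (hM x) (hM' x))⟩
  · simp only [Pi.add_apply]
    linarith [hle l x y, hle' l x y]

lemma DualFeasible.smul (h : DualFeasible μ ν c φ ψ θ) {t : ℝ} (ht : 0 ≤ t) :
    DualFeasible μ ν (t • c) (t • φ) (t • ψ) (t • θ) := by
  obtain ⟨hφ, hφi, hψ, hψi, hθ, hle⟩ := h
  refine ⟨hφ.const_smul t, hφi.smul t, hψ.const_smul t, hψi.smul t,
    fun l => ⟨(hθ l).1.const_smul t, ?_⟩, fun l x y => ?_⟩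
  · obtain ⟨M, hM⟩ := (hθ l).2
    refine ⟨t * M, fun x => ?_⟩
    simpa only [Pi.smul_apply, smul_eq_mul, abs_mul, abs_of_nonneg ht]
      using mul_le_mul_of_nonneg_left (hM x) ht
  · simp only [Pi.smul_apply, smul_eq_mul]
    linarith [mul_le_mul_of_nonneg_left (hle l x y) ht]

lemma dualFeasible_of_le_add (hφ : Continuous φ) (hφi : Integrable φ μ) (hψ : Continuous ψ)
    (hψi : Integrable ψ ν) (h : ∀ l x y, c l (x, y) ≤ φ x + ψ y) :
    DualFeasible μ ν c φ ψ fun _ _ => 0 :=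
  ⟨hφ, hφi, hψ, hψi, fun _ => ⟨continuous_const, 0, by simp⟩, fun l x y => by simpa using h l x y⟩

lemma superhedgingCosts_add_subset :
    superhedgingCosts μ ν c + superhedgingCosts μ ν c' ⊆ superhedgingCosts μ ν (c + c') := by
  rintro _ ⟨_, ⟨φ, ψ, θ, h, rfl⟩, _, ⟨φ', ψ', θ', h', rfl⟩, rfl⟩
  refine ⟨_, _, _, h.add h', ?_⟩
  simp only [Pi.add_apply]
  rw [integral_add h.2.1 h'.2.1, integral_add h.2.2.2.1 h'.2.2.2.1, add_add_add_comm]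

lemma smul_superhedgingCosts_subset {t : ℝ} (ht : 0 ≤ t) :
    t • superhedgingCosts μ ν c ⊆ superhedgingCosts μ ν (t • c) := by
  rintro _ ⟨_, ⟨φ, ψ, θ, h, rfl⟩, rfl⟩
  refine ⟨_, _, _, h.smul ht, ?_⟩
  simp only [Pi.smul_apply, integral_smul, smul_add]

lemma superhedgingCosts_smul {t : ℝ} (ht : 0 < t) :
    superhedgingCosts μ ν (t • c) = t • superhedgingCosts μ ν c := by
  refine (smul_superhedgingCosts_subset ht.le).antisymm' fun r hr => ?_
  rw [mem_smul_set_iff_inv_smul_mem₀ ht.ne']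
  have h := smul_superhedgingCosts_subset (inv_nonneg.2 ht.le) (smul_mem_smul_set (a := t⁻¹) hr)
  rwa [inv_smul_smul₀ ht.ne'] at h

lemma dualValue_smul {t : ℝ} (ht : 0 < t) : DualValue μ ν (t • c) = t * DualValue μ ν c :=
  (congrArg sInf (superhedgingCosts_smul ht)).trans (Real.sInf_smul_of_nonneg ht.le _)

lemma dualValue_add_le (hc : (superhedgingCosts μ ν c).Nonempty)
    (hc' : (superhedgingCosts μ ν c').Nonempty) (hbdd : BddBelow (superhedgingCosts μ ν (c + c'))) :
    DualValue μ ν (c + c') ≤ DualValue μ ν c + DualValue μ ν c' := by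
  refine sub_le_iff_le_add.1 (le_csInf hc fun r hr => ?_)
  refine sub_le_comm.1 (le_csInf hc' fun r' hr' => ?_)
  rw [sub_le_iff_le_add']
  exact csInf_le hbdd (superhedgingCosts_add_subset (add_mem_add hr hr'))

lemma superhedgingCosts_nonempty (hφ : Continuous φ) (hφi : Integrable φ μ) (hψ : Continuous ψ)
    (hψi : Integrable ψ ν) (h : ∀ l x y, c l (x, y) ≤ φ x + ψ y) :
    (superhedgingCosts μ ν c).Nonempty :=
  ⟨_, _, _, _, dualFeasible_of_le_add hφ hφi hψ hψi h, rfl⟩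

lemma DualFeasible.integral_add_integral_le [IsFiniteMeasure ν]
    (h : DualFeasible μ ν c φ ψ θ) (hco : ConvexOrder μ ν) (hν : Integrable id ν)
    (hφ' : Integrable φ' μ) (hψ' : Integrable ψ' ν) (l : Fin L)
    (hle : ∀ x y, φ' x + ψ' y ≤ c l (x, y)) :
    ∫ x, φ' x ∂μ + ∫ y, ψ' y ∂ν ≤ ∫ x, φ x ∂μ + ∫ y, ψ y ∂ν := by
  obtain ⟨-, hφi, -, hψi, -, hc⟩ := h
  have hdiff : ∫ x, (φ' x - φ x) ∂μ ≤ ∫ y, (ψ y - ψ' y) ∂ν :=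
    hco.integral_le_of_forall_add_mul_le hν (hφ'.sub hφi) (hψi.sub hψ') (θ := fun x => -θ l x)
      fun x y => by linarith [hle x y, hc l x y]
  rw [integral_sub hφ' hφi, integral_sub hψi hψ'] at hdiff
  linarith

lemma bddBelow_superhedgingCosts [IsFiniteMeasure ν] (hco : ConvexOrder μ ν)
    (hν : Integrable id ν) (hφ : Integrable φ μ) (hψ : Integrable ψ ν) (l : Fin L)
    (hle : ∀ x y, φ x + ψ y ≤ c l (x, y)) : BddBelow (superhedgingCosts μ ν c) :=
  ⟨_, by rintro _ ⟨_, _, _, h, rfl⟩; exact h.integral_add_integral_le hco hν hφ hψ l hle⟩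

theorem exists_linearMap_eq_dualValue {E : Type*} [AddCommGroup E] [Module ℝ E]
    (T : E →ₗ[ℝ] Fin L → ℝ × ℝ → ℝ) (hne : ∀ f, (superhedgingCosts μ ν (T f)).Nonempty)
    (hbdd : ∀ f, BddBelow (superhedgingCosts μ ν (T f))) (f₀ : E) :
    ∃ Λ : E →ₗ[ℝ] ℝ, (∀ f, ∀ r ∈ superhedgingCosts μ ν (T f), Λ f ≤ r) ∧
      Λ f₀ = DualValue μ ν (T f₀) := by
  have hsmul : ∀ t : ℝ, 0 < t → ∀ f, DualValue μ ν (T (t • f)) = t * DualValue μ ν (T f) :=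
    fun t ht f => by rw [map_smul, dualValue_smul ht]
  have hadd : ∀ f g, DualValue μ ν (T (f + g)) ≤ DualValue μ ν (T f) + DualValue μ ν (T g) :=
    fun f g => by
      rw [map_add]
      exact dualValue_add_le (hne f) (hne g) (map_add T f g ▸ hbdd (f + g))
  obtain ⟨Λ, hΛf₀, hΛ⟩ := exists_linearMap_eq_of_sublinear (N := fun f => DualValue μ ν (T f))
    hsmul hadd f₀
  exact ⟨Λ, fun f r hr => (hΛ f).trans (csInf_le (hbdd f) hr), hΛf₀⟩

end Superhedging

/-! ### Pricing functionals -/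

/-- A continuous integrable weight on the line of at least linear growth. The vector costs bounded
by `V x + W y`, for two such weights, form the space on which superhedging is dualised. -/
structure IsMomentWeight (μ : Measure ℝ) (V : C(ℝ, ℝ)) : Prop where
  integrable : Integrable V μ
  one_add_abs_le : ∀ x, 1 + |x| ≤ V x

lemma exists_isMomentWeight_ge {μ : Measure ℝ} [IsFiniteMeasure μ] (hμ : Integrable id μ)
    {v : ℝ → ℝ} (hv : Continuous v) (hvi : Integrable v μ) :
    ∃ V : C(ℝ, ℝ), IsMomentWeight μ V ∧ ∀ x, v x ≤ V x := by
  refine ⟨⟨fun x => |v x| + (1 + |x|), by fun_prop⟩,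
    ⟨hvi.abs.add ((integrable_const 1).add hμ.abs), fun x => ?_⟩, fun x => ?_⟩
  · exact le_add_of_nonneg_left (abs_nonneg _)
  · exact (le_abs_self _).trans (le_add_of_nonneg_right (by positivity))

lemma tendsto_integral_max_sub_zero {α : Type*} [MeasurableSpace α] {m : Measure α} {f : α → ℝ}
    (hf : Integrable f m) : Tendsto (fun a : ℝ => ∫ x, max (f x - a) 0 ∂m) atTop (𝓝 0) := by
  suffices h : Tendsto (fun a : ℝ => ∫ x, max (f x - a) 0 ∂m) atTop (𝓝 (∫ _, 0 ∂m)) by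
    rwa [integral_zero] at h
  refine tendsto_integral_filter_of_dominated_convergence (fun x => |f x|) ?_ ?_ hf.abs ?_
  · exact .of_forall fun a => (hf.1.sub aestronglyMeasurable_const).sup aestronglyMeasurable_const
  · filter_upwards [eventually_ge_atTop 0] with a ha
    refine .of_forall fun x => ?_
    rw [Real.norm_of_nonneg (le_max_right _ _)]
    exact max_le (by linarith [le_abs_self (f x)]) (abs_nonneg _)
  · refine .of_forall fun x => tendsto_const_nhds.congr' ?_
    filter_upwards [eventually_ge_atTop (f x)] with a ha
    exact (max_eq_right (sub_nonpos.2 ha)).symm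

/-- The weight `(x, y) ↦ V x + W y` on the plane. -/
def planeWeight (V W : C(ℝ, ℝ)) : C(ℝ × ℝ, ℝ) := V.comp .fst + W.comp .snd

lemma planeWeight_apply (V W : C(ℝ, ℝ)) (x y : ℝ) : planeWeight V W (x, y) = V x + W y := rfl

/-- The payoff `(x, y) ↦ φ x + ψ y + θ x (y - x)` of holding the options `φ` and `ψ` and trading
`θ` in the underlying. -/
def hedgePayoff (φ ψ θ : ℝ →ᵇ ℝ) : C(ℝ × ℝ, ℝ) where
  toFun p := φ p.1 + ψ p.2 + θ p.1 * (p.2 - p.1)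

lemma hedgePayoff_apply (φ ψ θ : ℝ →ᵇ ℝ) (p : ℝ × ℝ) :
    hedgePayoff φ ψ θ p = φ p.1 + ψ p.2 + θ p.1 * (p.2 - p.1) := rfl

lemma hedgePayoff_neg (φ ψ θ : ℝ →ᵇ ℝ) : hedgePayoff (-φ) (-ψ) (-θ) = -hedgePayoff φ ψ θ := by
  ext p
  simp only [hedgePayoff_apply, BoundedContinuousFunction.coe_neg, Pi.neg_apply,
    ContinuousMap.neg_apply]
  ring

lemma hedgePayoff_mem_growthSpace {G : C(ℝ × ℝ, ℝ)} (hG : ∀ p, 1 + |p.1| + |p.2| ≤ G p)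
    (φ ψ θ : ℝ →ᵇ ℝ) : hedgePayoff φ ψ θ ∈ growthSpace G := by
  refine mem_growthSpace_of_abs_le (K := ‖φ‖ + ‖ψ‖ + ‖θ‖) fun p => ?_
  have hθ : |θ p.1 * (p.2 - p.1)| ≤ ‖θ‖ * (|p.1| + |p.2|) := by
    rw [abs_mul]
    exact mul_le_mul (θ.norm_coe_le_norm _) ((abs_sub _ _).trans (add_comm _ _).le)
      (abs_nonneg _) (norm_nonneg _)
  calc |hedgePayoff φ ψ θ p|
      ≤ |φ p.1| + |ψ p.2| + |θ p.1 * (p.2 - p.1)| := abs_add_three _ _ _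
    _ ≤ ‖φ‖ + ‖ψ‖ + ‖θ‖ * (|p.1| + |p.2|) :=
        add_le_add (add_le_add (φ.norm_coe_le_norm _) (ψ.norm_coe_le_norm _)) hθ
    _ ≤ (‖φ‖ + ‖ψ‖ + ‖θ‖) * (1 + |p.1| + |p.2|) := by
        nlinarith [norm_nonneg φ, norm_nonneg ψ, norm_nonneg θ, abs_nonneg p.1, abs_nonneg p.2,
          mul_nonneg (add_nonneg (norm_nonneg φ) (norm_nonneg ψ))
            (add_nonneg (abs_nonneg p.1) (abs_nonneg p.2))]
    _ ≤ (‖φ‖ + ‖ψ‖ + ‖θ‖) * G p := mul_le_mul_of_nonneg_left (hG p) (by positivity)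

lemma dualFeasible_of_le_hedgePayoff {μ ν : Measure ℝ} [IsFiniteMeasure μ] [IsFiniteMeasure ν]
    {L : ℕ} {c : Fin L → ℝ × ℝ → ℝ} {φ ψ : ℝ →ᵇ ℝ} {θ : Fin L → ℝ →ᵇ ℝ}
    (h : ∀ l p, c l p ≤ hedgePayoff φ ψ (θ l) p) : DualFeasible μ ν c φ ψ fun l => θ l :=
  ⟨φ.continuous, φ.integrable μ, ψ.continuous, ψ.integrable ν,
    fun l => ⟨(θ l).continuous, ‖θ l‖, (θ l).norm_coe_le_norm⟩, fun l x y => h l (x, y)⟩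

/-- A linear functional on vector costs which prices none of them above a superhedging cost. -/
def IsPricing (μ ν : Measure ℝ) {L : ℕ} {G : C(ℝ × ℝ, ℝ)}
    (Λ : (Fin L → growthSpace G) →ₗ[ℝ] ℝ) : Prop :=
  ∀ f φ ψ θ, DualFeasible μ ν (fun l => (f l).1) φ ψ θ → Λ f ≤ ∫ x, φ x ∂μ + ∫ y, ψ y ∂ν

section Pricing

variable {μ ν : Measure ℝ} {L : ℕ} {G : C(ℝ × ℝ, ℝ)} {Λ : (Fin L → growthSpace G) →ₗ[ℝ] ℝ}

namespace IsPricing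

protected lemma map_nonneg (hΛ : IsPricing μ ν Λ) {f : Fin L → growthSpace G} (hf : 0 ≤ f) :
    0 ≤ Λ f := by
  have hneg : Λ (-f) ≤ ∫ _, 0 ∂μ + ∫ _, 0 ∂ν :=
    hΛ _ _ _ _ <| dualFeasible_of_le_add continuous_const (integrable_zero _ _ _)
      continuous_const (integrable_zero _ _ _) fun l x y => by
        have hlxy : 0 ≤ (f l).1 (x, y) := hf l (x, y)
        simpa using hlxy
  simpa using hneg

/-- The price of a cost charged in the coordinate `l` only. -/
def component (hΛ : IsPricing μ ν Λ) (l : Fin L) : growthSpace G →ₚ[ℝ] ℝ :=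
  .mk₀ (Λ ∘ₗ LinearMap.single ℝ (fun _ => growthSpace G) l) fun _ hf =>
    hΛ.map_nonneg (Pi.single_nonneg.2 hf)

lemma component_apply (hΛ : IsPricing μ ν Λ) (l : Fin L) (f : growthSpace G) :
    hΛ.component l f = Λ (Pi.single l f) := rfl

lemma sum_component (hΛ : IsPricing μ ν Λ) (f : Fin L → growthSpace G) :
    ∑ l, hΛ.component l (f l) = Λ f := by
  simp only [component_apply, ← map_sum, Finset.univ_sum_single]

lemma map_hedgePayoff_eq [IsFiniteMeasure μ] [IsFiniteMeasure ν] (hΛ : IsPricing μ ν Λ)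
    (hG : ∀ p, 1 + |p.1| + |p.2| ≤ G p) (φ ψ : ℝ →ᵇ ℝ) (θ : Fin L → ℝ →ᵇ ℝ) :
    Λ (fun l => ⟨hedgePayoff φ ψ (θ l), hedgePayoff_mem_growthSpace hG φ ψ (θ l)⟩) =
      ∫ x, φ x ∂μ + ∫ y, ψ y ∂ν := by
  let f : Fin L → growthSpace G := fun l => ⟨_, hedgePayoff_mem_growthSpace hG φ ψ (θ l)⟩
  have hle : Λ f ≤ ∫ x, φ x ∂μ + ∫ y, ψ y ∂ν :=
    hΛ _ _ _ _ (dualFeasible_of_le_hedgePayoff fun _ _ => le_rfl)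
  have hge : Λ (-f) ≤ ∫ x, (-φ) x ∂μ + ∫ y, (-ψ) y ∂ν :=
    hΛ _ _ _ _ (dualFeasible_of_le_hedgePayoff (θ := -θ) fun l p =>
      (DFunLike.congr_fun (hedgePayoff_neg φ ψ (θ l)) p).ge)
  simp only [map_neg, BoundedContinuousFunction.coe_neg, Pi.neg_apply, integral_neg] at hge
  exact hle.antisymm (by linarith)

lemma component_excess_le {V W : C(ℝ, ℝ)} [IsFiniteMeasure μ] [IsFiniteMeasure ν]
    {Λ : (Fin L → growthSpace (planeWeight V W)) →ₗ[ℝ] ℝ} (hΛ : IsPricing μ ν Λ)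
    (hV : Integrable V μ) (hW : Integrable W ν) (l : Fin L) (n : ℕ) :
    hΛ.component l (excess (planeWeight V W) n) ≤
      ∫ x, max (V x - n / 2) 0 ∂μ + ∫ y, max (W y - n / 2) 0 ∂ν := by
  have hle : ∀ x y, (excess (planeWeight V W) n).1 (x, y) ≤
      max (V x - n / 2) 0 + max (W y - n / 2) 0 := fun x y => by
    rw [excess_apply, planeWeight_apply]
    refine max_le ?_ (by positivity)
    linarith [le_max_left (V x - n / 2) 0, le_max_left (W y - n / 2) 0]
  refine hΛ _ _ _ _ <| dualFeasible_of_le_add (by fun_prop)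
    ((hV.sub (integrable_const _)).sup (integrable_const _)) (by fun_prop)
    ((hW.sub (integrable_const _)).sup (integrable_const _)) fun k x y => ?_
  rcases eq_or_ne k l with rfl | hk
  · simpa using hle x y
  · simpa [hk] using (by positivity : 0 ≤ max (V x - n / 2) 0 + max (W y - n / 2) 0)

lemma tendsto_component_excess {V W : C(ℝ, ℝ)} [IsFiniteMeasure μ] [IsFiniteMeasure ν]
    {Λ : (Fin L → growthSpace (planeWeight V W)) →ₗ[ℝ] ℝ} (hΛ : IsPricing μ ν Λ)
    (hV : Integrable V μ) (hW : Integrable W ν) (l : Fin L) :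
    Tendsto (fun n => hΛ.component l (excess (planeWeight V W) n)) atTop (𝓝 0) := by
  have hhalf : Tendsto (fun n : ℕ => (n : ℝ) / 2) atTop atTop :=
    tendsto_natCast_atTop_atTop.atTop_div_const two_pos
  have hlim := ((tendsto_integral_max_sub_zero hV).comp hhalf).add
    ((tendsto_integral_max_sub_zero hW).comp hhalf)
  rw [add_zero] at hlim
  exact squeeze_zero (fun n => map_nonneg (hΛ.component l) (excess_nonneg n))
    (hΛ.component_excess_le hV hW l) hlim

end IsPricing

theorem exists_isPricing_map_eq_dualValue {V W : C(ℝ, ℝ)} [IsFiniteMeasure ν]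
    (hco : ConvexOrder μ ν) (hν : Integrable id ν) (hV : Integrable V μ) (hW : Integrable W ν)
    (hG : 0 ≤ planeWeight V W) [NeZero L] (c : Fin L → growthSpace (planeWeight V W)) :
    ∃ Λ : (Fin L → growthSpace (planeWeight V W)) →ₗ[ℝ] ℝ,
      IsPricing μ ν Λ ∧ Λ c = DualValue μ ν fun l => (c l).1 := by
  let T := ((ContinuousMap.coeFnLinearMap (α := ℝ × ℝ) ℝ).comp
    (growthSpace (planeWeight V W)).subtype).compLeft (Fin L)
  have hne : ∀ f, (superhedgingCosts μ ν (T f)).Nonempty := fun f => by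
    obtain ⟨K, hK⟩ := exists_forall_abs_le_mul hG f
    exact superhedgingCosts_nonempty (by fun_prop) (hV.const_mul K) (by fun_prop)
      (hW.const_mul K) fun l x y => (le_of_abs_le (hK l (x, y))).trans_eq (mul_add K (V x) (W y))
  have hbdd : ∀ f, BddBelow (superhedgingCosts μ ν (T f)) := fun f => by
    obtain ⟨K, hK⟩ := exists_forall_abs_le_mul hG f
    refine bddBelow_superhedgingCosts hco hν (hV.const_mul (-K)) (hW.const_mul (-K)) 0
      fun x y => ?_
    refine le_trans (le_of_eq ?_) (neg_le_of_abs_le (hK 0 (x, y)))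
    rw [planeWeight_apply]
    ring
  obtain ⟨Λ, hΛ, hΛc⟩ := exists_linearMap_eq_dualValue T hne hbdd c
  exact ⟨Λ, fun f φ ψ θ h => hΛ f _ ⟨φ, ψ, θ, h, rfl⟩, hΛc⟩

section IsMomentWeight

variable {V W : C(ℝ, ℝ)}

lemma IsMomentWeight.one_add_abs_add_abs_le (hV : IsMomentWeight μ V) (hW : IsMomentWeight ν W)
    (p : ℝ × ℝ) : 1 + |p.1| + |p.2| ≤ planeWeight V W p := by
  have hsum := add_le_add (hV.one_add_abs_le p.1) (hW.one_add_abs_le p.2)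
  rw [← planeWeight_apply] at hsum
  linarith

lemma tendsto_cocompact_of_one_add_abs_add_abs_le (hG : ∀ p, 1 + |p.1| + |p.2| ≤ G p) :
    Tendsto G (cocompact (ℝ × ℝ)) atTop := by
  refine tendsto_atTop_mono (fun p => ?_) (tendsto_norm_cocompact_atTop (E := ℝ × ℝ))
  refine (max_le ?_ ?_).trans (hG p) <;>
    rw [Real.norm_eq_abs] <;> linarith [abs_nonneg p.1, abs_nonneg p.2]

theorem IsPricing.exists_measure_integral_eq_component [IsFiniteMeasure μ] [IsFiniteMeasure ν]
    {Λ : (Fin L → growthSpace (planeWeight V W)) →ₗ[ℝ] ℝ} (hΛ : IsPricing μ ν Λ)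
    (hV : IsMomentWeight μ V) (hW : IsMomentWeight ν W) :
    ∃ γ : Fin L → Measure (ℝ × ℝ), ∀ l (f : growthSpace (planeWeight V W)),
      Integrable f.1 (γ l) ∧ ∫ p, f.1 p ∂γ l = hΛ.component l f := by
  have hG := hV.one_add_abs_add_abs_le hW
  have hpos : ∀ p, 0 < planeWeight V W p := fun p => lt_of_lt_of_le (by positivity) (hG p)
  choose γ hγ using fun l => exists_measure_integral_eq_of_tendsto_excess hpos
    (tendsto_cocompact_of_one_add_abs_add_abs_le hG) (hΛ.component l)
    (hΛ.tendsto_component_excess hV.integrable hW.integrable l)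
  exact ⟨γ, hγ⟩

end IsMomentWeight

end Pricing

lemma map_eq_of_forall_integral_comp_eq {Ω X : Type*} [MeasurableSpace Ω] [TopologicalSpace X]
    [MeasurableSpace X] [BorelSpace X] [HasOuterApproxClosed X] {m : Measure Ω} {ξ : Measure X}
    [IsFiniteMeasure m] [IsFiniteMeasure ξ] {T : Ω → X} (hT : Measurable T)
    (h : ∀ g : X →ᵇ ℝ, ∫ ω, g (T ω) ∂m = ∫ x, g x ∂ξ) : m.map T = ξ :=
  ext_of_forall_integral_eq_of_IsFiniteMeasure fun g => by
    rw [integral_map hT.aemeasurable g.continuous.aestronglyMeasurable, h g]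

theorem mlfeasible_of_forall_sum_integral_hedgePayoff_eq {μ ν : Measure ℝ} [IsFiniteMeasure μ]
    [IsFiniteMeasure ν] {L : ℕ} {γ : Fin L → Measure (ℝ × ℝ)} {G : C(ℝ × ℝ, ℝ)}
    (hG : ∀ p, 1 + |p.1| + |p.2| ≤ G p)
    (hγ : ∀ l, ∀ f : growthSpace G, Integrable f.1 (γ l))
    (h : ∀ φ ψ (θ : Fin L → ℝ →ᵇ ℝ),
      ∑ l, ∫ p, hedgePayoff φ ψ (θ l) p ∂γ l = ∫ x, φ x ∂μ + ∫ y, ψ y ∂ν) :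
    MLfeasible μ ν γ := by
  have hint : ∀ l (f : C(ℝ × ℝ, ℝ)), (∀ p, |f p| ≤ G p) → Integrable f (γ l) := fun l f hf =>
    hγ l ⟨f, mem_growthSpace_of_abs_le (K := 1) fun p => (hf p).trans_eq (one_mul _).symm⟩
  have hfin : ∀ l, IsFiniteMeasure (γ l) := fun l =>
    (integrable_const_iff_isFiniteMeasure one_ne_zero).1 <| hint l 1 fun p => by
      simpa using (by linarith [hG p, abs_nonneg p.1, abs_nonneg p.2] : 1 ≤ G p)
  have hx : ∀ l, Integrable Prod.fst (γ l) := fun l =>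
    hint l .fst fun p => (by linarith [hG p, abs_nonneg p.2] : |p.1| ≤ G p)
  have hy : ∀ l, Integrable Prod.snd (γ l) := fun l =>
    hint l .snd fun p => (by linarith [hG p, abs_nonneg p.1] : |p.2| ≤ G p)
  have hsub : ∀ l, IsSubMart (γ l) := fun l =>
    isSubMart_of_forall_integral_mul_sub_eq_zero (hx l) (hy l) fun θ => by
      have hθ := h 0 0 (Pi.single l θ)
      rw [Fintype.sum_eq_single l fun k hk => by simp [hedgePayoff_apply, hk]] at hθ
      simpa [hedgePayoff_apply] using hθ
  have hsum : IsSubMart (∑ l, γ l) :=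
    .sum (fun l _ => hsub l) (fun l _ => hx l) fun l _ => hy l
  have := hsum.1
  have hbdd : ∀ l, ∀ T : ℝ × ℝ → ℝ, Measurable T → ∀ g : ℝ →ᵇ ℝ,
      Integrable (fun p => g (T p)) (γ l) := fun l T hT g =>
    (g.integrable ((γ l).map T)).comp_measurable hT
  have hfst : (∑ l, γ l).map Prod.fst = μ :=
    map_eq_of_forall_integral_comp_eq measurable_fst fun g => by
      rw [integral_finsetSum_measure fun l _ => hbdd l _ measurable_fst g]
      simpa [hedgePayoff_apply] using h g 0 0
  have hsnd : (∑ l, γ l).map Prod.snd = ν :=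
    map_eq_of_forall_integral_comp_eq measurable_snd fun g => by
      rw [integral_finsetSum_measure fun l _ => hbdd l _ measurable_snd g]
      simpa [hedgePayoff_apply] using h 0 g 0
  exact ⟨hsub, hfst ▸ hsnd ▸ hsum.mem_MT⟩

/-! ### Duality -/

section Duality

variable {μ ν : Measure ℝ} {L : ℕ} {c : Fin L → ℝ × ℝ → ℝ} {γ : Fin L → Measure (ℝ × ℝ)}

theorem exists_mlfeasible_sum_integral_eq_dualValue [IsFiniteMeasure μ] [IsFiniteMeasure ν]
    [NeZero L] (hμ : Integrable id μ) (hν : Integrable id ν) (hco : ConvexOrder μ ν)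
    (hc : ∀ l, Continuous (c l)) {v w : ℝ → ℝ} (hv : Continuous v) (hw : Continuous w)
    (hvi : Integrable v μ) (hwi : Integrable w ν) (hcvw : ∀ l x y, |c l (x, y)| ≤ v x + w y) :
    ∃ γ, MLfeasible μ ν γ ∧ ∑ l, ∫ p, c l p ∂γ l = DualValue μ ν c := by
  obtain ⟨V, hV, hvV⟩ := exists_isMomentWeight_ge hμ hv hvi
  obtain ⟨W, hW, hwW⟩ := exists_isMomentWeight_ge hν hw hwi
  have hG := hV.one_add_abs_add_abs_le hW
  let f : Fin L → growthSpace (planeWeight V W) := fun l =>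
    ⟨⟨c l, hc l⟩, mem_growthSpace_of_abs_le (K := 1) fun ⟨x, y⟩ => by
      rw [one_mul, planeWeight_apply]
      exact (hcvw l x y).trans (add_le_add (hvV x) (hwW y))⟩
  obtain ⟨Λ, hΛ, hΛf⟩ := exists_isPricing_map_eq_dualValue hco hν hV.integrable hW.integrable
    (fun p => (by positivity : 0 ≤ 1 + |p.1| + |p.2|).trans (hG p)) f
  obtain ⟨γ, hγ⟩ := hΛ.exists_measure_integral_eq_component hV hW
  have hsum : ∀ g : Fin L → growthSpace (planeWeight V W), ∑ l, ∫ p, (g l).1 p ∂γ l = Λ g :=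
    fun g => (Finset.sum_congr rfl fun l _ => (hγ l (g l)).2).trans (hΛ.sum_component g)
  refine ⟨γ, ?_, (hsum f).trans hΛf⟩
  exact mlfeasible_of_forall_sum_integral_hedgePayoff_eq hG (fun l g => (hγ l g).1)
    fun φ ψ θ => (hsum _).trans (hΛ.map_hedgePayoff_eq hG φ ψ θ)

namespace MLfeasible

lemma map_fst_sum [SFinite μ] (hγ : MLfeasible μ ν γ) : (∑ l, γ l).map Prod.fst = μ := by
  obtain ⟨-, κ, ⟨hκ, -, -⟩, hsum⟩ := hγ
  rw [hsum]
  exact Measure.fst_compProd μ κ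

lemma map_snd_sum (hγ : MLfeasible μ ν γ) : (∑ l, γ l).map Prod.snd = ν := by
  obtain ⟨-, κ, ⟨-, hsnd, -⟩, hsum⟩ := hγ
  rw [hsum, hsnd]

lemma integrable_comp_fst [SFinite μ] (hγ : MLfeasible μ ν γ) {f : ℝ → ℝ} (hf : Integrable f μ)
    (l : Fin L) : Integrable (fun p => f p.1) (γ l) := by
  rw [← hγ.map_fst_sum] at hf
  exact integrable_finsetSum_measure.1 (hf.comp_measurable measurable_fst) l (Finset.mem_univ l)

lemma integrable_comp_snd (hγ : MLfeasible μ ν γ) {f : ℝ → ℝ} (hf : Integrable f ν) (l : Fin L) :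
    Integrable (fun p => f p.2) (γ l) := by
  rw [← hγ.map_snd_sum] at hf
  exact integrable_finsetSum_measure.1 (hf.comp_measurable measurable_snd) l (Finset.mem_univ l)

lemma sum_integral_add_eq [SFinite μ] (hγ : MLfeasible μ ν γ) {φ ψ : ℝ → ℝ}
    (hφ : Integrable φ μ) (hψ : Integrable ψ ν) :
    ∑ l, ∫ p, (φ p.1 + ψ p.2) ∂γ l = ∫ x, φ x ∂μ + ∫ y, ψ y ∂ν := by
  have hφγ := fun l => hγ.integrable_comp_fst hφ l
  have hψγ := fun l => hγ.integrable_comp_snd hψ l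
  have hfst : ∑ l, ∫ p, φ p.1 ∂γ l = ∫ x, φ x ∂μ := by
    rw [← integral_finsetSum_measure fun l _ => hφγ l]
    conv_rhs => rw [← hγ.map_fst_sum]
    rw [integral_map measurable_fst.aemeasurable (hγ.map_fst_sum.symm ▸ hφ.1)]
  have hsnd : ∑ l, ∫ p, ψ p.2 ∂γ l = ∫ y, ψ y ∂ν := by
    rw [← integral_finsetSum_measure fun l _ => hψγ l]
    conv_rhs => rw [← hγ.map_snd_sum]
    rw [integral_map measurable_snd.aemeasurable (hγ.map_snd_sum.symm ▸ hψ.1)]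
  simp only [fun l => integral_add (hφγ l) (hψγ l), Finset.sum_add_distrib, hfst, hsnd]

theorem sum_integral_le [SFinite μ] (hγ : MLfeasible μ ν γ) (hμ : Integrable id μ)
    (hν : Integrable id ν) (hc : ∀ l, Integrable (c l) (γ l)) {φ ψ : ℝ → ℝ} {θ : Fin L → ℝ → ℝ}
    (h : DualFeasible μ ν c φ ψ θ) :
    ∑ l, ∫ p, c l p ∂γ l ≤ ∫ x, φ x ∂μ + ∫ y, ψ y ∂ν := by
  obtain ⟨-, hφ, -, hψ, hθ, hle⟩ := h
  rw [← hγ.sum_integral_add_eq hφ hψ]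
  refine Finset.sum_le_sum fun l _ => ?_
  obtain ⟨hθc, M, hM⟩ := hθ l
  let θ' : ℝ →ᵇ ℝ := .ofNormedAddCommGroup (θ l) hθc M hM
  have hd : Integrable (fun p : ℝ × ℝ => p.2 - p.1) (γ l) :=
    (hγ.integrable_comp_snd hν l).sub (hγ.integrable_comp_fst hμ l)
  have hstatic : Integrable (fun p : ℝ × ℝ => φ p.1 + ψ p.2) (γ l) :=
    (hγ.integrable_comp_fst hφ l).add (hγ.integrable_comp_snd hψ l)
  have htrade := integrable_comp_fst_mul_sub hd θ'
  calc ∫ p, c l p ∂γ l ≤ ∫ p, (φ p.1 + ψ p.2 + θ' p.1 * (p.2 - p.1)) ∂γ l :=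
        integral_mono (hc l) (hstatic.add htrade) fun p => hle l p.1 p.2
    _ = ∫ p, (φ p.1 + ψ p.2) ∂γ l := by
        rw [integral_add hstatic htrade, (hγ.1 l).integral_mul_sub_eq_zero hd, add_zero]

theorem sum_integral_le_dualValue [SFinite μ] (hγ : MLfeasible μ ν γ) (hμ : Integrable id μ)
    (hν : Integrable id ν) (hc : ∀ l, Continuous (c l)) {v w : ℝ → ℝ} (hv : Continuous v)
    (hw : Continuous w) (hvi : Integrable v μ) (hwi : Integrable w ν)
    (hcvw : ∀ l x y, |c l (x, y)| ≤ v x + w y) :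
    ∑ l, ∫ p, c l p ∂γ l ≤ DualValue μ ν c := by
  have hcγ : ∀ l, Integrable (c l) (γ l) := fun l =>
    ((hγ.integrable_comp_fst hvi l).add (hγ.integrable_comp_snd hwi l)).mono'
      (hc l).aestronglyMeasurable (.of_forall fun p => hcvw l p.1 p.2)
  refine le_csInf (superhedgingCosts_nonempty hv hvi hw hwi fun l x y =>
    le_of_abs_le (hcvw l x y)) ?_
  rintro _ ⟨φ, ψ, θ, h, rfl⟩
  exact hγ.sum_integral_le hμ hν hcγ h

end MLfeasible

lemma relaxedValue_fin_zero [IsProbabilityMeasure μ] (c : Fin 0 → ℝ × ℝ → ℝ) :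
    RelaxedValue μ ν c = 0 := by
  have hempty : ∀ γ : Fin 0 → Measure (ℝ × ℝ), ¬ MLfeasible μ ν γ := fun γ hγ =>
    IsProbabilityMeasure.ne_zero μ (by simpa using hγ.map_fst_sum.symm)
  simp [RelaxedValue, hempty]

lemma dualValue_fin_zero [IsProbabilityMeasure μ] (c : Fin 0 → ℝ × ℝ → ℝ) :
    DualValue μ ν c = 0 := by
  have huniv : superhedgingCosts μ ν c = univ := eq_univ_of_forall fun r =>
    ⟨fun _ => r, 0, _, dualFeasible_of_le_add continuous_const (integrable_const r)
      continuous_zero (integrable_zero _ _ _) fun l => l.elim0, by simp⟩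
  exact (congrArg sInf huniv).trans Real.sInf_univ

end Duality

/-- Duality: under [A'], the relaxed primal value equals the dual value, `P̄_c = D̄_c`. -/
theorem relaxed_duality
    (μ ν : Measure ℝ) {L : ℕ} (c : Fin L → ℝ × ℝ → ℝ)
    (hA : AssumpA' μ ν c) :
    RelaxedValue μ ν c = DualValue μ ν c := by
  obtain ⟨hμ, hν, hμi, hνi, hc, hco, v, w, hv, hw, hvi, hwi, hsum⟩ := hA
  rcases L.eq_zero_or_pos with rfl | hL
  -- Without costs nothing is feasible and everything superhedges: both `sSup ∅` and `sInf univ`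
  -- are `0` by convention.
  · rw [relaxedValue_fin_zero, dualValue_fin_zero]
  have : NeZero L := .of_pos hL
  have hcvw : ∀ l x y, |c l (x, y)| ≤ v x + w y := fun l x y =>
    (Finset.single_le_sum (f := fun k => |c k (x, y)|) (fun _ _ => abs_nonneg _)
      (Finset.mem_univ l)).trans (hsum x y)
  obtain ⟨γ, hγ, hval⟩ :=
    exists_mlfeasible_sum_integral_eq_dualValue hμi hνi hco hc hv hw hvi hwi hcvw
  refine IsGreatest.csSup_eq ⟨⟨γ, hγ, hval.symm⟩, ?_⟩
  rintro _ ⟨γ', hγ', rfl⟩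
  exact hγ'.sum_integral_le_dualValue hμi hνi hc hv hw hvi hwi hcvw

end
end
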